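/- arXiv:1603.08244 — 2 statements merged into one kernel-verified Lean document; each statement's English description precedes it below -/
import Mathlib

section
/- (Theorem 11: inner bound on the ID capacity region of the BC with one-sided feedback.) The ID capacity region 𝒞_{1-fb} of the BC W(y,z|x) with one-sided feedback from Terminal 𝒴 contains the set of all rate pairs (R_𝒴, R_𝒵) ∈ [0,∞)² for which some PMF P on 𝒳 satisfies R_𝒴 ≤ H(PW_𝒴)·𝟙{max_{P'} I(P', W_𝒴) > 0} and R_𝒵 ≤ I(P, W_𝒵). -/
open scoped Classical
open Finset

noncomputable section

/-- `P` is a probability mass function on the finite type `X`. -/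
def IsPMF {X : Type*} [Fintype X] (P : X → ℝ) : Prop :=
  (∀ x, 0 ≤ P x) ∧ ∑ x, P x = 1

/-- `W` is a (discrete memoryless) channel from `X` to `Y`. -/
def IsChannel {X Y : Type*} [Fintype Y] (W : X → Y → ℝ) : Prop :=
  (∀ x y, 0 ≤ W x y) ∧ ∀ x, ∑ y, W x y = 1

/-- The `n`-fold memoryless extension `W^n(𝐲|𝐱) = ∏ᵢ W(yᵢ|xᵢ)`. -/
def Wn {X Y : Type*} (W : X → Y → ℝ) (n : ℕ) (x : Fin n → X) (y : Fin n → Y) : ℝ :=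
  ∏ i, W (x i) (y i)

/-- Mutual information `I(P,W)` (natural logarithm), with the convention that
terms with `P x * W x y = 0` contribute `0`. -/
def mutInf {X Y : Type*} [Fintype X] [Fintype Y] (P : X → ℝ) (W : X → Y → ℝ) : ℝ :=
  ∑ x, ∑ y, if P x * W x y = 0 then 0
    else P x * W x y * Real.log (W x y / ∑ x', P x' * W x' y)

/-- The error requirements of an `(n, M, l1, l2)` ID code for the DMC `W`:
maximum probability of missed identification at most `l1`, maximum probability
of wrong identification at most `l2`. -/
def IDCodeErr {X Y M : Type*} [Fintype X] [Fintype Y]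
    (n : ℕ) (W : X → Y → ℝ) (Q : M → (Fin n → X) → ℝ)
    (D : M → Finset (Fin n → Y)) (l1 l2 : ℝ) : Prop :=
  (∀ m, ∑ x, Q m x * ∑ y ∈ (D m)ᶜ, Wn W n x y ≤ l1) ∧
  (∀ m m', m ≠ m' → ∑ x, Q m x * ∑ y ∈ D m', Wn W n x y ≤ l2)

/-- `(n, M, l1, l2)` ID code for the DMC `W`. -/
def IsIDCode {X Y M : Type*} [Fintype X] [Fintype Y]
    (n : ℕ) (W : X → Y → ℝ) (Q : M → (Fin n → X) → ℝ)
    (D : M → Finset (Fin n → Y)) (l1 l2 : ℝ) : Prop :=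
  (∀ m, IsPMF (Q m)) ∧ IDCodeErr n W Q D l1 l2

/-- `W` is a two-receiver broadcast channel from `X` to `Y × Z`. -/
def IsBC {X Y Z : Type*} [Fintype Y] [Fintype Z] (W : X → Y → Z → ℝ) : Prop :=
  (∀ x y z, 0 ≤ W x y z) ∧ ∀ x, ∑ y, ∑ z, W x y z = 1

/-- Marginal channel to terminal `Y`. -/
def margY {X Y Z : Type*} [Fintype Z] (W : X → Y → Z → ℝ) : X → Y → ℝ :=
  fun x y => ∑ z, W x y z

/-- Marginal channel to terminal `Z`. -/
def margZ {X Y Z : Type*} [Fintype Y] (W : X → Y → Z → ℝ) : X → Z → ℝ :=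
  fun x z => ∑ y, W x y z

/-- Entropy `H(p)` of a PMF (natural logarithm), with `0 log 0 = 0`. -/
def entH {Y : Type*} [Fintype Y] (p : Y → ℝ) : ℝ :=
  ∑ y, if p y = 0 then 0 else -(p y * Real.log (p y))

/-- Output distribution `PW` of the channel `W` under input PMF `P`. -/
def outDist {X Y : Type*} [Fintype X] (P : X → ℝ) (W : X → Y → ℝ) : Y → ℝ :=
  fun y => ∑ x, P x * W x y

/-- The joint law on `(𝐱, 𝐲, 𝐳)` induced by a feedback encoder
`Q^{(i)}(x | x^{i-1}, y^{i-1})` and the BC `W`. -/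
def fbLaw {X Y Z : Type*} (n : ℕ) (W : X → Y → Z → ℝ)
    (Q : (i : ℕ) → (Fin i → X) → (Fin i → Y) → X → ℝ)
    (x : Fin n → X) (y : Fin n → Y) (z : Fin n → Z) : ℝ :=
  ∏ i : Fin n,
    (Q i.1 (fun j : Fin i.1 => x ⟨j.1, lt_trans j.isLt i.isLt⟩)
           (fun j : Fin i.1 => y ⟨j.1, lt_trans j.isLt i.isLt⟩) (x i)
      * W (x i) (y i) (z i))

/-- `Q` is a feedback encoder for blocklength `n`: at each time `i < n` and for
all histories, it is a PMF on `X`. -/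
def IsFBEncoder {X Y : Type*} [Fintype X] (n : ℕ)
    (Q : (i : ℕ) → (Fin i → X) → (Fin i → Y) → X → ℝ) : Prop :=
  ∀ i < n, ∀ (xs : Fin i → X) (ys : Fin i → Y), IsPMF (Q i xs ys)

/-- Average-error ID code for the BC with one-sided feedback from Terminal Y. -/
def IsFBIDCode {X Y Z : Type*} [Fintype X] [Fintype Y] [Fintype Z]
    (n kY kZ : ℕ) (W : X → Y → Z → ℝ)
    (Q : Fin kY → Fin kZ → (i : ℕ) → (Fin i → X) → (Fin i → Y) → X → ℝ)
    (DY : Fin kY → Finset (Fin n → Y)) (DZ : Fin kZ → Finset (Fin n → Z))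
    (l1Y l2Y l1Z l2Z : ℝ) : Prop :=
  (∀ my mz, IsFBEncoder n (Q my mz)) ∧
  (∀ my, (kZ : ℝ)⁻¹ * ∑ mz, ∑ x : Fin n → X, ∑ y ∈ (DY my)ᶜ, ∑ z : Fin n → Z,
      fbLaw n W (Q my mz) x y z ≤ l1Y) ∧
  (∀ my my', my ≠ my' → (kZ : ℝ)⁻¹ * ∑ mz, ∑ x : Fin n → X, ∑ y ∈ DY my',
      ∑ z : Fin n → Z, fbLaw n W (Q my mz) x y z ≤ l2Y) ∧
  (∀ mz, (kY : ℝ)⁻¹ * ∑ my, ∑ x : Fin n → X, ∑ y : Fin n → Y, ∑ z ∈ (DZ mz)ᶜ,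
      fbLaw n W (Q my mz) x y z ≤ l1Z) ∧
  (∀ mz mz', mz ≠ mz' → (kY : ℝ)⁻¹ * ∑ my, ∑ x : Fin n → X, ∑ y : Fin n → Y,
      ∑ z ∈ DZ mz', fbLaw n W (Q my mz) x y z ≤ l2Z)

/-- A rate pair is achievable for the BC with one-sided feedback from
Terminal Y under the average-error criterion. -/
def FBAchievable {X Y Z : Type*} [Fintype X] [Fintype Y] [Fintype Z]
    (W : X → Y → Z → ℝ) (Rp : ℝ × ℝ) : Prop :=
  0 ≤ Rp.1 ∧ 0 ≤ Rp.2 ∧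
  ∀ l1Y l2Y l1Z l2Z : ℝ, 0 < l1Y → 0 < l2Y → 0 < l1Z → 0 < l2Z →
    ∃ n₀ : ℕ, ∀ n : ℕ, n₀ ≤ n →
      ∃ (kY kZ : ℕ)
        (Q : Fin kY → Fin kZ → (i : ℕ) → (Fin i → X) → (Fin i → Y) → X → ℝ)
        (DY : Fin kY → Finset (Fin n → Y)) (DZ : Fin kZ → Finset (Fin n → Z)),
        IsFBIDCode n kY kZ W Q DY DZ l1Y l2Y l1Z l2Z ∧
        ((0 < Rp.1 → Rp.1 ≤ (1 / n) * Real.log (Real.log kY)) ∧ (Rp.1 = 0 → kY = 1)) ∧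
        ((0 < Rp.2 → Rp.2 ≤ (1 / n) * Real.log (Real.log kZ)) ∧ (Rp.2 = 0 → kZ = 1))


/-! ### Finite probability -/

section Probability

variable {S ι Ω : Type*} [Fintype S] [Fintype ι] [DecidableEq ι] [Fintype Ω]

/-- The probability of the event `A` under the weights `p`. -/
def pr (p : S → ℝ) (A : S → Prop) : ℝ := ∑ s, if A s then p s else 0

/-- The product law of independent coordinates distributed according to `p`. -/
def iid (p : S → ℝ) (ω : ι → S) : ℝ := ∏ i, p (ω i)

lemma IsPMF.exists_not {p : S → ℝ} (hp : IsPMF p) {A : S → Prop} (h : pr p A < 1) :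
    ∃ s, ¬ A s := by
  by_contra! hA
  have : pr p A = 1 := by simp [pr, hA, hp.2]
  linarith

lemma IsPMF.pr_mono {p : S → ℝ} (hp : IsPMF p) {A B : S → Prop} (h : ∀ s, A s → B s) :
    pr p A ≤ pr p B := by
  refine Finset.sum_le_sum fun s _ => ?_
  by_cases hA : A s
  · simp [hA, h s hA]
  · by_cases hB : B s <;> simp [hA, hB, hp.1 s]

lemma IsPMF.pr_or_le {p : S → ℝ} (hp : IsPMF p) (A B : S → Prop) :
    pr p (fun s => A s ∨ B s) ≤ pr p A + pr p B := by
  unfold pr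
  rw [← Finset.sum_add_distrib]
  refine Finset.sum_le_sum fun s _ => ?_
  have := hp.1 s
  by_cases hA : A s <;> by_cases hB : B s <;> simp [hA, hB, this]

lemma IsPMF.pr_exists_le {p : S → ℝ} (hp : IsPMF p) {κ : Type*} [Fintype κ]
    (A : κ → S → Prop) : pr p (fun s => ∃ k, A k s) ≤ ∑ k, pr p (A k) := by
  unfold pr
  rw [Finset.sum_comm]
  refine Finset.sum_le_sum fun s _ => ?_
  have hnn : ∀ k ∈ Finset.univ, 0 ≤ (if A k s then p s else 0) := fun k _ => by
    have := hp.1 s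
    split_ifs <;> simp [this]
  by_cases h : ∃ k, A k s
  · obtain ⟨k, hk⟩ := h
    rw [if_pos ⟨k, hk⟩]
    simpa [hk] using Finset.single_le_sum hnn (Finset.mem_univ k)
  · rw [if_neg h]
    exact Finset.sum_nonneg hnn

lemma IsPMF.pr_le_of_le {p : S → ℝ} (hp : IsPMF p) {A : S → Prop} {f : S → ℝ}
    (hf : ∀ s, 0 ≤ f s) (hA : ∀ s, A s → 1 ≤ f s) : pr p A ≤ ∑ s, p s * f s := by
  refine Finset.sum_le_sum fun s _ => ?_
  by_cases h : A s
  · simpa [h] using le_mul_of_one_le_right (hp.1 s) (hA s h)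
  · simpa [h] using mul_nonneg (hp.1 s) (hf s)

/-- Markov's inequality. -/
lemma IsPMF.pr_ge_le {p : S → ℝ} (hp : IsPMF p) {f : S → ℝ} (hf : ∀ s, 0 ≤ f s)
    {t : ℝ} (ht : 0 < t) : pr p (fun s => t ≤ f s) ≤ (∑ s, p s * f s) / t := by
  have := hp.pr_le_of_le (A := fun s => t ≤ f s) (f := fun s => f s / t)
    (fun s => div_nonneg (hf s) ht.le) (fun s hs => (one_le_div ht).2 hs)
  simpa [Finset.sum_div, mul_div_assoc] using this

lemma sum_iid_mul_prod (p : S → ℝ) (h : ι → S → ℝ) :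
    ∑ ω : ι → S, iid p ω * ∏ i, h i (ω i) = ∏ i, ∑ s, p s * h i s := by
  rw [Finset.prod_univ_sum]
  simp [iid, Finset.prod_mul_distrib]

lemma IsPMF.iid {p : S → ℝ} (hp : IsPMF p) : IsPMF (iid p : (ι → S) → ℝ) := by
  refine ⟨fun ω => Finset.prod_nonneg fun i _ => hp.1 _, ?_⟩
  simpa [hp.2] using sum_iid_mul_prod p (fun (_ : ι) _ => (1 : ℝ))

lemma sum_iid_mul_apply {p : S → ℝ} (hp : IsPMF p) (i : ι) (φ : S → ℝ) :
    ∑ ω : ι → S, iid p ω * φ (ω i) = ∑ s, p s * φ s := by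
  have := sum_iid_mul_prod p (fun l s => if l = i then φ s else 1)
  have e : ∀ l, ∑ s, p s * (if l = i then φ s else 1)
      = if l = i then ∑ s, p s * φ s else 1 := fun l => by
    split_ifs <;> simp [hp.2]
  simp only [e, Finset.prod_ite_eq', Finset.mem_univ, if_true] at this
  exact this

lemma sum_iid_mul_apply_apply {p : S → ℝ} (hp : IsPMF p) {i j : ι} (hij : i ≠ j)
    (φ : S → S → ℝ) :
    ∑ ω : ι → S, iid p ω * φ (ω i) (ω j) = ∑ s, ∑ t, p s * p t * φ s t := by
  have key : ∀ t, ∑ ω : ι → S, iid p ω * (φ (ω i) t * if ω j = t then 1 else 0)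
      = (∑ s, p s * φ s t) * p t := fun t => by
    have := sum_iid_mul_prod p (fun l s => (if l = i then φ s t else 1) *
      (if l = j then (if s = t then 1 else 0) else 1))
    have e : ∀ l, ∑ s, p s * ((if l = i then φ s t else 1) *
          (if l = j then (if s = t then 1 else 0) else 1))
        = (if l = i then ∑ s, p s * φ s t else 1) * (if l = j then p t else 1) := fun l => by
      by_cases h1 : l = i
      · have h2 : l ≠ j := h1 ▸ hij
        simp [h1, hij]
      · by_cases h2 : l = j <;> simp [h1, h2, hp.2]
        simp [hij.symm]
    simp only [e, Finset.prod_mul_distrib, Finset.prod_ite_eq', Finset.mem_univ, if_true] at this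
    exact this
  calc ∑ ω : ι → S, iid p ω * φ (ω i) (ω j)
      = ∑ t, ∑ ω : ι → S, iid p ω * (φ (ω i) t * if ω j = t then 1 else 0) := by
        rw [Finset.sum_comm]
        refine Finset.sum_congr rfl fun ω _ => ?_
        simp
    _ = _ := by
        simp only [key]
        rw [Finset.sum_comm]
        refine Finset.sum_congr rfl fun t _ => ?_
        rw [Finset.sum_mul]
        exact Finset.sum_congr rfl fun s _ => by ring

/-- A Chernoff bound for sums of independent `[0,1]`-valued variables. -/
lemma pr_iid_sum_ge_le {p : S → ℝ} (hp : IsPMF p) {f : ι → S → ℝ}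
    (h0 : ∀ i s, 0 ≤ f i s) (h1 : ∀ i s, f i s ≤ 1) {τ : ℝ}
    (hτ : ∑ i, ∑ s, p s * f i s ≤ τ / 3) :
    pr (iid p) (fun ω : ι → S => τ ≤ ∑ i, f i (ω i)) ≤ Real.exp (-(τ / 3)) := by
  have hexp : ∀ i, ∑ s, p s * Real.exp (f i s) ≤ Real.exp (2 * ∑ s, p s * f i s) := fun i => by
    have h : ∀ s, Real.exp (f i s) ≤ 1 + 2 * f i s := fun s => by
      have := (abs_le.1 (Real.abs_exp_sub_one_sub_id_le (x := f i s)
        (abs_le.2 ⟨by linarith [h0 i s], h1 i s⟩))).2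
      nlinarith [h0 i s, h1 i s]
    calc ∑ s, p s * Real.exp (f i s) ≤ ∑ s, p s * (1 + 2 * f i s) :=
          Finset.sum_le_sum fun s _ => mul_le_mul_of_nonneg_left (h s) (hp.1 s)
      _ = 2 * ∑ s, p s * f i s + 1 := by
          simp only [mul_add, Finset.sum_add_distrib, mul_one, hp.2, Finset.mul_sum]
          rw [add_comm]
          congr 1
          exact Finset.sum_congr rfl fun s _ => by ring
      _ ≤ _ := Real.add_one_le_exp _
  calc pr (iid p) (fun ω : ι → S => τ ≤ ∑ i, f i (ω i))
      ≤ ∑ ω : ι → S, iid p ω * Real.exp (∑ i, f i (ω i) - τ) :=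
        hp.iid.pr_le_of_le (fun _ => (Real.exp_pos _).le)
          (fun ω h => Real.one_le_exp (by linarith))
    _ = Real.exp (-τ) * ∏ i, ∑ s, p s * Real.exp (f i s) := by
        rw [← sum_iid_mul_prod p (fun i s => Real.exp (f i s)), Finset.mul_sum]
        refine Finset.sum_congr rfl fun ω _ => ?_
        rw [← Real.exp_sum, sub_eq_add_neg, Real.exp_add]
        ring
    _ ≤ Real.exp (-τ) * ∏ i, Real.exp (2 * ∑ s, p s * f i s) :=
        mul_le_mul_of_nonneg_left (Finset.prod_le_prod
          (fun i _ => Finset.sum_nonneg fun s _ => mul_nonneg (hp.1 s) (Real.exp_pos _).le)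
          (fun i _ => hexp i)) (Real.exp_pos _).le
    _ = Real.exp (-τ + 2 * ∑ i, ∑ s, p s * f i s) := by
        rw [← Real.exp_sum, ← Real.exp_add, Finset.mul_sum]
    _ ≤ _ := Real.exp_le_exp.2 (by linarith)

/-- The weak law of large numbers (lower deviations). -/
lemma weak_law {p : S → ℝ} (hp : IsPMF p) (g : S → ℝ) {ε l : ℝ} (hε : 0 < ε) (hl : 0 < l) :
    ∃ n₀ : ℕ, ∀ n ≥ n₀, pr (iid p)
      (fun ω : Fin n → S => ∑ i, g (ω i) ≤ n * (∑ s, p s * g s - ε)) ≤ l := by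
  set μ := ∑ s, p s * g s with hμ
  set h : S → ℝ := fun s => g s - μ with hh
  have hmean : ∑ s, p s * h s = 0 := by
    simp only [hh, mul_sub, Finset.sum_sub_distrib, ← Finset.sum_mul, hp.2]
    simp [hμ]
  set V := ∑ s, p s * (h s) ^ 2 with hV
  obtain ⟨n₀, hn₀⟩ := exists_nat_gt (V / (ε ^ 2 * l))
  refine ⟨n₀ + 1, fun n hn => ?_⟩
  have hn' : (n₀ : ℝ) ≤ n := by exact_mod_cast (by omega : n₀ ≤ n)
  have hnpos : (0 : ℝ) < n := by exact_mod_cast (by omega : 0 < n)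
  have hsq : ∑ ω : Fin n → S, iid p ω * (∑ i, h (ω i)) ^ 2 = n * V := by
    have : ∀ i j : Fin n, ∑ ω : Fin n → S, iid p ω * (h (ω i) * h (ω j))
        = if i = j then V else 0 := fun i j => by
      by_cases hij : i = j
      · subst hij
        simpa [hV, pow_two] using sum_iid_mul_apply hp i (fun s => h s * h s)
      · rw [sum_iid_mul_apply_apply hp hij (fun s t => h s * h t), if_neg hij]
        have : ∑ s, ∑ t, p s * p t * (h s * h t)
            = (∑ s, p s * h s) * ∑ t, p t * h t := by
          rw [Finset.sum_mul_sum]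
          exact Finset.sum_congr rfl fun s _ => Finset.sum_congr rfl fun t _ => by ring
        rw [this, hmean, zero_mul]
    calc ∑ ω : Fin n → S, iid p ω * (∑ i, h (ω i)) ^ 2
        = ∑ ω : Fin n → S, ∑ i, ∑ j, iid p ω * (h (ω i) * h (ω j)) := by
          refine Finset.sum_congr rfl fun ω _ => ?_
          rw [pow_two, Finset.sum_mul_sum]
          simp only [Finset.mul_sum]
      _ = ∑ i, ∑ j, ∑ ω : Fin n → S, iid p ω * (h (ω i) * h (ω j)) := by
          rw [Finset.sum_comm]
          exact Finset.sum_congr rfl fun i _ => Finset.sum_comm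
      _ = n * V := by simp [this]
  have hsub : ∀ ω : Fin n → S, ∑ i, g (ω i) ≤ n * (μ - ε) →
      (n * ε) ^ 2 ≤ (∑ i, h (ω i)) ^ 2 := fun ω hω => by
    have e : ∑ i, h (ω i) = ∑ i, g (ω i) - n * μ := by
      simp [hh, Finset.sum_sub_distrib]
    have : 0 ≤ n * ε := by positivity
    rw [e]
    nlinarith
  calc _ ≤ pr (iid p) (fun ω : Fin n → S => (n * ε) ^ 2 ≤ (∑ i, h (ω i)) ^ 2) :=
        hp.iid.pr_mono hsub
    _ ≤ (n * V) / (n * ε) ^ 2 := by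
        rw [← hsq]
        exact hp.iid.pr_ge_le (fun _ => sq_nonneg _) (by positivity)
    _ ≤ l := by
        rw [div_le_iff₀ (by positivity)]
        rw [div_lt_iff₀ (by positivity)] at hn₀
        have : V ≤ n * (ε ^ 2 * l) := hn₀.le.trans (by gcongr)
        nlinarith

/-- Random selection of a family in which no member and no ordered pair of distinct members
is bad, and which avoids a further event. -/
lemma exists_selection {p : Ω → ℝ} (hp : IsPMF p) {M : ℕ} {bad₁ : Ω → Prop}
    {bad₂ : Ω → Ω → Prop} {G : (Fin M → Ω) → Prop} {β γ : ℝ}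
    (h₁ : pr p bad₁ ≤ β) (h₂ : ∀ v, pr p (fun u => bad₂ u v) ≤ β)
    (hG : pr (iid p) G ≤ γ) (h : M * β + M ^ 2 * β + γ < 1) :
    ∃ ω : Fin M → Ω, (∀ m, ¬ bad₁ (ω m)) ∧ (∀ m m', m ≠ m' → ¬ bad₂ (ω m) (ω m')) ∧
      ¬ G ω := by
  have hβ : 0 ≤ β := le_trans (Finset.sum_nonneg fun s _ => by
    have := hp.1 s
    split_ifs <;> simp [this]) h₁
  have e₁ : ∀ m, pr (iid p) (fun ω : Fin M → Ω => bad₁ (ω m)) ≤ β := fun m => by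
    refine le_of_eq_of_le ?_ h₁
    simpa [pr] using sum_iid_mul_apply hp m (fun s => if bad₁ s then 1 else 0)
  have e₂ : ∀ q : Fin M × Fin M,
      pr (iid p) (fun ω : Fin M → Ω => q.1 ≠ q.2 ∧ bad₂ (ω q.1) (ω q.2)) ≤ β := fun q => by
    by_cases hq : q.1 = q.2
    · simpa [pr, hq] using hβ
    · have := sum_iid_mul_apply_apply hp hq (fun s t => if bad₂ s t then 1 else 0)
      calc _ = ∑ s, ∑ t, p s * p t * (if bad₂ s t then 1 else 0) := by
            rw [← this]; simp [pr, hq]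
        _ = ∑ t, p t * pr p (fun u => bad₂ u t) := by
            rw [Finset.sum_comm]
            refine Finset.sum_congr rfl fun t _ => ?_
            rw [pr, Finset.mul_sum]
            refine Finset.sum_congr rfl fun s _ => ?_
            split_ifs <;> ring
        _ ≤ ∑ t, p t * β := Finset.sum_le_sum fun t _ =>
            mul_le_mul_of_nonneg_left (h₂ t) (hp.1 t)
        _ = β := by rw [← Finset.sum_mul, hp.2, one_mul]
  have hlt : pr (iid p) (fun ω : Fin M → Ω => ((∃ m, bad₁ (ω m)) ∨
      ∃ q : Fin M × Fin M, q.1 ≠ q.2 ∧ bad₂ (ω q.1) (ω q.2)) ∨ G ω) < 1 := by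
    refine lt_of_le_of_lt (hp.iid.pr_or_le _ _) ?_
    refine lt_of_le_of_lt (add_le_add (hp.iid.pr_or_le _ _) hG) ?_
    refine lt_of_le_of_lt (add_le_add (add_le_add
      (hp.iid.pr_exists_le fun m (ω : Fin M → Ω) => bad₁ (ω m))
      (hp.iid.pr_exists_le fun (q : Fin M × Fin M) (ω : Fin M → Ω) =>
        q.1 ≠ q.2 ∧ bad₂ (ω q.1) (ω q.2))) le_rfl) ?_
    refine lt_of_le_of_lt (add_le_add (add_le_add (Finset.sum_le_sum fun m _ => e₁ m)
      (Finset.sum_le_sum fun q _ => e₂ q)) le_rfl) ?_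
    simpa [pow_two] using h
  obtain ⟨ω, hω⟩ := hp.iid.exists_not hlt
  push Not at hω
  exact ⟨ω, hω.1.1, fun m m' hm => hω.1.2 (m, m') hm, hω.2⟩

end Probability

/-! ### Information densities and random codes -/

section Information

variable {X Y Z : Type*}

lemma sum_iid_mul_Wn [Fintype X] (P : X → ℝ) (W : X → Y → ℝ) {n : ℕ} (y : Fin n → Y) :
    ∑ x, iid P x * Wn W n x y = iid (outDist P W) y :=
  sum_iid_mul_prod P (fun (i : Fin n) x => W x (y i))

variable [Fintype Y]

lemma IsChannel.Wn_nonneg {W : X → Y → ℝ} (hW : IsChannel W) {n : ℕ} (x : Fin n → X)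
    (y : Fin n → Y) : 0 ≤ Wn W n x y :=
  Finset.prod_nonneg fun _ _ => hW.1 _ _

lemma IsChannel.sum_Wn {W : X → Y → ℝ} (hW : IsChannel W) {n : ℕ} (x : Fin n → X) :
    ∑ y, Wn W n x y = 1 := by
  have := Finset.prod_univ_sum (fun _ : Fin n => (Finset.univ : Finset Y))
    (fun i y => W (x i) y)
  simp only [hW.2, Finset.prod_const_one, Fintype.piFinset_univ] at this
  exact this.symm

lemma IsChannel.sum_Wn_le_one {W : X → Y → ℝ} (hW : IsChannel W) {n : ℕ} (x : Fin n → X)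
    (B : Finset (Fin n → Y)) : ∑ y ∈ B, Wn W n x y ≤ 1 := by
  rw [← hW.sum_Wn x]
  exact Finset.sum_le_sum_of_subset_of_nonneg (Finset.subset_univ _)
    fun y _ _ => hW.Wn_nonneg x y

variable [Fintype X] [Fintype Z]

lemma IsPMF.outDist {P : X → ℝ} (hP : IsPMF P) {W : X → Y → ℝ} (hW : IsChannel W) :
    IsPMF (outDist P W) := by
  refine ⟨fun y => Finset.sum_nonneg fun x _ => mul_nonneg (hP.1 x) (hW.1 x y), ?_⟩
  unfold _root_.outDist
  rw [Finset.sum_comm]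
  simp [← Finset.mul_sum, hW.2, hP.2]

/-- Output words whose information density with the input word `x` is at least `c`. -/
def infoSet (P : X → ℝ) (W : X → Y → ℝ) (n : ℕ) (c : ℝ) (x : Fin n → X) :
    Finset (Fin n → Y) :=
  Finset.univ.filter fun y => Real.exp c * iid (outDist P W) y ≤ Wn W n x y

lemma sum_infoSet_le {P : X → ℝ} {W : X → Y → ℝ} (hW : IsChannel W)
    {n : ℕ} (c : ℝ) (x : Fin n → X) :
    ∑ y ∈ infoSet P W n c x, iid (outDist P W) y ≤ Real.exp (-c) := by
  have h : ∑ y ∈ infoSet P W n c x, Real.exp c * iid (outDist P W) y ≤ 1 :=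
    (Finset.sum_le_sum fun y hy => (Finset.mem_filter.1 hy).2).trans (hW.sum_Wn_le_one x _)
  rw [← Finset.mul_sum] at h
  rw [Real.exp_neg, ← one_div, le_div_iff₀ (Real.exp_pos _)]
  linarith

lemma infoSet_compl_eventually {P : X → ℝ} {W : X → Y → ℝ} (hP : IsPMF P) (hW : IsChannel W)
    {ε l : ℝ} (hε : 0 < ε) (hl : 0 < l) :
    ∃ n₀ : ℕ, ∀ n ≥ n₀, ∑ x : Fin n → X, iid P x *
      ∑ y ∈ (infoSet P W n (n * (mutInf P W - ε)) x)ᶜ, Wn W n x y ≤ l := by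
  have hq := hP.outDist hW
  set p : X × Y → ℝ := fun s => P s.1 * W s.1 s.2 with hp_def
  have hp : IsPMF p := by
    refine ⟨fun s => mul_nonneg (hP.1 _) (hW.1 _ _), ?_⟩
    simp [hp_def, Fintype.sum_prod_type, ← Finset.mul_sum, hW.2, hP.2]
  set g : X × Y → ℝ := fun s => Real.log (W s.1 s.2 / outDist P W s.2) with hg_def
  have hI : ∑ s, p s * g s = mutInf P W := by
    rw [mutInf, Fintype.sum_prod_type]
    refine Finset.sum_congr rfl fun x _ => Finset.sum_congr rfl fun y _ => ?_
    split_ifs with h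
    · simp [hp_def, h]
    · rfl
  obtain ⟨n₀, hn₀⟩ := weak_law hp g hε hl
  refine ⟨n₀, fun n hn => le_trans ?_ (hn₀ n hn)⟩
  rw [hI, pr, ← (Equiv.arrowProdEquivProdArrow (Fin n) (fun _ => X) (fun _ => Y)).symm.sum_comp,
    Fintype.sum_prod_type]
  refine Finset.sum_le_sum fun x _ => ?_
  rw [Finset.mul_sum, ← Finset.univ_inter (infoSet P W n _ x)ᶜ, ← Finset.sum_ite_mem]
  refine Finset.sum_le_sum fun y _ => ?_
  have hpn : iid P x * Wn W n x y = iid p fun i => (x i, y i) := by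
    simp [iid, Wn, hp_def, Finset.prod_mul_distrib]
  change _ ≤ if ∑ i, g (x i, y i) ≤ _ then iid p (fun i => (x i, y i)) else 0
  rw [hpn]
  have hnn : 0 ≤ iid p fun i => (x i, y i) := hp.iid.1 _
  by_cases hy : y ∈ (infoSet P W n (n * (mutInf P W - ε)) x)ᶜ
  swap
  · rw [if_neg hy]
    split_ifs <;> simp [hnn]
  rw [if_pos hy]
  by_cases hg : ∑ i, g (x i, y i) ≤ n * (mutInf P W - ε)
  · rw [if_pos hg]
  rw [if_neg hg]
  rcases hnn.eq_or_lt with h0 | hpos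
  · exact h0.symm.le
  have hfac : ∀ i, 0 < p (x i, y i) := fun i =>
    (hp.1 _).lt_of_ne fun h => hpos.ne' (Finset.prod_eq_zero (Finset.mem_univ i) h.symm)
  have hPpos : ∀ i, 0 < P (x i) := fun i =>
    (hP.1 _).lt_of_ne fun h => (hfac i).ne' (by simp [hp_def, ← h])
  have hWpos : ∀ i, 0 < W (x i) (y i) := fun i =>
    (hW.1 _ _).lt_of_ne fun h => (hfac i).ne' (by simp [hp_def, ← h])
  have hqpos : ∀ i, 0 < outDist P W (y i) := fun i =>
    (hfac i).trans_le (Finset.single_le_sum (f := fun x' => P x' * W x' (y i))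
      (fun x' _ => mul_nonneg (hP.1 x') (hW.1 x' _)) (Finset.mem_univ (x i)))
  refine absurd ?_ (Finset.mem_compl.1 hy)
  have hexp : Real.exp (∑ i, g (x i, y i)) * iid (outDist P W) y = Wn W n x y := by
    rw [Real.exp_sum, iid, ← Finset.prod_mul_distrib]
    refine Finset.prod_congr rfl fun i _ => ?_
    rw [hg_def, Real.exp_log (div_pos (hWpos i) (hqpos i))]
    exact div_mul_cancel₀ _ (hqpos i).ne'
  refine Finset.mem_filter.2 ⟨Finset.mem_univ _, ?_⟩
  rw [← hexp]
  exact mul_le_mul_of_nonneg_right (Real.exp_le_exp.2 (not_le.1 hg).le) (hq.iid.1 y)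

/-- Asymptotic equipartition: words of too large probability are unlikely. -/
lemma pr_iid_large_eventually {q : Y → ℝ} (hq : IsPMF q) {ε l : ℝ} (hε : 0 < ε) (hl : 0 < l) :
    ∃ n₀ : ℕ, ∀ n ≥ n₀, pr (iid q)
      (fun y : Fin n → Y => Real.exp (-(n * (entH q - ε))) < iid q y) ≤ l := by
  obtain ⟨n₀, hn₀⟩ := weak_law hq (fun y => -Real.log (q y)) hε hl
  have hH : ∑ y, q y * -Real.log (q y) = entH q := by
    refine Finset.sum_congr rfl fun y _ => ?_
    split_ifs with h
    · simp [h]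
    · ring
  rw [hH] at hn₀
  refine ⟨n₀, fun n hn => (hq.iid.pr_mono fun y hy => ?_).trans (hn₀ n hn)⟩
  have hpos : 0 < iid q y := (Real.exp_pos _).trans hy
  have hfac : ∀ i, q (y i) ≠ 0 := fun i h =>
    hpos.ne' (Finset.prod_eq_zero (Finset.mem_univ i) h)
  have hlog := Real.log_lt_log (Real.exp_pos _) hy
  rw [Real.log_exp, iid, Real.log_prod fun i _ => hfac i] at hlog
  rw [Finset.sum_neg_distrib]
  linarith

/-- A code for identification among finitely many messages, of some blocklength. -/
lemma exists_finite_code {P : X → ℝ} {W : X → Y → ℝ} (hP : IsPMF P) (hW : IsChannel W)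
    (hI : 0 < mutInf P W) (L : ℕ) {l : ℝ} (hl : 0 < l) :
    ∃ (k : ℕ) (c : Fin L → Fin k → X) (E : Fin L → Finset (Fin k → Y)),
      (∀ v, ∑ y ∈ (E v)ᶜ, Wn W k (c v) y ≤ l) ∧
      (∀ v v', v ≠ v' → ∑ y ∈ E v', Wn W k (c v) y ≤ l) := by
  set β : ℝ := 1 / (L + L ^ 2 + 1) with hβ_def
  have hβ : 0 < β := by positivity
  have hLβ : L * β + L ^ 2 * β + 0 < 1 := by
    rw [hβ_def, add_zero, ← add_mul, mul_one_div, div_lt_one (by positivity)]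
    linarith
  obtain ⟨n₁, hn₁⟩ := infoSet_compl_eventually hP hW (half_pos hI) (mul_pos hβ hl)
  have ht : Filter.Tendsto (fun k : ℕ => Real.exp (-(k * (mutInf P W - mutInf P W / 2))))
      Filter.atTop (nhds 0) :=
    Real.tendsto_exp_neg_atTop_nhds_zero.comp
      (tendsto_natCast_atTop_atTop.atTop_mul_const (by linarith))
  obtain ⟨n₂, hn₂⟩ := Filter.eventually_atTop.1 (ht.eventually_le_const (mul_pos hβ hl))
  set k := max n₁ n₂
  set T := infoSet P W k (k * (mutInf P W - mutInf P W / 2))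
  have hnn : ∀ x (B : Finset (Fin k → Y)), 0 ≤ ∑ y ∈ B, Wn W k x y := fun x B =>
    Finset.sum_nonneg fun y _ => hW.Wn_nonneg x y
  obtain ⟨c, hc₁, hc₂, -⟩ := exists_selection (M := L)
    (hP.iid : IsPMF (iid P : (Fin k → X) → ℝ))
    (bad₁ := fun u => l ≤ ∑ y ∈ (T u)ᶜ, Wn W k u y)
    (bad₂ := fun u v => l ≤ ∑ y ∈ T v, Wn W k u y) (G := fun _ => False) (β := β) (γ := 0)
    ((hP.iid.pr_ge_le (fun u => hnn u _) hl).trans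
      ((div_le_iff₀ hl).2 (hn₁ k (le_max_left _ _))))
    (fun v => (hP.iid.pr_ge_le (fun u => hnn u _) hl).trans ((div_le_iff₀ hl).2 (by
      simp only [Finset.mul_sum]
      rw [Finset.sum_comm]
      simp only [sum_iid_mul_Wn]
      exact (sum_infoSet_le hW _ _).trans (hn₂ k (le_max_right _ _)))))
    (by simp [pr]) hLβ
  exact ⟨k, c, fun v => T (c v), fun v => (not_le.1 (hc₁ v)).le,
    fun v v' h => (not_le.1 (hc₂ v v' h)).le⟩

end Information

/-! ### Doubly exponential families of random codes -/

section DoublyExponential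

variable {X Y Z : Type*} [Fintype X] [Fintype Y] [Fintype Z]

/-- The size `⌈exp (exp (n R))⌉` of a message set of doubly exponential rate `R`. -/
def idSize (R : ℝ) (n : ℕ) : ℕ := ⌈Real.exp (Real.exp (n * R))⌉₊

lemma exp_exp_le_idSize (R : ℝ) (n : ℕ) : Real.exp (Real.exp (n * R)) ≤ idSize R n :=
  Nat.le_ceil _

lemma idSize_le (R : ℝ) (n : ℕ) : (idSize R n : ℝ) ≤ 2 * Real.exp (Real.exp (n * R)) := by
  have h := (Nat.ceil_lt_add_one (Real.exp_pos (Real.exp (n * R))).le).le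
  have h1 : 1 ≤ Real.exp (Real.exp (n * R)) := Real.one_le_exp (Real.exp_pos _).le
  unfold idSize
  linarith

lemma idSize_pos (R : ℝ) (n : ℕ) : 0 < idSize R n :=
  Nat.ceil_pos.2 (Real.exp_pos _)

lemma tendsto_exp_natCast_mul {a : ℝ} (ha : 0 < a) :
    Filter.Tendsto (fun n : ℕ => Real.exp (n * a)) Filter.atTop Filter.atTop :=
  Real.tendsto_exp_atTop.comp (tendsto_natCast_atTop_atTop.atTop_mul_const ha)

lemma idSize_union_eventually {R R' c η : ℝ} (hR : 0 ≤ R) (hRR' : R < R') (hc : 0 < c)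
    (hη : 0 < η) : ∀ᶠ n : ℕ in Filter.atTop,
      idSize R n * Real.exp (-(c * Real.exp (n * R'))) +
        idSize R n ^ 2 * Real.exp (-(c * Real.exp (n * R'))) ≤ η := by
  set K := max 0 (-Real.log (η / 8)) with hK
  filter_upwards [(tendsto_exp_natCast_mul (sub_pos.2 hRR')).eventually_ge_atTop ((2 + K) / c)]
    with n hn
  rw [div_le_iff₀ hc] at hn
  set E := Real.exp (n * R) with hE
  have hE1 : 1 ≤ E := Real.one_le_exp (by positivity)
  have hsplit : Real.exp (n * R') = E * Real.exp (n * (R' - R)) := by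
    rw [hE, ← Real.exp_add]
    ring_nf
  have hK0 : 0 ≤ K := le_max_left _ _
  have hmain : -(c * Real.exp (n * R')) ≤ Real.log (η / 8) - 2 * E := by
    rw [hsplit]
    have : -Real.log (η / 8) ≤ K := le_max_right _ _
    nlinarith
  have hexp : Real.exp (-(c * Real.exp (n * R'))) * Real.exp E ^ 2 ≤ η / 8 := by
    calc _ ≤ Real.exp (Real.log (η / 8) - 2 * E) * Real.exp E ^ 2 :=
          mul_le_mul_of_nonneg_right (Real.exp_le_exp.2 hmain) (by positivity)
      _ = η / 8 := by
          rw [← Real.exp_nat_mul, ← Real.exp_add]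
          push_cast
          rw [sub_add_cancel, Real.exp_log (by positivity)]
  have hM := idSize_le R n
  have hM1 : (1 : ℝ) ≤ idSize R n := by exact_mod_cast idSize_pos R n
  set β := Real.exp (-(c * Real.exp (n * R')))
  have hβ : 0 < β := Real.exp_pos _
  have h4 : (idSize R n : ℝ) ^ 2 ≤ 4 * Real.exp E ^ 2 := by
    calc (idSize R n : ℝ) ^ 2 ≤ (2 * Real.exp E) ^ 2 := by gcongr
      _ = _ := by ring
  calc idSize R n * β + idSize R n ^ 2 * β ≤ idSize R n ^ 2 * β + idSize R n ^ 2 * β := by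
        gcongr
        exact le_self_pow₀ hM1 two_ne_zero
    _ ≤ 4 * Real.exp E ^ 2 * β + 4 * Real.exp E ^ 2 * β := by gcongr
    _ ≤ η := by linarith

lemma pow_mul_exp_neg_idSize_eventually {R c η K : ℝ} (hR : 0 < R) (hc : 0 < c) (hη : 0 < η)
    (hK : 1 ≤ K) : ∀ᶠ n : ℕ in Filter.atTop,
      K ^ n * Real.exp (-(idSize R n * (c / K ^ n))) ≤ η := by
  set B := 2 * Real.log K + |Real.log (1 / (c * η))| with hB
  have hB0 : 0 ≤ B := add_nonneg (mul_nonneg two_pos.le (Real.log_nonneg hK)) (abs_nonneg _)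
  filter_upwards [Filter.eventually_ge_atTop 1,
    tendsto_natCast_atTop_atTop.eventually_ge_atTop (2 * B / R ^ 2)] with n hn1 hn
  rw [div_le_iff₀ (by positivity)] at hn
  have hn1' : (1 : ℝ) ≤ n := by exact_mod_cast hn1
  have hKn : 0 < K ^ n := by positivity
  have hquad : n * (2 * Real.log K) + Real.log (1 / (c * η)) ≤ Real.exp (n * R) := by
    have h1 := Real.quadratic_le_exp_of_nonneg (x := n * R) (by positivity)
    have h2 : 0 ≤ n * R := by positivity
    have h3 : Real.log (1 / (c * η)) ≤ n * |Real.log (1 / (c * η))| :=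
      (le_abs_self _).trans (le_mul_of_one_le_left (abs_nonneg _) hn1')
    nlinarith
  have hM : K ^ n * K ^ n / (c * η) ≤ idSize R n := by
    refine le_trans ?_ ((Real.exp_le_exp.2 hquad).trans (exp_exp_le_idSize R n))
    rw [show n * (2 * Real.log K) = n * Real.log K + n * Real.log K by ring, Real.exp_add,
      Real.exp_log (by positivity), Real.exp_add, Real.exp_nat_mul, Real.exp_log (by positivity)]
    exact (mul_one_div _ _).symm.le
  have hx : K ^ n / η ≤ idSize R n * (c / K ^ n) := by
    rw [div_le_iff₀ (by positivity)] at hM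
    rw [← mul_div_assoc, div_le_div_iff₀ hη hKn]
    linarith
  have hpos : 0 < K ^ n / η := by positivity
  rw [Real.exp_neg]
  calc K ^ n * (Real.exp (idSize R n * (c / K ^ n)))⁻¹ ≤ K ^ n * (K ^ n / η)⁻¹ := by
        gcongr
        exact hx.trans (by linarith [Real.add_one_le_exp (idSize R n * (c / K ^ n))])
    _ = η := by field_simp

/-- Doubly exponentially many hash functions with few collisions under an i.i.d. source. -/
lemma exists_hash {q : Y → ℝ} (hq : IsPMF q) {R l : ℝ} (hR0 : 0 ≤ R) (hR : R < entH q)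
    (hl : 0 < l) {L : ℕ} (hL : 6 / l ≤ L) : ∀ᶠ n : ℕ in Filter.atTop,
      ∃ f : Fin (idSize R n) → (Fin n → Y) → Fin L,
        ∀ m m', m ≠ m' → pr (iid q) (fun y => f m y = f m' y) ≤ l := by
  have hLpos : (0 : ℝ) < L := (by positivity : (0 : ℝ) < 6 / l).trans_le hL
  set ε := (entH q - R) / 2 with hε_def
  have hε : 0 < ε := by rw [hε_def]; linarith
  obtain ⟨n₀, hn₀⟩ := pr_iid_large_eventually hq hε (half_pos hl)
  filter_upwards [Filter.eventually_ge_atTop n₀,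
    idSize_union_eventually hR0 (show R < entH q - ε by rw [hε_def]; linarith)
      (show 0 < l / 6 by positivity) (show (0 : ℝ) < 1 / 2 by norm_num)] with n hn hunion
  set δ := Real.exp (-(n * (entH q - ε))) with hδ_def
  have hδ : 0 < δ := Real.exp_pos _
  have hδinv : Real.exp (n * (entH q - ε)) = 1 / δ := by
    rw [hδ_def, Real.exp_neg, one_div, inv_inv]
  set r : (Fin n → Y) → ℝ := fun y => if iid q y ≤ δ then iid q y else 0 with hr_def
  have hr0 : ∀ y, 0 ≤ r y := fun y => by
    have : 0 ≤ iid q y := hq.iid.1 y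
    simp only [hr_def]
    split_ifs <;> simp [this]
  have hrδ : ∀ y, r y ≤ δ := fun y => by
    simp only [hr_def]
    split_ifs with h <;> simp [h, hδ.le]
  have hrsum : ∑ y, r y ≤ 1 := by
    rw [← (hq.iid : IsPMF (iid q : (Fin n → Y) → ℝ)).2]
    refine Finset.sum_le_sum fun y _ => ?_
    simp only [hr_def]
    split_ifs with h
    · exact le_rfl
    · exact (hδ.trans (not_le.1 h)).le
  have hu : IsPMF (fun _ : Fin L => (1 / L : ℝ)) :=
    ⟨fun _ => by positivity, by simp [hLpos.ne']⟩
  have hbad : ∀ v : (Fin n → Y) → Fin L,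
      pr (iid (fun _ : Fin L => (1 / L : ℝ)))
        (fun u => l / 2 ≤ ∑ y, r y * if u y = v y then 1 else 0) ≤
      Real.exp (-(l / 6 * Real.exp (n * (entH q - ε)))) := fun v => by
    have h := pr_iid_sum_ge_le hu (τ := l / 2 / δ)
      (f := fun (y : Fin n → Y) s => r y / δ * if s = v y then 1 else 0)
      (fun y s => mul_nonneg (div_nonneg (hr0 y) hδ.le) (by split_ifs <;> norm_num))
      (fun y s => mul_le_one₀ ((div_le_one hδ).2 (hrδ y)) (by split_ifs <;> norm_num)
        (by split_ifs <;> norm_num)) (by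
        have : ∀ y : Fin n → Y, ∑ s : Fin L, (1 / L : ℝ) *
            (r y / δ * if s = v y then 1 else 0) = r y * (1 / (L * δ)) := fun y => by
          simp only [mul_ite, mul_one, mul_zero, Finset.sum_ite_eq', Finset.mem_univ, if_true]
          field_simp
        simp only [this]
        rw [← Finset.sum_mul]
        refine (mul_le_of_le_one_left (by positivity) hrsum).trans ?_
        rw [div_le_iff₀ hl] at hL
        rw [div_div, div_div, div_le_div_iff₀ (by positivity) (by positivity)]
        nlinarith)
    rw [hδinv]
    refine le_trans (le_of_eq ?_) (h.trans (le_of_eq ?_))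
    · congr 1
      ext u
      rw [div_le_iff₀ hδ, Finset.sum_mul]
      have : ∀ y, r y / δ * (if u y = v y then 1 else 0) * δ
          = r y * if u y = v y then 1 else 0 := fun y => by field_simp
      simp only [this]
    · congr 1
      field_simp
      norm_num
  obtain ⟨f, -, hf, -⟩ := exists_selection (M := idSize R n) hu.iid
    (bad₁ := fun _ => False)
    (bad₂ := fun u v => l / 2 ≤ ∑ y, r y * if u y = v y then 1 else 0)
    (G := fun _ => False) (γ := 0)
    (by simp [pr, (Real.exp_pos _).le]) hbad (by simp [pr]) (by linarith)
  refine ⟨f, fun m m' hm => ?_⟩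
  have h1 := not_le.1 (hf m m' hm)
  calc pr (iid q) (fun y => f m y = f m' y)
      ≤ ∑ y, (r y * (if f m y = f m' y then 1 else 0) +
          if δ < iid q y then iid q y else 0) := by
        refine Finset.sum_le_sum fun y _ => ?_
        have : 0 ≤ iid q y := hq.iid.1 y
        simp only [hr_def]
        by_cases ha : f m y = f m' y <;> by_cases hb : iid q y ≤ δ
        · simp [ha, hb, not_lt.2 hb]
        · simp [ha, hb, not_le.1 hb]
        · simp [ha, not_lt.2 hb]
        · simp [ha, not_le.1 hb, this]
    _ ≤ l / 2 + l / 2 := by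
        rw [Finset.sum_add_distrib]
        exact add_le_add h1.le (hn₀ n hn)
    _ = l := by ring

lemma sum_biUnion_le_sum {α κ : Type*} [DecidableEq α] {s : Finset κ} {T : κ → Finset α}
    {f : α → ℝ} (hf : ∀ a, 0 ≤ f a) :
    ∑ a ∈ s.biUnion T, f a ≤ ∑ k ∈ s, ∑ a ∈ T k, f a := by
  induction s using Finset.induction_on with
  | empty => simp
  | insert k s hk ih =>
    rw [Finset.biUnion_insert, Finset.sum_insert hk]
    have h := Finset.sum_union_inter (s₁ := T k) (s₂ := s.biUnion T) (f := f)
    have h' : 0 ≤ ∑ a ∈ T k ∩ s.biUnion T, f a := Finset.sum_nonneg fun a _ => hf a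
    linarith

/-- Random identification codes for `V` whose average input law induces essentially an i.i.d.
output law over the channel `W`. -/
lemma exists_idCode {P : X → ℝ} {V : X → Z → ℝ} {W : X → Y → ℝ} [Nonempty Y] (hP : IsPMF P)
    (hV : IsChannel V) (hW : IsChannel W) {R l : ℝ} (hR0 : 0 < R) (hR : R < mutInf P V)
    (hl : 0 < l) : ∀ᶠ n : ℕ in Filter.atTop,
      ∃ (G : Fin (idSize R n) → (Fin n → X) → ℝ) (D : Fin (idSize R n) → Finset (Fin n → Z)),
        IsIDCode n V G D l l ∧
        ∀ y : Fin n → Y, (idSize R n : ℝ)⁻¹ * ∑ m, ∑ x, G m x * Wn W n x y ≤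
          3 * iid (outDist P W) y + l / (Fintype.card Y : ℝ) ^ n := by
  set I := mutInf P V with hI_def
  set ε := (I - R) / 4 with hε_def
  have hε : 0 < ε := by rw [hε_def]; linarith
  have hl3 : 0 < l / 3 := by positivity
  obtain ⟨n₀, hn₀⟩ := infoSet_compl_eventually hP hV hε hl3
  have hK : (1 : ℝ) ≤ Fintype.card Y := by exact_mod_cast Fintype.card_pos
  have ht : Filter.Tendsto (fun n : ℕ => Real.exp (-(n * ε))) Filter.atTop (nhds 0) :=
    Real.tendsto_exp_neg_atTop_nhds_zero.comp (tendsto_natCast_atTop_atTop.atTop_mul_const hε)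
  filter_upwards [Filter.eventually_ge_atTop n₀,
    idSize_union_eventually hR0.le (show R < I - 2 * ε by rw [hε_def]; linarith)
      hl3 (show (0 : ℝ) < 1 / 3 by norm_num),
    pow_mul_exp_neg_idSize_eventually hR0 hl3 (show (0 : ℝ) < 1 / 3 by norm_num) hK,
    ht.eventually_le_const (show 0 < l / 6 by positivity)] with n hn hunion hγ hexp
  set A := ⌈Real.exp (n * (I - 2 * ε))⌉₊ with hA_def
  have hA : Real.exp (n * (I - 2 * ε)) ≤ A := Nat.le_ceil _
  have hA' : (A : ℝ) ≤ 2 * Real.exp (n * (I - 2 * ε)) := by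
    have h := (Nat.ceil_lt_add_one (Real.exp_pos (n * (I - 2 * ε))).le).le
    have h1 : 1 ≤ Real.exp (n * (I - 2 * ε)) :=
      Real.one_le_exp (mul_nonneg n.cast_nonneg (by rw [hε_def]; linarith))
    rw [hA_def]
    linarith
  have hApos : (0 : ℝ) < A := (Real.exp_pos _).trans_le hA
  set M := idSize R n with hM_def
  have hMpos : (0 : ℝ) < M := by exact_mod_cast idSize_pos R n
  set T := infoSet P V n (n * (I - ε)) with hT_def
  set p : (Fin n → X) → ℝ := iid P with hp_def
  have hp : IsPMF p := hP.iid
  set β := Real.exp (-(l / 3 * Real.exp (n * (I - 2 * ε)))) with hβ_def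
  have hVnn : ∀ x (B : Finset (Fin n → Z)), 0 ≤ ∑ z ∈ B, Wn V n x z := fun x B =>
    Finset.sum_nonneg fun z _ => hV.Wn_nonneg x z
  have hchern : ∀ F : (Fin n → X) → ℝ, (∀ x, 0 ≤ F x) → (∀ x, F x ≤ 1) →
      ∑ x, p x * F x ≤ l / 3 →
      pr (iid p) (fun u : Fin A → Fin n → X => A * l ≤ ∑ a, F (u a)) ≤ β := fun F h0 h1 hF => by
    refine (pr_iid_sum_ge_le hp (f := fun (_ : Fin A) => F) (fun _ => h0) (fun _ => h1)
      ?_).trans ?_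
    · rw [Finset.sum_const, Finset.card_univ, Fintype.card_fin, nsmul_eq_mul, mul_div_assoc]
      gcongr
    · rw [hβ_def]
      refine Real.exp_le_exp.2 (neg_le_neg ?_)
      rw [mul_div_assoc, mul_comm]
      gcongr
  set D : (Fin A → Fin n → X) → Finset (Fin n → Z) := fun u =>
    Finset.univ.biUnion fun a => T (u a) with hD_def
  have hDmem : ∀ u a, T (u a) ⊆ D u := fun u a =>
    Finset.subset_biUnion_of_mem (fun a => T (u a)) (Finset.mem_univ a)
  have hDprob : ∀ v, ∑ x, p x * ∑ z ∈ D v, Wn V n x z ≤ l / 3 := fun v => by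
    simp only [Finset.mul_sum]
    rw [Finset.sum_comm]
    simp only [hp_def, sum_iid_mul_Wn]
    calc ∑ z ∈ D v, iid (outDist P V) z
        ≤ ∑ a, ∑ z ∈ T (v a), iid (outDist P V) z :=
          sum_biUnion_le_sum (hP.outDist hV).iid.1
      _ ≤ ∑ _a : Fin A, Real.exp (-(n * (I - ε))) :=
          Finset.sum_le_sum fun a _ => sum_infoSet_le hV _ _
      _ = A * Real.exp (-(n * (I - ε))) := by simp
      _ ≤ 2 * Real.exp (n * (I - 2 * ε)) * Real.exp (-(n * (I - ε))) := by gcongr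
      _ = 2 * Real.exp (-(n * ε)) := by
          rw [mul_assoc, ← Real.exp_add]
          ring_nf
      _ ≤ l / 3 := by linarith
  set κ : ℝ := (Fintype.card Y : ℝ) ^ n with hκ_def
  have hκ : 0 < κ := by positivity
  obtain ⟨ω, hω₁, hω₂, hω₃⟩ := exists_selection (M := M)
    (hp.iid : IsPMF (iid p : (Fin A → Fin n → X) → ℝ))
    (bad₁ := fun u => A * l ≤ ∑ a, ∑ z ∈ (T (u a))ᶜ, Wn V n (u a) z)
    (bad₂ := fun u v => A * l ≤ ∑ a, ∑ z ∈ D v, Wn V n (u a) z)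
    (G := fun ω => ∃ y : Fin n → Y, M * (3 * iid (outDist P W) y + l / κ) ≤
      ∑ m, (A : ℝ)⁻¹ * ∑ a, Wn W n (ω m a) y) (β := β) (γ := 1 / 3)
    (hchern (fun x => ∑ z ∈ (T x)ᶜ, Wn V n x z) (fun x => hVnn x _)
      (fun x => hV.sum_Wn_le_one x _) (hn₀ n hn))
    (fun v => hchern (fun x => ∑ z ∈ D v, Wn V n x z) (fun x => hVnn x _)
      (fun x => hV.sum_Wn_le_one x _) (hDprob v))
    (by
      refine (hp.iid.iid.pr_exists_le _).trans ?_
      have hy : ∀ y : Fin n → Y, pr (iid (iid p)) (fun ω : Fin M → Fin A → Fin n → X =>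
          M * (3 * iid (outDist P W) y + l / κ) ≤
            ∑ m, (A : ℝ)⁻¹ * ∑ a, Wn W n (ω m a) y) ≤ Real.exp (-(M * (l / 3 / κ))) := fun y => by
        have hWle : ∀ x, Wn W n x y ≤ 1 := fun x => by
          simpa using hW.sum_Wn_le_one x {y}
        have hq0 : 0 ≤ iid (outDist P W) y := (hP.outDist hW).iid.1 y
        refine (pr_iid_sum_ge_le hp.iid (f := fun (_ : Fin M) (u : Fin A → Fin n → X) =>
          (A : ℝ)⁻¹ * ∑ a, Wn W n (u a) y) (fun _ u => mul_nonneg (by positivity)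
            (Finset.sum_nonneg fun a _ => hW.Wn_nonneg _ _)) (fun _ u => ?_) ?_).trans ?_
        · rw [inv_mul_le_iff₀ hApos, mul_one]
          simpa using Finset.sum_le_sum fun a (_ : a ∈ Finset.univ) => hWle (u a)
        · have hmean : ∑ u : Fin A → Fin n → X, iid p u * ((A : ℝ)⁻¹ * ∑ a, Wn W n (u a) y)
              = iid (outDist P W) y := by
            calc _ = (A : ℝ)⁻¹ * ∑ a, ∑ u : Fin A → Fin n → X, iid p u * Wn W n (u a) y := by
                  rw [Finset.sum_comm, Finset.mul_sum]
                  refine Finset.sum_congr rfl fun u _ => ?_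
                  rw [← Finset.mul_sum]
                  ring
              _ = _ := by
                  simp only [sum_iid_mul_apply hp _ fun x => Wn W n x y]
                  simp only [hp_def, sum_iid_mul_Wn]
                  simp [hApos.ne']
          rw [hmean, Finset.sum_const, Finset.card_univ, Fintype.card_fin, nsmul_eq_mul,
            mul_div_assoc]
          gcongr
          have : 0 ≤ l / κ := by positivity
          linarith
        · refine Real.exp_le_exp.2 (neg_le_neg ?_)
          rw [mul_div_assoc, add_div, div_right_comm]
          exact mul_le_mul_of_nonneg_left (by linarith) hMpos.le
      refine (Finset.sum_le_sum fun y _ => hy y).trans ?_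
      rw [Finset.sum_const, Finset.card_univ, Fintype.card_fun, Fintype.card_fin, nsmul_eq_mul]
      push_cast
      exact hγ)
    (by linarith)
  set G : Fin M → (Fin n → X) → ℝ := fun m x =>
    (A : ℝ)⁻¹ * ∑ a, if ω m a = x then 1 else 0 with hG_def
  have hGsum : ∀ m (F : (Fin n → X) → ℝ), ∑ x, G m x * F x = (A : ℝ)⁻¹ * ∑ a, F (ω m a) :=
    fun m F => by
      simp only [hG_def, mul_assoc, ← Finset.mul_sum, Finset.sum_mul]
      rw [Finset.sum_comm]
      simp
  refine ⟨G, fun m => D (ω m), ⟨fun m => ⟨fun x => ?_, ?_⟩, fun m => ?_, fun m m' hm => ?_⟩,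
    fun y => ?_⟩
  · exact mul_nonneg (by positivity) (Finset.sum_nonneg fun a _ => by split_ifs <;> norm_num)
  · have := hGsum m fun _ => 1
    simpa [hApos.ne'] using this
  · rw [hGsum m fun x => ∑ z ∈ (D (ω m))ᶜ, Wn V n x z, inv_mul_le_iff₀ hApos]
    refine le_trans (Finset.sum_le_sum fun a _ => ?_) (not_le.1 (hω₁ m)).le
    exact Finset.sum_le_sum_of_subset_of_nonneg
      (Finset.compl_subset_compl.2 (hDmem (ω m) a)) fun z _ _ => hV.Wn_nonneg _ z
  · rw [hGsum m fun x => ∑ z ∈ D (ω m'), Wn V n x z, inv_mul_le_iff₀ hApos]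
    exact (not_le.1 (hω₂ m m' hm)).le
  · rw [inv_mul_le_iff₀ hMpos]
    simp only [hGsum _ fun x => Wn W n x y]
    push Not at hω₃
    exact (hω₃ y).le

end DoublyExponential

/-! ### Feedback encoders -/

section Feedback

variable {X Y Z : Type*}

/-- The probability under `G` that the first `i` letters are `xs`. -/
def initialMass [Fintype X] {n : ℕ} (G : (Fin n → X) → ℝ) (i : ℕ) (xs : Fin i → X) : ℝ :=
  pr G fun x => ∀ (j : Fin n) (h : j.1 < i), x j = xs ⟨j, h⟩

/-- The conditional law under `G` of the next letter given its predecessors `xs`. -/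
def letterKernel [Fintype X] {n : ℕ} (G : (Fin n → X) → ℝ) (i : ℕ) (xs : Fin i → X)
    (a : X) : ℝ :=
  if initialMass G i xs = 0 then (Fintype.card X : ℝ)⁻¹
  else initialMass G (i + 1) (Fin.snoc (α := fun _ => X) xs a) / initialMass G i xs

/-- Send a word drawn from `G`, followed by the word `c` picks based on the feedback so far. -/
def feedbackEncoder [Fintype X] {n k : ℕ} (G : (Fin n → X) → ℝ) (c : (Fin n → Y) → Fin k → X)
    (i : ℕ) (xs : Fin i → X) (ys : Fin i → Y) (a : X) : ℝ :=
  if h : n ≤ i then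
    if h' : i < n + k then
      if a = c (fun j => ys ⟨j, j.2.trans_le h⟩) ⟨i - n, by omega⟩ then 1 else 0
    else 0
  else letterKernel G i xs a

section Kernel

lemma agree_snoc_iff {n i : ℕ} (hi : i < n) (x : Fin n → X) (xs : Fin i → X) (a : X) :
    (∀ (j : Fin n) (h : j.1 < i + 1), x j = Fin.snoc (α := fun _ => X) xs a ⟨j, h⟩) ↔
      (∀ (j : Fin n) (h : j.1 < i), x j = xs ⟨j, h⟩) ∧ x ⟨i, hi⟩ = a := by
  constructor
  · intro H
    refine ⟨fun j h => ?_, ?_⟩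
    · have := H j (by omega)
      simpa [Fin.snoc, h] using this
    · have := H ⟨i, hi⟩ (by simp)
      simpa [Fin.snoc] using this
  · rintro ⟨H, rfl⟩ j h
    by_cases h' : j.1 < i
    · simpa [Fin.snoc, h'] using H j h'
    · have : j = ⟨i, hi⟩ := Fin.ext (by simp; omega)
      subst this
      simp [Fin.snoc]

variable [Fintype X]

lemma sum_initialMass_snoc {n i : ℕ} (hi : i < n) (G : (Fin n → X) → ℝ) (xs : Fin i → X) :
    ∑ a, initialMass G (i + 1) (Fin.snoc (α := fun _ => X) xs a) = initialMass G i xs := by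
  unfold initialMass pr
  rw [Finset.sum_comm]
  refine Finset.sum_congr rfl fun x _ => ?_
  simp only [agree_snoc_iff hi]
  by_cases h : ∀ (j : Fin n) (h : j.1 < i), x j = xs ⟨j, h⟩
  · rw [if_pos h, Finset.sum_eq_single (x ⟨i, hi⟩)]
    · rw [if_pos ⟨h, rfl⟩]
    · exact fun a _ ha => if_neg fun H => ha H.2.symm
    · simp
  · simp [h]

lemma initialMass_nonneg {n : ℕ} {G : (Fin n → X) → ℝ} (hG : IsPMF G) (i : ℕ)
    (xs : Fin i → X) : 0 ≤ initialMass G i xs :=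
  Finset.sum_nonneg fun x _ => by
    have := hG.1 x
    split_ifs <;> simp [this]

lemma isPMF_letterKernel [Nonempty X] {n i : ℕ} (hi : i < n) {G : (Fin n → X) → ℝ}
    (hG : IsPMF G) (xs : Fin i → X) : IsPMF (letterKernel G i xs) := by
  unfold letterKernel
  split_ifs with h
  · exact ⟨fun _ => by positivity, by simp⟩
  · refine ⟨fun a => div_nonneg (initialMass_nonneg hG _ _) (initialMass_nonneg hG _ _), ?_⟩
    rw [← Finset.sum_div, sum_initialMass_snoc hi, div_self h]

lemma isFBEncoder_feedbackEncoder [Nonempty X] {n k : ℕ} {G : (Fin n → X) → ℝ} (hG : IsPMF G)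
    (c : (Fin n → Y) → Fin k → X) : IsFBEncoder (n + k) (feedbackEncoder G c) := by
  intro i hi xs ys
  by_cases h : n ≤ i
  · have : feedbackEncoder G c i xs ys = fun a =>
        if a = c (fun j => ys ⟨j, j.2.trans_le h⟩) ⟨i - n, by omega⟩ then 1 else 0 := by
      funext a
      simp only [feedbackEncoder, dif_pos h, dif_pos hi]
    rw [this]
    exact ⟨fun a => by dsimp only; split_ifs <;> norm_num, by simp⟩
  · have : feedbackEncoder G c i xs ys = letterKernel G i xs := by
      funext a
      simp only [feedbackEncoder, dif_neg h]
    rw [this]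
    exact isPMF_letterKernel (not_le.1 h) hG xs

/-- The chain rule. -/
lemma prod_letterKernel {n : ℕ} {G : (Fin n → X) → ℝ} (hG : IsPMF G) (x : Fin n → X) :
    ∏ i : Fin n, letterKernel G i (fun j : Fin i => x ⟨j, j.2.trans i.2⟩) (x i) = G x := by
  set g : ℕ → ℝ := fun i => pr G fun x' => ∀ j : Fin n, j.1 < i → x' j = x j with hg
  have hpre : ∀ i : Fin n, initialMass G i (fun j : Fin i => x ⟨j, j.2.trans i.2⟩) = g i :=
    fun i => rfl
  have hpre' : ∀ i : Fin n, initialMass G (i + 1) (Fin.snoc (α := fun _ => X)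
      (fun j : Fin i => x ⟨j, j.2.trans i.2⟩) (x i)) = g (i + 1) := fun i => by
    unfold initialMass
    simp only [hg, agree_snoc_iff i.2]
    congr 1
    funext x'
    refine propext ⟨fun ⟨H, H'⟩ j hj => ?_, fun H => ⟨fun j hj => H j (by omega), H i (by omega)⟩⟩
    by_cases h : j.1 < i
    · exact H j h
    · have : j = i := Fin.ext (by omega)
      exact this ▸ H'
  have hker : ∀ i : Fin n, letterKernel G i (fun j : Fin i => x ⟨j, j.2.trans i.2⟩) (x i)
      = if g i = 0 then (Fintype.card X : ℝ)⁻¹ else g (i + 1) / g i := fun i => by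
    unfold letterKernel
    rw [hpre, hpre']
  have hg0 : g 0 = 1 := by simp [hg, pr, hG.2]
  have hgn : g n = G x := by
    have : ∀ x' : Fin n → X, (∀ j : Fin n, j.1 < n → x' j = x j) ↔ x' = x := fun x' =>
      ⟨fun H => funext fun j => H j j.2, fun H j _ => H ▸ rfl⟩
    simp only [hg, this, pr]
    rw [Finset.sum_eq_single x (fun x' _ h => if_neg h) (by simp), if_pos rfl]
  have hgnn : ∀ i, 0 ≤ g i := fun i => Finset.sum_nonneg fun x' _ => by
    have := hG.1 x'
    split_ifs <;> simp [this]
  have hgmono : ∀ i, g (i + 1) ≤ g i := fun i =>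
    hG.pr_mono fun x' H j hj => H j (by omega)
  rw [Finset.prod_congr rfl fun i _ => hker i, Fin.prod_univ_eq_prod_range
    (fun i => if g i = 0 then (Fintype.card X : ℝ)⁻¹ else g (i + 1) / g i) n, ← hgn]
  have htel : ∀ m : ℕ, ∏ i ∈ Finset.range m,
      (if g i = 0 then (Fintype.card X : ℝ)⁻¹ else g (i + 1) / g i) = g m := fun m => by
    induction m with
    | zero => simp [hg0]
    | succ m ih =>
      rw [Finset.prod_range_succ, ih]
      split_ifs with h
      · rw [h, zero_mul]
        exact le_antisymm (hgnn _) (h ▸ hgmono m)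
      · exact mul_div_cancel₀ _ h
  exact htel n

end Kernel

lemma sum_fin_append {S : Type*} [Fintype S] {n k : ℕ} (F : (Fin n → S) → (Fin k → S) → ℝ) :
    ∑ x : Fin (n + k) → S, F (fun i => x (Fin.castAdd k i)) (fun i => x (Fin.natAdd n i)) =
      ∑ x₁, ∑ x₂, F x₁ x₂ := by
  rw [← Fintype.sum_prod_type', ← (Fin.appendEquiv n k).sum_comp]
  simp

lemma sum_prod_eq_Wn_margY [Fintype Z] (W : X → Y → Z → ℝ) {n : ℕ} (x : Fin n → X)
    (y : Fin n → Y) : ∑ z : Fin n → Z, ∏ i, W (x i) (y i) (z i) = Wn (margY W) n x y := by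
  have := Finset.prod_univ_sum (fun _ : Fin n => (Finset.univ : Finset Z))
    (fun i z => W (x i) (y i) z)
  rw [Fintype.piFinset_univ] at this
  exact this.symm

lemma sum_prod_eq_Wn_margZ [Fintype Y] (W : X → Y → Z → ℝ) {n : ℕ} (x : Fin n → X)
    (z : Fin n → Z) : ∑ y : Fin n → Y, ∏ i, W (x i) (y i) (z i) = Wn (margZ W) n x z := by
  have := Finset.prod_univ_sum (fun _ : Fin n => (Finset.univ : Finset Y))
    (fun i y => W (x i) y (z i))
  rw [Fintype.piFinset_univ] at this
  exact this.symm

lemma IsBC.margY [Fintype Y] [Fintype Z] {W : X → Y → Z → ℝ} (hW : IsBC W) :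
    IsChannel (margY W) :=
  ⟨fun x y => Finset.sum_nonneg fun z _ => hW.1 x y z, hW.2⟩

lemma IsBC.margZ [Fintype Y] [Fintype Z] {W : X → Y → Z → ℝ} (hW : IsBC W) :
    IsChannel (margZ W) :=
  ⟨fun x z => Finset.sum_nonneg fun y _ => hW.1 x y z, fun x => by
    unfold _root_.margZ
    rw [Finset.sum_comm]
    exact hW.2 x⟩

lemma fbLaw_feedbackEncoder [Fintype X] {n k : ℕ} {G : (Fin n → X) → ℝ} (hG : IsPMF G)
    (c : (Fin n → Y) → Fin k → X) (W : X → Y → Z → ℝ) (x : Fin (n + k) → X)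
    (y : Fin (n + k) → Y) (z : Fin (n + k) → Z) :
    fbLaw (n + k) W (feedbackEncoder G c) x y z =
      (G (fun i => x (Fin.castAdd k i)) *
        ∏ i, W (x (Fin.castAdd k i)) (y (Fin.castAdd k i)) (z (Fin.castAdd k i))) *
      ((if (fun i => x (Fin.natAdd n i)) = c (fun i => y (Fin.castAdd k i)) then 1 else 0) *
        ∏ i, W (x (Fin.natAdd n i)) (y (Fin.natAdd n i)) (z (Fin.natAdd n i))) := by
  rw [fbLaw, Fin.prod_univ_add, Finset.prod_mul_distrib, Finset.prod_mul_distrib]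
  congr 2
  · rw [← prod_letterKernel hG]
    refine Finset.prod_congr rfl fun i _ => ?_
    have : ¬ n ≤ (Fin.castAdd k i).1 := by simp
    simp only [feedbackEncoder, dif_neg this]
    rfl
  · have : ∀ i : Fin k, feedbackEncoder G c (Fin.natAdd n i).1
        (fun j : Fin (Fin.natAdd n i).1 => x ⟨j.1, j.2.trans (Fin.natAdd n i).2⟩)
        (fun j : Fin (Fin.natAdd n i).1 => y ⟨j.1, j.2.trans (Fin.natAdd n i).2⟩)
        (x (Fin.natAdd n i)) =
        if x (Fin.natAdd n i) = c (fun j => y (Fin.castAdd k j)) i then 1 else 0 := fun i => by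
      have h : n ≤ (Fin.natAdd n i).1 := by simp
      simp only [feedbackEncoder, dif_pos h, dif_pos (Fin.natAdd n i).2]
      have e : (⟨(Fin.natAdd n i).1 - n, by simp⟩ : Fin k) = i := Fin.ext (by simp)
      rw [e]
      rfl
    rw [Finset.prod_congr rfl fun i _ => this i]
    simp only [Finset.prod_ite_zero, Finset.mem_univ, true_implies, Finset.prod_const_one,
      funext_iff]

variable [Fintype X] [Fintype Y] [Fintype Z]

lemma sum_fbLaw_feedbackEncoder {n k : ℕ} {G : (Fin n → X) → ℝ} (hG : IsPMF G)
    (c : (Fin n → Y) → Fin k → X) (W : X → Y → Z → ℝ)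
    (φ : (Fin n → Y) → (Fin k → Y) → (Fin n → Z) → ℝ) :
    ∑ x : Fin (n + k) → X, ∑ y : Fin (n + k) → Y, ∑ z : Fin (n + k) → Z,
      fbLaw (n + k) W (feedbackEncoder G c) x y z *
        φ (fun i => y (Fin.castAdd k i)) (fun i => y (Fin.natAdd n i))
          (fun i => z (Fin.castAdd k i)) =
    ∑ x, ∑ y, ∑ z, G x * (∏ i, W (x i) (y i) (z i)) *
      ∑ y', Wn (margY W) k (c y) y' * φ y y' z := by
  simp only [fbLaw_feedbackEncoder hG]
  have hz : ∀ (x : Fin (n + k) → X) (y : Fin (n + k) → Y), _ = _ := fun x y =>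
    sum_fin_append (S := Z) (n := n) (k := k) fun z₁ z₂ =>
      (G (fun i => x (Fin.castAdd k i)) *
        ∏ i, W (x (Fin.castAdd k i)) (y (Fin.castAdd k i)) (z₁ i)) *
      ((if (fun i => x (Fin.natAdd n i)) = c (fun i => y (Fin.castAdd k i)) then 1 else 0) *
        ∏ i, W (x (Fin.natAdd n i)) (y (Fin.natAdd n i)) (z₂ i)) *
      φ (fun i => y (Fin.castAdd k i)) (fun i => y (Fin.natAdd n i)) z₁
  simp only [hz]
  have hy : ∀ (x : Fin (n + k) → X), _ = _ := fun x =>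
    sum_fin_append (S := Y) (n := n) (k := k) fun y₁ y₂ => ∑ z₁ : Fin n → Z, ∑ z₂ : Fin k → Z,
      (G (fun i => x (Fin.castAdd k i)) *
        ∏ i, W (x (Fin.castAdd k i)) (y₁ i) (z₁ i)) *
      ((if (fun i => x (Fin.natAdd n i)) = c y₁ then 1 else 0) *
        ∏ i, W (x (Fin.natAdd n i)) (y₂ i) (z₂ i)) * φ y₁ y₂ z₁
  simp only [hy]
  rw [sum_fin_append (S := X) (n := n) (k := k) fun x₁ x₂ => ∑ y₁ : Fin n → Y,
      ∑ y₂ : Fin k → Y, ∑ z₁ : Fin n → Z, ∑ z₂ : Fin k → Z,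
      (G x₁ * ∏ i, W (x₁ i) (y₁ i) (z₁ i)) * ((if x₂ = c y₁ then 1 else 0) *
        ∏ i, W (x₂ i) (y₂ i) (z₂ i)) * φ y₁ y₂ z₁]
  refine Finset.sum_congr rfl fun x₁ _ => ?_
  rw [Finset.sum_comm]
  refine Finset.sum_congr rfl fun y₁ _ => ?_
  rw [Finset.sum_eq_single (c y₁) (fun x₂ _ h => by simp [h]) (by simp), Finset.sum_comm]
  refine Finset.sum_congr rfl fun z₁ _ => ?_
  rw [Finset.mul_sum]
  refine Finset.sum_congr rfl fun y₂ _ => ?_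
  rw [← sum_prod_eq_Wn_margY, Finset.sum_mul, Finset.mul_sum]
  refine Finset.sum_congr rfl fun z₂ _ => ?_
  rw [if_pos rfl]
  ring

end Feedback

/-! ### Achievability -/

section Achievability

variable {X Y Z : Type*} [Fintype X] [Fintype Y] [Fintype Z]

section FeedbackCode

variable {n k : ℕ} {W : X → Y → Z → ℝ} {G : (Fin n → X) → ℝ}

lemma sum_fbLaw_feedbackEncoder_filter_left (hG : IsPMF G) (c : (Fin n → Y) → Fin k → X)
    (A : (Fin n → Y) → Finset (Fin k → Y)) :
    ∑ x : Fin (n + k) → X, ∑ y : Fin (n + k) → Y with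
      (fun i => y (Fin.natAdd n i)) ∈ A (fun i => y (Fin.castAdd k i)),
      ∑ z : Fin (n + k) → Z, fbLaw (n + k) W (feedbackEncoder G c) x y z =
    ∑ y, (∑ x, G x * Wn (margY W) n x y) * ∑ y' ∈ A y, Wn (margY W) k (c y) y' := by
  have h := sum_fbLaw_feedbackEncoder hG c W fun y y' _ => if y' ∈ A y then 1 else 0
  simp only [mul_ite, mul_one, mul_zero, Finset.sum_ite_mem, Finset.univ_inter] at h
  calc _ = _ := by
        refine Finset.sum_congr rfl fun x _ => ?_
        rw [Finset.sum_filter]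
        refine Finset.sum_congr rfl fun y _ => ?_
        split_ifs <;> simp
    _ = _ := h
    _ = _ := by
        rw [Finset.sum_comm]
        refine Finset.sum_congr rfl fun y _ => ?_
        rw [Finset.sum_mul]
        refine Finset.sum_congr rfl fun x _ => ?_
        rw [← Finset.sum_mul, ← Finset.mul_sum, sum_prod_eq_Wn_margY]

lemma sum_fbLaw_feedbackEncoder_filter_right (hW : IsBC W) (hG : IsPMF G)
    (c : (Fin n → Y) → Fin k → X) (B : Finset (Fin n → Z)) :
    ∑ x : Fin (n + k) → X, ∑ y : Fin (n + k) → Y, ∑ z : Fin (n + k) → Z with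
      (fun i => z (Fin.castAdd k i)) ∈ B, fbLaw (n + k) W (feedbackEncoder G c) x y z =
    ∑ x, G x * ∑ z ∈ B, Wn (margZ W) n x z := by
  have h := sum_fbLaw_feedbackEncoder hG c W fun _ _ z => if z ∈ B then 1 else 0
  simp only [← Finset.sum_mul, hW.margY.sum_Wn, one_mul] at h
  calc _ = _ := by
        refine Finset.sum_congr rfl fun x _ => Finset.sum_congr rfl fun y _ => ?_
        rw [Finset.sum_filter]
        refine Finset.sum_congr rfl fun z _ => ?_
        rw [mul_ite, mul_one, mul_zero]
    _ = _ := h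
    _ = _ := by
        refine Finset.sum_congr rfl fun x _ => ?_
        rw [Finset.sum_comm, Finset.mul_sum]
        simp only [mul_ite, mul_one, mul_zero]
        rw [← Finset.sum_filter_add_sum_filter_not _ (fun z => z ∈ B)]
        rw [Finset.filter_mem_eq_inter, Finset.univ_inter]
        rw [Finset.sum_eq_zero (s := Finset.univ.filter fun z => ¬ z ∈ B) fun z hz => by
          simp [(Finset.mem_filter.1 hz).2], add_zero]
        refine Finset.sum_congr rfl fun z hz => ?_
        simp only [hz, if_true]
        rw [← Finset.mul_sum, sum_prod_eq_Wn_margZ]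

end FeedbackCode

lemma inv_mul_sum_le {M : ℕ} {F : Fin M → ℝ} {l : ℝ} (hl : 0 ≤ l) (h : ∀ m, F m ≤ l) :
    (M : ℝ)⁻¹ * ∑ m, F m ≤ l := by
  rcases Nat.eq_zero_or_pos M with rfl | hM
  · simpa using hl
  · have hM' : (0 : ℝ) < M := by exact_mod_cast hM
    rw [inv_mul_le_iff₀ hM']
    simpa using Finset.sum_le_sum fun m (_ : m ∈ Finset.univ) => h m

/-- Both receivers are served: the first `n` letters carry the message to `Z`, and the
feedback output hashed by the message to `Y` is announced during the last `k` letters. -/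
lemma isFBIDCode_feedbackEncoder [Nonempty X] [Nonempty Y] {n k kY kZ L : ℕ}
    {W : X → Y → Z → ℝ} (hW : IsBC W) {q : Y → ℝ} {l : ℝ} (hl : 0 ≤ l)
    {G : Fin kZ → (Fin n → X) → ℝ} {D : Fin kZ → Finset (Fin n → Z)}
    (hGD : IsIDCode n (margZ W) G D l l)
    (hmean : ∀ y : Fin n → Y, (kZ : ℝ)⁻¹ * ∑ m, ∑ x, G m x * Wn (margY W) n x y ≤
      3 * iid q y + l / (Fintype.card Y : ℝ) ^ n)
    {c : Fin L → Fin k → X} {E : Fin L → Finset (Fin k → Y)}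
    (hc₁ : ∀ v, ∑ y ∈ (E v)ᶜ, Wn (margY W) k (c v) y ≤ l)
    (hc₂ : ∀ v v', v ≠ v' → ∑ y ∈ E v', Wn (margY W) k (c v) y ≤ l)
    {f : Fin kY → (Fin n → Y) → Fin L}
    (hf : ∀ m m', m ≠ m' → pr (iid q) (fun y => f m y = f m' y) ≤ l) :
    IsFBIDCode (n + k) kY kZ W (fun my mz => feedbackEncoder (G mz) fun y => c (f my y))
      (fun my => Finset.univ.filter fun y : Fin (n + k) → Y =>
        (fun i => y (Fin.natAdd n i)) ∈ E (f my fun i => y (Fin.castAdd k i)))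
      (fun mz => Finset.univ.filter fun z : Fin (n + k) → Z =>
        (fun i => z (Fin.castAdd k i)) ∈ D mz) (5 * l) (5 * l) (5 * l) (5 * l) := by
  have hout : ∀ m y, 0 ≤ ∑ x, G m x * Wn (margY W) n x y := fun m y =>
    Finset.sum_nonneg fun x _ => mul_nonneg ((hGD.1 m).1 x) (hW.margY.Wn_nonneg _ _)
  have hout₁ : ∀ m, ∑ y, ∑ x, G m x * Wn (margY W) n x y = 1 := fun m => by
    rw [Finset.sum_comm]
    simp [← Finset.mul_sum, hW.margY.sum_Wn, (hGD.1 m).2]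
  refine ⟨fun my mz => isFBEncoder_feedbackEncoder (hGD.1 mz) _, fun my => ?_,
    fun my my' hm => ?_, fun mz => ?_, fun mz mz' hm => ?_⟩
  · refine inv_mul_sum_le (by positivity) fun mz => ?_
    have h := sum_fbLaw_feedbackEncoder_filter_left (W := W) (hGD.1 mz) (fun y => c (f my y))
      fun y => (E (f my y))ᶜ
    simp only [Finset.compl_filter, Finset.mem_compl] at h ⊢
    rw [h]
    calc _ ≤ ∑ y, (∑ x, G mz x * Wn (margY W) n x y) * l :=
          Finset.sum_le_sum fun y _ => mul_le_mul_of_nonneg_left (hc₁ _) (hout mz y)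
      _ = l := by rw [← Finset.sum_mul, hout₁, one_mul]
      _ ≤ 5 * l := by linarith
  · have hle : ∀ mz, _ ≤ _ := fun mz =>
      (sum_fbLaw_feedbackEncoder_filter_left (W := W) (hGD.1 mz) (fun y => c (f my y))
        fun y => E (f my' y)).trans_le <| Finset.sum_le_sum fun y _ =>
        mul_le_mul_of_nonneg_left
          (show _ ≤ (if f my y = f my' y then 1 else 0) + l by
            split_ifs with h
            · exact (hW.margY.sum_Wn_le_one _ _).trans (by linarith)
            · simpa using hc₂ _ _ h) (hout mz y)
    have hK : (0 : ℝ) < (Fintype.card Y : ℝ) ^ n := by positivity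
    have hbound : ∀ y : Fin n → Y,
        ((kZ : ℝ)⁻¹ * ∑ m, ∑ x, G m x * Wn (margY W) n x y) *
          (if f my y = f my' y then 1 else 0) ≤
        3 * (if f my y = f my' y then iid q y else 0) + l / (Fintype.card Y : ℝ) ^ n :=
      fun y => by
        split_ifs
        · simpa using hmean y
        · simpa using div_nonneg hl hK.le
    have hsum := Finset.sum_le_sum fun y (_ : y ∈ Finset.univ) => hbound y
    rw [Finset.sum_add_distrib, ← Finset.mul_sum, Finset.sum_const, Finset.card_univ,
      Fintype.card_fun, Fintype.card_fin, nsmul_eq_mul, Nat.cast_pow,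
      mul_div_cancel₀ _ hK.ne'] at hsum
    have hcol : ∑ y, (if f my y = f my' y then iid q y else 0) ≤ l := by
      convert hf my my' hm
      unfold pr
      congr! 2
    calc _ ≤ (kZ : ℝ)⁻¹ * ∑ mz, ∑ y, (∑ x, G mz x * Wn (margY W) n x y) *
            ((if f my y = f my' y then 1 else 0) + l) := by
          gcongr with mz
          exact hle mz
      _ = (∑ y, ((kZ : ℝ)⁻¹ * ∑ m, ∑ x, G m x * Wn (margY W) n x y) *
            (if f my y = f my' y then 1 else 0)) + (kZ : ℝ)⁻¹ * ∑ _mz : Fin kZ, l := by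
          simp only [mul_add, Finset.sum_add_distrib, ← Finset.sum_mul, hout₁, one_mul]
          congr 1
          rw [Finset.sum_comm, Finset.mul_sum]
          refine Finset.sum_congr rfl fun y _ => ?_
          rw [← Finset.sum_mul, mul_assoc]
      _ ≤ (3 * l + l) + l := by
          refine add_le_add (hsum.trans ?_) (inv_mul_sum_le hl fun _ => le_rfl)
          linarith
      _ = 5 * l := by ring
  · refine inv_mul_sum_le (by positivity) fun my => ?_
    have h := sum_fbLaw_feedbackEncoder_filter_right hW (hGD.1 mz) (fun y => c (f my y)) (D mz)ᶜ
    simp only [Finset.compl_filter]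
    simp only [Finset.mem_compl] at h
    rw [h]
    linarith [hGD.2.1 mz]
  · refine inv_mul_sum_le (by positivity) fun my => ?_
    rw [sum_fbLaw_feedbackEncoder_filter_right hW (hGD.1 mz) (fun y => c (f my y)) (D mz')]
    linarith [hGD.2.2 mz mz' hm]

lemma IsFBIDCode.mono {n kY kZ : ℕ} {W : X → Y → Z → ℝ}
    {Q : Fin kY → Fin kZ → (i : ℕ) → (Fin i → X) → (Fin i → Y) → X → ℝ}
    {DY : Fin kY → Finset (Fin n → Y)} {DZ : Fin kZ → Finset (Fin n → Z)} {l a b c d : ℝ}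
    (h : IsFBIDCode n kY kZ W Q DY DZ l l l l) (ha : l ≤ a) (hb : l ≤ b) (hc : l ≤ c)
    (hd : l ≤ d) : IsFBIDCode n kY kZ W Q DY DZ a b c d :=
  ⟨h.1, fun m => (h.2.1 m).trans ha, fun m m' e => (h.2.2.1 m m' e).trans hb,
    fun m => (h.2.2.2.1 m).trans hc, fun m m' e => (h.2.2.2.2 m m' e).trans hd⟩

lemma le_log_log_idSize_eventually {a a' : ℝ} (ha : a < a') (k : ℕ) :
    ∀ᶠ n : ℕ in Filter.atTop,
      a ≤ (1 / ((n + k : ℕ) : ℝ)) * Real.log (Real.log (idSize a' n)) := by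
  filter_upwards [Filter.eventually_ge_atTop 1,
    tendsto_natCast_atTop_atTop.eventually_ge_atTop (k * a / (a' - a))] with n hn1 hn
  rw [div_le_iff₀ (sub_pos.2 ha)] at hn
  have hpos : (0 : ℝ) < ((n + k : ℕ) : ℝ) := by exact_mod_cast (by omega : 0 < n + k)
  have hlog : Real.exp (n * a') ≤ Real.log (idSize a' n) :=
    (Real.le_log_iff_exp_le (by exact_mod_cast idSize_pos a' n)).2 (exp_exp_le_idSize a' n)
  have hlog' : n * a' ≤ Real.log (Real.log (idSize a' n)) :=
    (Real.le_log_iff_exp_le ((Real.exp_pos _).trans_le hlog)).2 hlog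
  rw [one_div, le_inv_mul_iff₀ hpos]
  push_cast
  linarith

/-- The part of the code that serves the receiver with feedback. -/
lemma exists_hash_code [Nonempty X] {P : X → ℝ} {W : X → Y → ℝ} (hP : IsPMF P)
    (hW : IsChannel W) {a l : ℝ} (ha0 : 0 ≤ a) (hl : 0 < l)
    (ha : 0 < a → a < entH (outDist P W) ∧ ∃ P' : X → ℝ, IsPMF P' ∧ 0 < mutInf P' W) :
    ∃ (L k : ℕ) (c : Fin L → Fin k → X) (E : Fin L → Finset (Fin k → Y)),
      (∀ v, ∑ y ∈ (E v)ᶜ, Wn W k (c v) y ≤ l) ∧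
      (∀ v v', v ≠ v' → ∑ y ∈ E v', Wn W k (c v) y ≤ l) ∧
      ∀ᶠ n : ℕ in Filter.atTop, ∃ (kY : ℕ) (f : Fin kY → (Fin n → Y) → Fin L),
        (∀ m m', m ≠ m' → pr (iid (outDist P W)) (fun y => f m y = f m' y) ≤ l) ∧
        (0 < a → a ≤ (1 / ((n + k : ℕ) : ℝ)) * Real.log (Real.log kY)) ∧ (a = 0 → kY = 1) := by
  rcases ha0.eq_or_lt with rfl | hpos
  · refine ⟨1, 0, fun _ => Fin.elim0, fun _ => Finset.univ,
      fun v => by rw [Finset.compl_univ, Finset.sum_empty]; exact hl.le,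
      fun v v' h => absurd (Subsingleton.elim v v') h, .of_forall fun n =>
      ⟨1, fun _ _ => 0, fun m m' h => absurd (Subsingleton.elim m m') h, by simp, by simp⟩⟩
  · obtain ⟨haH, P', hP', hI⟩ := ha hpos
    obtain ⟨a', haa', ha'⟩ := exists_between haH
    obtain ⟨k, c, E, h₁, h₂⟩ := exists_finite_code hP' hW hI ⌈6 / l⌉₊ hl
    refine ⟨_, k, c, E, h₁, h₂, ?_⟩
    filter_upwards [exists_hash (hP.outDist hW) (hpos.trans haa').le ha' hl (Nat.le_ceil _),
      le_log_log_idSize_eventually haa' k] with n ⟨f, hf⟩ hn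
    exact ⟨_, f, hf, fun _ => hn, fun h => absurd h hpos.ne'⟩

/-- The part of the code that serves the receiver without feedback. -/
lemma exists_output_preserving_idCode [Nonempty Y] {P : X → ℝ} {V : X → Z → ℝ} {W : X → Y → ℝ}
    (hP : IsPMF P) (hV : IsChannel V) (hW : IsChannel W) {b l : ℝ} (hb0 : 0 ≤ b) (hl : 0 < l)
    (hb : 0 < b → b < mutInf P V) (k : ℕ) :
    ∀ᶠ n : ℕ in Filter.atTop, ∃ (kZ : ℕ) (G : Fin kZ → (Fin n → X) → ℝ)
      (D : Fin kZ → Finset (Fin n → Z)), IsIDCode n V G D l l ∧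
        (∀ y : Fin n → Y, (kZ : ℝ)⁻¹ * ∑ m, ∑ x, G m x * Wn W n x y ≤
          3 * iid (outDist P W) y + l / (Fintype.card Y : ℝ) ^ n) ∧
        (0 < b → b ≤ (1 / ((n + k : ℕ) : ℝ)) * Real.log (Real.log kZ)) ∧ (b = 0 → kZ = 1) := by
  rcases hb0.eq_or_lt with rfl | hpos
  · refine .of_forall fun n => ⟨1, fun _ => iid P, fun _ => Finset.univ,
      ⟨fun _ => hP.iid, by simp [hl.le], fun m m' h => absurd (Subsingleton.elim m m') h⟩,
      fun y => ?_, by simp, by simp⟩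
    have h0 : 0 ≤ iid (outDist P W) y := (hP.outDist hW).iid.1 y
    have h1 : 0 ≤ l / (Fintype.card Y : ℝ) ^ n := by positivity
    simp only [sum_iid_mul_Wn, Finset.sum_const, Finset.card_univ, Fintype.card_fin, one_smul,
      Nat.cast_one, inv_one, one_mul]
    linarith
  · obtain ⟨b', hbb', hb'⟩ := exists_between (hb hpos)
    filter_upwards [exists_idCode hP hV hW (hpos.trans hbb') hb' hl,
      le_log_log_idSize_eventually hbb' k] with n ⟨G, D, hGD, hmean⟩ hn
    exact ⟨_, G, D, hGD, hmean, fun _ => hn, fun h => absurd h hpos.ne'⟩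

lemma fbAchievable_of_lt [Nonempty X] [Nonempty Y] {W : X → Y → Z → ℝ} (hW : IsBC W)
    {P : X → ℝ} (hP : IsPMF P) {a b : ℝ} (ha0 : 0 ≤ a) (hb0 : 0 ≤ b)
    (ha : 0 < a → a < entH (outDist P (margY W)) ∧
      ∃ P' : X → ℝ, IsPMF P' ∧ 0 < mutInf P' (margY W))
    (hb : 0 < b → b < mutInf P (margZ W)) : FBAchievable W (a, b) := by
  refine ⟨ha0, hb0, fun l₁ l₂ l₃ l₄ h₁ h₂ h₃ h₄ => ?_⟩
  obtain ⟨l, hl, hl₁, hl₂, hl₃, hl₄⟩ : ∃ l : ℝ, 0 < l ∧ 5 * l ≤ l₁ ∧ 5 * l ≤ l₂ ∧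
      5 * l ≤ l₃ ∧ 5 * l ≤ l₄ := by
    refine ⟨min (min l₁ l₂) (min l₃ l₄) / 5, by positivity, ?_, ?_, ?_, ?_⟩ <;>
      rw [mul_div_cancel₀ _ (by norm_num)] <;> simp
  obtain ⟨L, k, c, E, hc₁, hc₂, hY⟩ := exists_hash_code hP hW.margY ha0 hl ha
  obtain ⟨n₀, hn₀⟩ := Filter.eventually_atTop.1
    (hY.and (exists_output_preserving_idCode hP hW.margZ hW.margY hb0 hl hb k))
  refine ⟨n₀ + k, fun N hN => ?_⟩
  obtain ⟨n, rfl⟩ := Nat.exists_eq_add_of_le' (show k ≤ N by omega)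
  obtain ⟨⟨kY, f, hf, hrY⟩, kZ, G, D, hGD, hmean, hrZ⟩ := hn₀ n (by omega)
  exact ⟨kY, kZ, _, _, _, (isFBIDCode_feedbackEncoder hW hl.le hGD hmean hc₁ hc₂ hf).mono
    hl₁ hl₂ hl₃ hl₄, hrY, hrZ⟩

end Achievability

/-- **Theorem 11.** Inner bound on the ID capacity region of the
BC with one-sided feedback from Terminal Y. -/
theorem bc_fb_id_inner_bound
    {X Y Z : Type} [Fintype X] [Fintype Y] [Fintype Z]
    [Nonempty X] [Nonempty Y] [Nonempty Z]
    (W : X → Y → Z → ℝ) (hW : IsBC W) :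
    {p : ℝ × ℝ | 0 ≤ p.1 ∧ 0 ≤ p.2 ∧
        ∃ P : X → ℝ, IsPMF P ∧
          p.1 ≤ (if ∃ P' : X → ℝ, IsPMF P' ∧ 0 < mutInf P' (margY W) then
                    entH (outDist P (margY W)) else 0) ∧
          p.2 ≤ mutInf P (margZ W)}
      ⊆ closure {p : ℝ × ℝ | FBAchievable W p} := by
  rintro ⟨a, b⟩ ⟨ha0, hb0, P, hP, ha, hb⟩
  dsimp only at ha0 hb0 ha hb
  refine Metric.mem_closure_iff.2 fun ε hε => ?_
  refine ⟨(max (a - ε / 2) 0, max (b - ε / 2) 0), fbAchievable_of_lt hW hP (le_max_right _ _)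
    (le_max_right _ _) (fun h => ?_) (fun h => ?_), ?_⟩
  · have h' : 0 < a - ε / 2 := (lt_max_iff.1 h).resolve_right (lt_irrefl _)
    rw [max_eq_left h'.le]
    split_ifs at ha with hP'
    · exact ⟨by linarith, hP'⟩
    · linarith
  · have h' : 0 < b - ε / 2 := (lt_max_iff.1 h).resolve_right (lt_irrefl _)
    rw [max_eq_left h'.le]
    linarith
  · have key : ∀ t : ℝ, 0 ≤ t → |t - max (t - ε / 2) 0| < ε := fun t ht => by
      rw [abs_lt]
      rcases max_cases (t - ε / 2) 0 with ⟨h, _⟩ | ⟨h, _⟩ <;> constructor <;> linarith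
    rw [Prod.dist_eq, Real.dist_eq, Real.dist_eq]
    exact max_lt (key a ha0) (key b hb0)
end
end

section
/- (Theorem 12: outer bound on the ID capacity region of the BC with one-sided feedback.) The ID capacity region 𝒞_{1-fb} of the BC W(y,z|x) with one-sided feedback from Terminal 𝒴 is contained in the set of all rate pairs (R_𝒴, R_𝒵) ∈ [0,∞)² for which some PMF P on 𝒳 satisfies R_𝒴 ≤ H(PW_𝒴)·𝟙{max_{P'} I(P', W_𝒴) > 0} and R_𝒵 ≤ I((X,Y); Z)·𝟙{max_{P'} I(P', W_𝒵) > 0}, where I((X,Y); Z) is the mutual information between the pair (X,Y) and Z when (X,Y,Z) has joint law P(x)·W(y,z|x). -/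
open scoped Classical
open Finset

noncomputable section

/-- Mutual information `I((X,Y); Z)` when `(X,Y,Z)` has joint law
`P(x) W(y,z|x)` (natural logarithm, zero terms by convention). -/
def mutInfXY_Z {X Y Z : Type*} [Fintype X] [Fintype Y] [Fintype Z]
    (P : X → ℝ) (W : X → Y → Z → ℝ) : ℝ :=
  ∑ x, ∑ y, ∑ z,
    if P x * W x y z = 0 then 0
    else P x * W x y z *
      Real.log ((P x * W x y z) /
        (P x * margY W x y * ∑ x', ∑ y', P x' * W x' y' z))

/-- The law on `Ω ^ n` generated by the history-dependent kernels `κ i`. -/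
def seqLaw {Ω : Type*} (κ : (i : ℕ) → (Fin i → Ω) → Ω → ℝ) (n : ℕ) (ω : Fin n → Ω) : ℝ :=
  ∏ i : Fin n, κ i.1 (fun j : Fin i.1 => ω ⟨j.1, lt_trans j.isLt i.isLt⟩) (ω i)

lemma seqLaw_snoc {Ω : Type*} (κ : (i : ℕ) → (Fin i → Ω) → Ω → ℝ) (n : ℕ) (ω : Fin n → Ω)
    (a : Ω) : seqLaw κ (n + 1) (Fin.snoc (α := fun _ => Ω) ω a) = seqLaw κ n ω * κ n ω a := by
  unfold seqLaw
  rw [Fin.prod_univ_castSucc]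
  congr 1
  · refine Finset.prod_congr rfl fun i _ => ?_
    congr 1
    · funext j
      exact Fin.snoc_castSucc (α := fun _ => Ω) a ω ⟨j.1, lt_trans j.isLt i.isLt⟩
    · exact Fin.snoc_castSucc (α := fun _ => Ω) a ω i
  · congr 1
    · funext j
      exact Fin.snoc_castSucc (α := fun _ => Ω) a ω ⟨j.1, j.isLt⟩
    · exact Fin.snoc_last (α := fun _ => Ω) a ω

lemma sum_snoc {Ω : Type*} [Fintype Ω] (n : ℕ) (F : (Fin (n + 1) → Ω) → ℝ) :
    ∑ ω, F ω = ∑ ω : Fin n → Ω, ∑ a, F (Fin.snoc (α := fun _ => Ω) ω a) := by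
  rw [← (Fin.snocEquiv (fun _ : Fin (n + 1) => Ω)).sum_comp, Fintype.sum_prod_type, Finset.sum_comm]
  rfl

lemma seqLaw_nonneg {Ω : Type*} {κ : (i : ℕ) → (Fin i → Ω) → Ω → ℝ} {n : ℕ}
    (h : ∀ i < n, ∀ s a, 0 ≤ κ i s a) (ω : Fin n → Ω) : 0 ≤ seqLaw κ n ω :=
  Finset.prod_nonneg fun i _ => h i.1 i.isLt _ _

lemma sum_seqLaw_mul_prod {Ω : Type*} [Fintype Ω] {κ : (i : ℕ) → (Fin i → Ω) → Ω → ℝ} {n : ℕ}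
    (g : Fin n → Ω → ℝ) (c : Fin n → ℝ)
    (h : ∀ (i : Fin n) (s : Fin i.1 → Ω), ∑ a, κ i.1 s a * g i a = c i) :
    ∑ ω, seqLaw κ n ω * ∏ i, g i (ω i) = ∏ i, c i := by
  induction n with
  | zero => simp [seqLaw]
  | succ n ih =>
    rw [sum_snoc, Fin.prod_univ_castSucc, ← ih (fun i => g i.castSucc) (fun i => c i.castSucc)
      (fun i s => h i.castSucc s), Finset.sum_mul]
    refine Finset.sum_congr rfl fun ω _ => ?_
    rw [← h (Fin.last n) ω, Finset.mul_sum]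
    refine Finset.sum_congr rfl fun a _ => ?_
    rw [seqLaw_snoc, Fin.prod_univ_castSucc]
    simp only [Fin.snoc_castSucc, Fin.snoc_last, Fin.val_last]
    ring

lemma sum_seqLaw {Ω : Type*} [Fintype Ω] {κ : (i : ℕ) → (Fin i → Ω) → Ω → ℝ} {n : ℕ}
    (h : ∀ i < n, ∀ s, ∑ a, κ i s a = 1) : ∑ ω, seqLaw κ n ω = 1 := by
  simpa using sum_seqLaw_mul_prod (κ := κ) (n := n) (fun _ _ => 1) (fun _ => 1)
    (fun i s => by simpa using h i.1 i.isLt s)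

/-- Second moment bound for sums of martingale differences. -/
lemma sum_seqLaw_mul_sq_le {Ω : Type*} [Fintype Ω] {κ : (i : ℕ) → (Fin i → Ω) → Ω → ℝ} {n : ℕ}
    (h0 : ∀ i < n, ∀ s a, 0 ≤ κ i s a) (h1 : ∀ i < n, ∀ s, ∑ a, κ i s a = 1)
    (g : Ω → ℝ) (v : ℝ) (hg : ∀ i < n, ∀ s, ∑ a, κ i s a * g a = 0)
    (hv : ∀ i < n, ∀ s, ∑ a, κ i s a * g a ^ 2 ≤ v) :
    ∑ ω, seqLaw κ n ω * (∑ i, g (ω i)) ^ 2 ≤ n * v := by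
  induction n with
  | zero => simp
  | succ n ih =>
    have ih := ih (fun i hi => h0 i (by omega)) (fun i hi => h1 i (by omega))
      (fun i hi => hg i (by omega)) (fun i hi => hv i (by omega))
    have hL := sum_seqLaw (κ := κ) (n := n) (fun i hi => h1 i (by omega))
    have hLn := seqLaw_nonneg (κ := κ) (n := n) (fun i hi => h0 i (by omega))
    have key : ∀ ω : Fin n → Ω,
        ∑ a, seqLaw κ (n + 1) (Fin.snoc (α := fun _ => Ω) ω a) *
          (∑ i, g (Fin.snoc (α := fun _ => Ω) ω a i)) ^ 2
        = seqLaw κ n ω * (∑ i, g (ω i)) ^ 2 + seqLaw κ n ω * ∑ a, κ n ω a * g a ^ 2 := by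
      intro ω
      set S := ∑ i, g (ω i) with hS
      have e : ∀ a, seqLaw κ (n + 1) (Fin.snoc (α := fun _ => Ω) ω a) *
          (∑ i, g (Fin.snoc (α := fun _ => Ω) ω a i)) ^ 2
          = seqLaw κ n ω * S ^ 2 * κ n ω a + 2 * seqLaw κ n ω * S * (κ n ω a * g a)
            + seqLaw κ n ω * (κ n ω a * g a ^ 2) := by
        intro a
        rw [seqLaw_snoc, Fin.sum_univ_castSucc]
        simp only [Fin.snoc_castSucc, Fin.snoc_last]
        rw [← hS]
        ring
      simp_rw [e, Finset.sum_add_distrib, ← Finset.mul_sum]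
      rw [h1 n (by omega), hg n (by omega)]
      ring
    rw [sum_snoc]
    simp_rw [key]
    rw [Finset.sum_add_distrib]
    have : ∑ ω, seqLaw κ n ω * ∑ a, κ n ω a * g a ^ 2 ≤ ∑ ω, seqLaw κ n ω * v :=
      Finset.sum_le_sum fun ω _ => mul_le_mul_of_nonneg_left (hv n (by omega) ω) (hLn ω)
    rw [← Finset.sum_mul, hL] at this
    push_cast
    linarith

/-- Empirical averages of `M` samples approximate the mean output of a channel in total variation
as soon as the density of the channel is bounded by a constant below `M`. -/
lemma exists_sample_approx {Ω T : Type*} [Fintype Ω] [Fintype T] {p : Ω → ℝ} (hp : IsPMF p)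
    {V : Ω → T → ℝ} (hV : ∀ a t, 0 ≤ V a t) {q : T → ℝ} (hq0 : ∀ t, 0 ≤ q t) (hq : ∑ t, q t ≤ 1)
    (hV1 : ∀ a, ∑ t, V a t ≤ 1)
    {Λ : ℝ} (hΛ : 0 ≤ Λ) (hVq : ∀ a t, V a t ≤ Λ * q t) {M : ℕ} (hM : 0 < M) :
    ∃ u : Fin M → Ω, ∑ t, |(M : ℝ)⁻¹ * ∑ j, V (u j) t - ∑ a, p a * V a t| ≤ √(Λ / M) := by
  by_contra hcon
  push Not at hcon
  set L : (Fin M → Ω) → ℝ := seqLaw (fun _ _ => p) M with hL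
  have hLn : ∀ u, 0 ≤ L u := fun u => seqLaw_nonneg (fun _ _ _ a => hp.1 a) u
  have hLs : ∑ u, L u = 1 := sum_seqLaw (fun _ _ _ => hp.2)
  have hM' : (0 : ℝ) < M := by exact_mod_cast hM
  set ν : T → ℝ := fun t => ∑ a, p a * V a t with hν
  have hνn : ∀ t, 0 ≤ ν t := fun t => Finset.sum_nonneg fun a _ => mul_nonneg (hp.1 a) (hV a t)
  have hνs : ∑ t, ν t ≤ 1 := by
    rw [hν, Finset.sum_comm]
    calc _ = ∑ a, p a * ∑ t, V a t := by simp_rw [Finset.mul_sum]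
      _ ≤ ∑ a, p a * 1 := Finset.sum_le_sum fun a _ => mul_le_mul_of_nonneg_left (hV1 a) (hp.1 a)
      _ = 1 := by simpa using hp.2
  have hsq : ∀ t, ∑ u, L u * ((M : ℝ)⁻¹ * ∑ j, V (u j) t - ν t) ^ 2 ≤ Λ / M * (q t * ν t) := by
    intro t
    have h := sum_seqLaw_mul_sq_le (κ := fun _ _ => p) (n := M) (fun _ _ _ a => hp.1 a)
      (fun _ _ _ => hp.2) (fun a => V a t - ν t) (Λ * (q t * ν t))
      (fun _ _ _ => by simp [mul_sub, Finset.sum_sub_distrib, ← Finset.sum_mul, hp.2, hν])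
      (fun _ _ _ => by
        have e : ∑ a, p a * (V a t - ν t) ^ 2 = ∑ a, p a * V a t ^ 2 - ν t ^ 2 := by
          have : ∀ a, p a * (V a t - ν t) ^ 2
              = p a * V a t ^ 2 - 2 * ν t * (p a * V a t) + ν t ^ 2 * p a := fun a => by ring
          simp_rw [this, Finset.sum_add_distrib, Finset.sum_sub_distrib, ← Finset.mul_sum, hp.2]
          simp only [hν]; ring
        have e2 : ∑ a, p a * V a t ^ 2 ≤ Λ * (q t * ν t) := by
          simp only [hν, Finset.mul_sum]
          refine Finset.sum_le_sum fun a _ => ?_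
          have := mul_le_mul_of_nonneg_left (hVq a t) (mul_nonneg (hp.1 a) (hV a t))
          nlinarith
        rw [e]; nlinarith [sq_nonneg (ν t)])
    have e : ∀ u : Fin M → Ω, L u * ((M : ℝ)⁻¹ * ∑ j, V (u j) t - ν t) ^ 2
        = ((M : ℝ)⁻¹) ^ 2 * (L u * (∑ j, (V (u j) t - ν t)) ^ 2) := by
      intro u
      rw [Finset.sum_sub_distrib]
      simp only [Finset.sum_const, Finset.card_univ, Fintype.card_fin, nsmul_eq_mul]
      field_simp
    simp_rw [e, ← Finset.mul_sum]
    calc _ ≤ ((M : ℝ)⁻¹) ^ 2 * (M * (Λ * (q t * ν t))) := by gcongr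
      _ = _ := by field_simp
  have habs : ∀ t, ∑ u, L u * |(M : ℝ)⁻¹ * ∑ j, V (u j) t - ν t| ≤ √(Λ / M) * (√(q t) * √(ν t)) := by
    intro t
    rw [← Real.sqrt_mul (hq0 t), ← Real.sqrt_mul (by positivity)]
    refine Real.le_sqrt_of_sq_le (le_trans ?_ (hsq t))
    have := Finset.sum_mul_sq_le_sq_mul_sq Finset.univ (fun u => √(L u))
      (fun u => √(L u) * |(M : ℝ)⁻¹ * ∑ j, V (u j) t - ν t|)
    simp only [← mul_assoc, Real.mul_self_sqrt (hLn _), mul_pow, Real.sq_sqrt (hLn _), sq_abs, hLs,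
      one_mul] at this
    exact this
  have hcs : ∑ t, √(q t) * √(ν t) ≤ 1 := by
    refine (Real.sum_sqrt_mul_sqrt_le _ hq0 hνn).trans ?_
    calc _ ≤ √1 * √1 := by gcongr
      _ = 1 := by simp
  have htot : ∑ u, L u * ∑ t, |(M : ℝ)⁻¹ * ∑ j, V (u j) t - ν t| ≤ √(Λ / M) := by
    have e : ∑ u, L u * ∑ t, |(M : ℝ)⁻¹ * ∑ j, V (u j) t - ν t|
        = ∑ t, ∑ u, L u * |(M : ℝ)⁻¹ * ∑ j, V (u j) t - ν t| := by
      rw [Finset.sum_comm]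
      exact Finset.sum_congr rfl fun u _ => Finset.mul_sum _ _ _
    rw [e]
    calc _ ≤ ∑ t, √(Λ / M) * (√(q t) * √(ν t)) := Finset.sum_le_sum fun t _ => habs t
      _ = √(Λ / M) * ∑ t, √(q t) * √(ν t) := by rw [Finset.mul_sum]
      _ ≤ √(Λ / M) * 1 := by gcongr
      _ = _ := mul_one _
  obtain ⟨u, hu⟩ : ∃ u, 0 < L u := by
    by_contra! h
    have := Finset.sum_nonpos (s := Finset.univ) fun u _ => h u
    linarith
  have : ∑ u, L u * √(Λ / M) < ∑ u, L u * ∑ t, |(M : ℝ)⁻¹ * ∑ j, V (u j) t - ν t| :=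
    Finset.sum_lt_sum (fun u _ => mul_le_mul_of_nonneg_left (hcon u).le (hLn u))
      ⟨u, Finset.mem_univ _, mul_lt_mul_of_pos_left (hcon u) hu⟩
  rw [← Finset.sum_mul, hLs, one_mul] at this
  linarith

lemma card_le_two_pow_of_separated {B ι : Type*} [Fintype B] [DecidableEq B] {𝓜 : Finset ι} {μ : ι → B → ℝ}
    (hμ : ∀ m b, 0 ≤ μ m b) {D : ι → Finset B} {l1 l2 a : ℝ}
    (h1 : ∀ m, ∑ b ∈ (D m)ᶜ, μ m b ≤ l1)
    (h2 : ∀ m m', m ≠ m' → ∑ b ∈ D m', μ m b ≤ l2)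
    {E : Finset B} (hE : ∀ m ∈ 𝓜, a ≤ ∑ b ∈ E, μ m b) (ha : l1 + l2 < a) :
    𝓜.card ≤ 2 ^ E.card := by
  rw [← Finset.card_powerset]
  refine Finset.card_le_card_of_injOn (fun m => E ∩ D m) (fun m _ => by simp) ?_
  intro m hm m' _ he
  by_contra hne
  simp only at he
  have e := Finset.sum_inter_add_sum_sdiff E (D m) (μ m)
  have b1 : ∑ b ∈ E ∩ D m, μ m b ≤ ∑ b ∈ D m', μ m b := by
    rw [he]
    exact Finset.sum_le_sum_of_subset_of_nonneg Finset.inter_subset_right fun b _ _ => hμ m b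
  have b2 : ∑ b ∈ E \ D m, μ m b ≤ ∑ b ∈ (D m)ᶜ, μ m b :=
    Finset.sum_le_sum_of_subset_of_nonneg
      (fun b hb => by simp only [Finset.mem_sdiff, Finset.mem_compl] at hb ⊢; exact hb.2)
      fun b _ _ => hμ m b
  linarith [h1 m, h2 m m' hne, hE m hm]

lemma card_le_pow_of_separated {Ω T ι : Type*} [Fintype Ω] [Fintype T]
    [DecidableEq T] {𝓜 : Finset ι}
    {p : ι → Ω → ℝ} (hp : ∀ m, IsPMF (p m)) {V : Ω → T → ℝ} (hV : ∀ a t, 0 ≤ V a t)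
    (hV1 : ∀ a, ∑ t, V a t ≤ 1) {q : T → ℝ} (hq0 : ∀ t, 0 ≤ q t) (hq : ∑ t, q t ≤ 1)
    {Λ : ℝ} (hΛ : 0 ≤ Λ) (hVq : ∀ a t, V a t ≤ Λ * q t) {M : ℕ} (hM : 0 < M)
    {D : ι → Finset T} {l1 l2 a : ℝ}
    (h1 : ∀ m, ∑ t ∈ (D m)ᶜ, ∑ x, p m x * V x t ≤ l1)
    (h2 : ∀ m m', m ≠ m' → ∑ t ∈ D m', ∑ x, p m x * V x t ≤ l2)
    (hE : ∀ m ∈ 𝓜, a ≤ ∑ t, ∑ x, p m x * V x t) (ha : l1 + l2 + 2 * √(Λ / M) < a) :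
    𝓜.card ≤ Fintype.card Ω ^ M := by
  choose u hu using fun m => exists_sample_approx (hp m) hV hq0 hq hV1 hΛ hVq hM
  have : Fintype.card (Fin M → Ω) = Fintype.card Ω ^ M := by simp
  rw [← this, ← Finset.card_univ]
  refine Finset.card_le_card_of_injOn u (fun m _ => by simp) ?_
  intro m hm m' _ he
  by_contra hne
  have b := hu m'
  rw [← he] at b
  have e := Finset.sum_add_sum_compl (D m) (fun t => ∑ x, p m x * V x t)
  have c : ∑ t ∈ D m, ∑ x, p m x * V x t - ∑ t ∈ D m, ∑ x, p m' x * V x t ≤ 2 * √(Λ / M) := by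
    rw [← Finset.sum_sub_distrib, two_mul]
    refine le_trans ?_ (add_le_add (hu m) b)
    rw [← Finset.sum_add_distrib]
    refine le_trans (Finset.sum_le_sum fun t _ => ?_)
      (Finset.sum_le_sum_of_subset_of_nonneg (Finset.subset_univ (D m)) fun t _ _ => by positivity)
    set S := (M : ℝ)⁻¹ * ∑ j, V (u m j) t
    linarith [neg_abs_le (S - ∑ x, p m x * V x t), le_abs_self (S - ∑ x, p m' x * V x t)]
  linarith [h1 m, h2 m' m (Ne.symm hne), hE m hm]

lemma exists_mem_le_average {ι : Type*} {t : Finset ι} {kY kZ : ℕ} (hY : 0 < kY) (hZ : 0 < kZ)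
    (ht : t.Nonempty)
    {w : ι → Fin kY → Fin kZ → ℝ} (hw : ∀ my mz, 1 ≤ ∑ P ∈ t, w P my mz) :
    ∃ P ∈ t, (t.card : ℝ)⁻¹ ≤ (kY : ℝ)⁻¹ * ∑ my, (kZ : ℝ)⁻¹ * ∑ mz, w P my mz := by
  have hY' : (0 : ℝ) < kY := by exact_mod_cast hY
  have hZ' : (0 : ℝ) < kZ := by exact_mod_cast hZ
  have ht' : (0 : ℝ) < t.card := by exact_mod_cast ht.card_pos
  refine Finset.exists_le_of_sum_le ht ?_
  rw [Finset.sum_const, nsmul_eq_mul, mul_inv_cancel₀ ht'.ne', ← Finset.mul_sum, Finset.sum_comm]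
  have h : ∀ my, 1 ≤ ∑ P ∈ t, (kZ : ℝ)⁻¹ * ∑ mz, w P my mz := by
    intro my
    rw [← Finset.mul_sum, Finset.sum_comm]
    calc (1 : ℝ) = (kZ : ℝ)⁻¹ * ∑ _mz : Fin kZ, 1 := by simp [hZ'.ne']
      _ ≤ _ := by gcongr with mz; exact hw my mz
  calc (1 : ℝ) = (kY : ℝ)⁻¹ * ∑ _my : Fin kY, 1 := by simp [hY'.ne']
    _ ≤ _ := by gcongr with my; exact h my

lemma le_card_filter_half_le {k : ℕ} (hk : 0 < k) {g : Fin k → ℝ} (hg : ∀ m, g m ≤ 1) {c : ℝ}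
    (hc0 : 0 ≤ c) (hc : c ≤ (k : ℝ)⁻¹ * ∑ m, g m) :
    c / 2 * k ≤ ((Finset.univ.filter fun m => c / 2 ≤ g m).card : ℝ) := by
  have hk' : (0 : ℝ) < k := by exact_mod_cast hk
  have h1 : ∑ m, g m ≤ ∑ m, ((if c / 2 ≤ g m then (1 : ℝ) else 0) + c / 2) := by
    refine Finset.sum_le_sum fun m _ => ?_
    split_ifs with h
    · linarith [hg m]
    · linarith
  rw [Finset.sum_add_distrib, Finset.sum_boole] at h1
  simp only [Finset.sum_const, Finset.card_univ, Fintype.card_fin, nsmul_eq_mul] at h1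
  rw [inv_mul_eq_div, le_div_iff₀ hk'] at hc
  linarith

lemma exp_le_log_of_le_log_log {R : ℝ} {n k : ℕ} (hR : 0 < R)
    (h : R ≤ (1 / n) * Real.log (Real.log k)) :
    0 < n ∧ 3 ≤ k ∧ Real.exp (n * R) ≤ Real.log k := by
  have hn : 0 < n := by
    rcases Nat.eq_zero_or_pos n with rfl | h0
    · simp at h; linarith
    · exact h0
  have hn' : (0 : ℝ) < n := by exact_mod_cast hn
  have h2 : n * R ≤ Real.log (Real.log k) := by
    rw [one_div, inv_mul_eq_div, le_div_iff₀ hn'] at h; linarith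
  have h3 : 0 < Real.log (Real.log k) := lt_of_lt_of_le (by positivity) h2
  have h4 : 0 ≤ Real.log k := Real.log_natCast_nonneg k
  have h5 : 1 < Real.log k := by
    by_contra! hc
    linarith [Real.log_nonpos h4 hc]
  refine ⟨hn, ?_, ?_⟩
  · by_contra! hc
    have : (k : ℝ) ≤ 2 := by exact_mod_cast Nat.lt_succ_iff.mp hc
    rcases Nat.eq_zero_or_pos k with rfl | hk
    · simp at h5; linarith
    have := Real.log_le_log (by exact_mod_cast hk) this
    linarith [Real.log_two_lt_d9]
  · rw [← Real.le_log_iff_exp_le (by linarith)]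
    exact h2

/-- The one-step kernel on `X × Y × Z` of a feedback encoder used over the channel `W`. -/
def fbKer {X Y Z : Type*} (W : X → Y → Z → ℝ)
    (Q : (i : ℕ) → (Fin i → X) → (Fin i → Y) → X → ℝ) (i : ℕ) (s : Fin i → X × Y × Z)
    (a : X × Y × Z) : ℝ :=
  Q i (fun j => (s j).1) (fun j => (s j).2.1) a.1 * W a.1 a.2.1 a.2.2

lemma sum_triple_eq {X Y Z : Type*} [Fintype X] [Fintype Y] [Fintype Z] {n : ℕ}
    (F : (Fin n → X) → (Fin n → Y) → (Fin n → Z) → ℝ) :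
    ∑ x, ∑ y, ∑ z, F x y z
      = ∑ ω : Fin n → X × Y × Z, F (fun i => (ω i).1) (fun i => (ω i).2.1) (fun i => (ω i).2.2) := by
  rw [← (Equiv.arrowProdEquivProdArrow (Fin n) (fun _ => X) (fun _ => Y × Z)).symm.sum_comp,
    Fintype.sum_prod_type]
  refine Finset.sum_congr rfl fun x _ => ?_
  rw [← (Equiv.arrowProdEquivProdArrow (Fin n) (fun _ => Y) (fun _ => Z)).symm.sum_comp,
    Fintype.sum_prod_type]
  rfl

section FeedbackLaw

variable {X Y Z : Type*} [Fintype X] [Fintype Y] [Fintype Z] {W : X → Y → Z → ℝ} {n : ℕ}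
  {Q : (i : ℕ) → (Fin i → X) → (Fin i → Y) → X → ℝ}

lemma fbKer_nonneg (hW : IsBC W) (hQ : IsFBEncoder n Q) :
    ∀ i < n, ∀ (s : Fin i → X × Y × Z) a, 0 ≤ fbKer W Q i s a :=
  fun i hi _ _ => mul_nonneg ((hQ i hi _ _).1 _) (hW.1 _ _ _)

lemma sum_fbKer_mul {i : ℕ} (s : Fin i → X × Y × Z) (g : X → Y → Z → ℝ) :
    ∑ a, fbKer W Q i s a * g a.1 a.2.1 a.2.2
      = ∑ x, Q i (fun j => (s j).1) (fun j => (s j).2.1) x * ∑ y, ∑ z, W x y z * g x y z := by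
  simp only [fbKer, Fintype.sum_prod_type, Finset.mul_sum, mul_assoc]

lemma sum_fbKer (hW : IsBC W) (hQ : IsFBEncoder n Q) :
    ∀ i < n, ∀ s : Fin i → X × Y × Z, ∑ a, fbKer W Q i s a = 1 := by
  intro i hi s
  have := sum_fbKer_mul (W := W) (Q := Q) s (fun _ _ _ => 1)
  simp only [mul_one, hW.2, (hQ i hi _ _).2] at this
  exact this

lemma fbLaw_nonneg (hW : IsBC W) (hQ : IsFBEncoder n Q) (x : Fin n → X) (y : Fin n → Y)
    (z : Fin n → Z) : 0 ≤ fbLaw n W Q x y z :=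
  Finset.prod_nonneg fun i _ => mul_nonneg ((hQ i.1 i.isLt _ _).1 _) (hW.1 _ _ _)

lemma sum_fbLaw (hW : IsBC W) (hQ : IsFBEncoder n Q) :
    ∑ x, ∑ y, ∑ z, fbLaw n W Q x y z = 1 := by
  rw [sum_triple_eq]
  exact sum_seqLaw (sum_fbKer hW hQ)

lemma sum_fbLaw_of_margZ_const (hQ : IsFBEncoder n Q) {q : Z → ℝ}
    (h : ∀ x z, margZ W x z = q z) (z : Fin n → Z) :
    ∑ x, ∑ y, fbLaw n W Q x y z = ∏ i, q (z i) := by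
  have h1 := sum_seqLaw_mul_prod (κ := fbKer W Q) (n := n)
    (fun i a => if a.2.2 = z i then (1 : ℝ) else 0) (fun i => q (z i)) (by
      intro i s
      rw [sum_fbKer_mul s (fun _ _ w => if w = z i then (1 : ℝ) else 0)]
      have : ∀ x, ∑ y, ∑ w, W x y w * (if w = z i then (1 : ℝ) else 0) = q (z i) := by
        intro x
        rw [← h x]
        simp [margZ]
      simp_rw [this, ← Finset.sum_mul, (hQ i.1 i.isLt _ _).2, one_mul])
  rw [← h1]
  have := sum_triple_eq (fun x y w => fbLaw n W Q x y w *
    ∏ i, (if w i = z i then (1 : ℝ) else 0))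
  refine Eq.trans ?_ this
  simp only [Fintype.prod_boole, ← funext_iff]
  simp

lemma sum_fbLaw_of_margY_const (hQ : IsFBEncoder n Q) {q : Y → ℝ}
    (h : ∀ x y, margY W x y = q y) (y : Fin n → Y) :
    ∑ x, ∑ z, fbLaw n W Q x y z = ∏ i, q (y i) := by
  have h1 := sum_seqLaw_mul_prod (κ := fbKer W Q) (n := n)
    (fun i a => if a.2.1 = y i then (1 : ℝ) else 0) (fun i => q (y i)) (by
      intro i s
      rw [sum_fbKer_mul s (fun _ w _ => if w = y i then (1 : ℝ) else 0)]
      have : ∀ x, ∑ w, ∑ z, W x w z * (if w = y i then (1 : ℝ) else 0) = q (y i) := by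
        intro x
        rw [← h x]
        simp [margY]
      simp_rw [this, ← Finset.sum_mul, (hQ i.1 i.isLt _ _).2, one_mul])
  rw [← h1]
  have := sum_triple_eq (fun x w z => fbLaw n W Q x w z *
    ∏ i, (if w i = y i then (1 : ℝ) else 0))
  refine Eq.trans ?_ this
  simp only [Fintype.prod_boole, ← funext_iff]
  refine Finset.sum_congr rfl fun x _ => ?_
  rw [Finset.sum_comm]
  simp

/-- A weak law of large numbers for additive functionals under a feedback law. -/
lemma sum_fbLaw_deviation_le (hW : IsBC W) (hQ : IsFBEncoder n Q) (φ : X → Y → Z → ℝ)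
    {Φ : X → ℝ} (hΦ : ∀ x, Φ x = ∑ y, ∑ z, W x y z * φ x y z) {ε : ℝ} (hε : 0 < ε) (hn : 0 < n) :
    ∑ x : Fin n → X, ∑ y : Fin n → Y, ∑ z : Fin n → Z,
      (if n * ε ≤ ∑ i, φ (x i) (y i) (z i) - ∑ i, Φ (x i) then fbLaw n W Q x y z else 0)
      ≤ (∑ x, ∑ y, ∑ z, W x y z * (φ x y z - Φ x) ^ 2) / ε ^ 2 / n := by
  set C := ∑ x, ∑ y, ∑ z, W x y z * (φ x y z - Φ x) ^ 2 with hC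
  have hn' : (0 : ℝ) < n := by exact_mod_cast hn
  have hc : ∀ x, 0 ≤ ∑ y, ∑ z, W x y z * (φ x y z - Φ x) ^ 2 := fun x =>
    Finset.sum_nonneg fun y _ => Finset.sum_nonneg fun z _ => mul_nonneg (hW.1 _ _ _) (sq_nonneg _)
  have hv := sum_seqLaw_mul_sq_le (fbKer_nonneg hW hQ) (sum_fbKer hW hQ)
    (fun a : X × Y × Z => φ a.1 a.2.1 a.2.2 - Φ a.1) C
    (fun i hi s => by
      rw [sum_fbKer_mul s (fun x y z => φ x y z - Φ x)]
      refine Finset.sum_eq_zero fun x _ => ?_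
      simp_rw [mul_sub, Finset.sum_sub_distrib, ← hΦ, ← Finset.sum_mul, hW.2]
      simp)
    (fun i hi s => by
      rw [sum_fbKer_mul s (fun x y z => (φ x y z - Φ x) ^ 2)]
      refine Finset.sum_le_sum fun x _ => mul_le_of_le_one_left (hc x) ?_
      rw [← (hQ i hi (fun j => (s j).1) (fun j => (s j).2.1)).2]
      exact Finset.single_le_sum (fun x _ => (hQ i hi _ _).1 x) (Finset.mem_univ x))
  have hv' : ∑ x : Fin n → X, ∑ y : Fin n → Y, ∑ z : Fin n → Z, fbLaw n W Q x y z *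
      (∑ i, (φ (x i) (y i) (z i) - Φ (x i))) ^ 2 ≤ n * C := by
    rw [sum_triple_eq]
    exact hv
  have : (n * ε) ^ 2 * ∑ x : Fin n → X, ∑ y : Fin n → Y, ∑ z : Fin n → Z,
      (if n * ε ≤ ∑ i, φ (x i) (y i) (z i) - ∑ i, Φ (x i) then fbLaw n W Q x y z else 0)
      ≤ n * C := by
    refine le_trans ?_ hv'
    simp_rw [Finset.mul_sum]
    refine Finset.sum_le_sum fun x _ => Finset.sum_le_sum fun y _ => Finset.sum_le_sum fun z _ => ?_
    have hl := fbLaw_nonneg hW hQ x y z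
    rw [Finset.sum_sub_distrib]
    split_ifs with h
    · rw [mul_comm]
      gcongr
    · rw [mul_zero]; positivity
  rw [div_div, le_div_iff₀ (by positivity)]
  have h2 : (n * ε) ^ 2 = n * (ε ^ 2 * n) := by ring
  rw [h2, mul_assoc] at this
  have := le_of_mul_le_mul_left this hn'
  linarith

lemma sum_fbLaw_typical_ge (hW : IsBC W) (hQ : IsFBEncoder n Q) (φ : X → Y → Z → ℝ)
    {Φ : X → ℝ} (hΦ : ∀ x, Φ x = ∑ y, ∑ z, W x y z * φ x y z) {ε : ℝ} (hε : 0 < ε) (hn : 0 < n)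
    {G : (Fin n → X) → Prop} {c : ℝ} (hG : ∀ x, G x → ∑ i, Φ (x i) ≤ n * c) :
    (∑ x : Fin n → X, ∑ y : Fin n → Y, ∑ z : Fin n → Z, if G x then fbLaw n W Q x y z else 0)
      - (∑ x, ∑ y, ∑ z, W x y z * (φ x y z - Φ x) ^ 2) / ε ^ 2 / n
    ≤ ∑ x : Fin n → X, ∑ y : Fin n → Y, ∑ z : Fin n → Z,
      if G x ∧ ∑ i, φ (x i) (y i) (z i) ≤ n * (c + ε) then fbLaw n W Q x y z else 0 := by
  have h := sum_fbLaw_deviation_le hW hQ φ hΦ hε hn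
  refine sub_le_iff_le_add.mpr (le_trans ?_ (add_le_add le_rfl h))
  simp_rw [← Finset.sum_add_distrib]
  refine Finset.sum_le_sum fun x _ => Finset.sum_le_sum fun y _ => Finset.sum_le_sum fun z _ => ?_
  have hl := fbLaw_nonneg hW hQ x y z
  by_cases hx : G x
  · have := hG x hx
    by_cases ht : ∑ i, φ (x i) (y i) (z i) ≤ n * (c + ε)
    · simp only [hx, ht, and_self, if_true]
      split_ifs <;> linarith
    · rw [if_pos hx, if_neg (fun h => ht h.2), if_pos (by push Not at ht; linarith)]
      simp
  · simp only [hx, false_and, if_false, zero_add]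
    split_ifs
    exacts [hl, le_rfl]

end FeedbackLaw

section Information

lemma entH_eq_sum_negMulLog {Y : Type*} [Fintype Y] (p : Y → ℝ) :
    entH p = ∑ y, Real.negMulLog (p y) := by
  refine Finset.sum_congr rfl fun y _ => ?_
  split_ifs with h
  · simp [h]
  · simp [Real.negMulLog]

lemma isPMF_outDist {X Y : Type*} [Fintype X] [Fintype Y] {P : X → ℝ} (hP : IsPMF P)
    {W : X → Y → ℝ} (hW : IsChannel W) : IsPMF (outDist P W) := by
  refine ⟨fun y => Finset.sum_nonneg fun x _ => mul_nonneg (hP.1 x) (hW.1 x y), ?_⟩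
  unfold outDist
  rw [Finset.sum_comm]
  simp_rw [← Finset.mul_sum, hW.2, mul_one, hP.2]

lemma entH_nonneg {Y : Type*} [Fintype Y] {p : Y → ℝ} (hp : IsPMF p) : 0 ≤ entH p := by
  rw [entH_eq_sum_negMulLog]
  refine Finset.sum_nonneg fun y _ => Real.negMulLog_nonneg (hp.1 y) ?_
  rw [← hp.2]
  exact Finset.single_le_sum (fun x _ => hp.1 x) (Finset.mem_univ y)

/-- A strictly positive distribution whose cross entropy with `o` is close to the entropy of `o`. -/
lemma exists_pos_crossEntropy_le {Y : Type*} [Fintype Y] [Nonempty Y] {o : Y → ℝ} (ho : IsPMF o)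
    {ε : ℝ} (hε : 0 < ε) :
    ∃ q : Y → ℝ, (∀ y, 0 < q y) ∧ ∑ y, q y = 1 ∧ ∑ y, o y * -Real.log (q y) ≤ entH o + ε := by
  have he : Real.exp (-ε) < 1 := by simpa using hε
  have hc : (0 : ℝ) < Fintype.card Y := by exact_mod_cast Fintype.card_pos
  have hd : 0 < (1 - Real.exp (-ε)) / Fintype.card Y := div_pos (by linarith) hc
  have hq : ∀ y, 0 < Real.exp (-ε) * o y + (1 - Real.exp (-ε)) / Fintype.card Y := fun y => by
    have := mul_nonneg (Real.exp_pos (-ε)).le (ho.1 y)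
    linarith
  refine ⟨fun y => Real.exp (-ε) * o y + (1 - Real.exp (-ε)) / Fintype.card Y, hq, ?_, ?_⟩
  · rw [Finset.sum_add_distrib, ← Finset.mul_sum, ho.2]
    simp only [Finset.sum_const, Finset.card_univ, nsmul_eq_mul]
    field_simp
    ring
  · have : entH o + ε = ∑ y, (Real.negMulLog (o y) + ε * o y) := by
      rw [Finset.sum_add_distrib, ← Finset.mul_sum, ho.2, entH_eq_sum_negMulLog, mul_one]
    rw [this]
    refine Finset.sum_le_sum fun y _ => ?_
    rcases (ho.1 y).eq_or_lt with h | h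
    · simp [← h]
    · have h1 : Real.log (Real.exp (-ε) * o y)
          ≤ Real.log (Real.exp (-ε) * o y + (1 - Real.exp (-ε)) / Fintype.card Y) :=
        Real.log_le_log (by positivity) (by linarith)
      rw [Real.log_mul (by positivity) h.ne', Real.log_exp] at h1
      have := mul_le_mul_of_nonneg_left h1 h.le
      rw [Real.negMulLog]
      linarith

lemma mul_log_div_ge {a b : ℝ} (ha : 0 < a) (hb : 0 < b) : a - b ≤ a * Real.log (a / b) := by
  have h := Real.one_sub_inv_le_log_of_pos (div_pos ha hb)
  have := mul_le_mul_of_nonneg_left h ha.le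
  rw [inv_div] at this
  have e : a * (1 - b / a) = a - b := by field_simp
  linarith

lemma eq_of_mul_log_div_le {a b : ℝ} (ha : 0 < a) (hb : 0 < b)
    (h : a * Real.log (a / b) ≤ a - b) : a = b := by
  by_contra hne
  have h1 : b / a ≠ 1 := fun h => hne ((div_eq_one_iff_eq ha.ne').mp h).symm
  have h2 := Real.log_lt_sub_one_of_pos (div_pos hb ha) h1
  have h3 : Real.log (a / b) = - Real.log (b / a) := by rw [← Real.log_inv, inv_div]
  have := mul_lt_mul_of_pos_left h2 ha
  have e : a * (b / a - 1) = b - a := by field_simp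
  rw [h3] at h
  linarith

lemma channel_eq_outDist_of_mutInf_nonpos {X Y : Type*} [Fintype X] [Fintype Y] {P : X → ℝ}
    (hP : IsPMF P) (hP0 : ∀ x, 0 < P x) {W : X → Y → ℝ} (hW : IsChannel W)
    (h : mutInf P W ≤ 0) (x : X) (y : Y) : W x y = outDist P W y := by
  have ho := isPMF_outDist hP hW
  have hle : ∀ x y, P x * W x y ≤ outDist P W y := fun x y =>
    Finset.single_le_sum (f := fun x => P x * W x y)
      (fun x _ => mul_nonneg (hP.1 x) (hW.1 x y)) (Finset.mem_univ x)
  set T : X → Y → ℝ := fun x y => (if P x * W x y = 0 then 0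
    else P x * W x y * Real.log (W x y / ∑ x', P x' * W x' y))
      - (P x * W x y - P x * outDist P W y) with hT
  have hlog : ∀ x y, W x y / ∑ x', P x' * W x' y = (P x * W x y) / (P x * outDist P W y) := by
    intro x y
    rw [mul_div_mul_left _ _ (hP0 x).ne']
    rfl
  have hT0 : ∀ x y, 0 ≤ T x y := by
    intro x y
    simp only [hT]
    split_ifs with h0
    · have := mul_nonneg (hP.1 x) (ho.1 y)
      linarith
    · have hpos := lt_of_le_of_ne (mul_nonneg (hP.1 x) (hW.1 x y)) (Ne.symm h0)
      have := mul_log_div_ge hpos (mul_pos (hP0 x) (hpos.trans_le (hle x y)))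
      rw [hlog]
      linarith
  have hs : ∑ x, ∑ y, T x y = mutInf P W := by
    simp only [hT, Finset.sum_sub_distrib, ← Finset.mul_sum, hW.2, ho.2, mutInf]
    ring
  have h1 : ∑ x, ∑ y, T x y = 0 :=
    le_antisymm (hs ▸ h) (Finset.sum_nonneg fun x _ => Finset.sum_nonneg fun y _ => hT0 x y)
  have h2 : T x y = 0 := by
    rw [Finset.sum_eq_zero_iff_of_nonneg fun x _ => Finset.sum_nonneg fun y _ => hT0 x y] at h1
    have := h1 x (Finset.mem_univ _)
    rw [Finset.sum_eq_zero_iff_of_nonneg fun y _ => hT0 x y] at this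
    exact this y (Finset.mem_univ _)
  refine mul_left_cancel₀ (hP0 x).ne' ?_
  simp only [hT] at h2
  split_ifs at h2 with h0
  · linarith
  · have hpos := lt_of_le_of_ne (mul_nonneg (hP.1 x) (hW.1 x y)) (Ne.symm h0)
    rw [hlog] at h2
    exact eq_of_mul_log_div_le hpos (mul_pos (hP0 x) (hpos.trans_le (hle x y))) (by linarith)

lemma exists_const_of_mutInf_nonpos {X Y : Type*} [Fintype X] [Nonempty X] [Fintype Y]
    {W : X → Y → ℝ} (hW : IsChannel W) (h : ¬ ∃ P' : X → ℝ, IsPMF P' ∧ 0 < mutInf P' W) :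
    ∃ q : Y → ℝ, ∀ x y, W x y = q y := by
  have hc : (0 : ℝ) < Fintype.card X := by exact_mod_cast Fintype.card_pos
  have hP : IsPMF (fun _ : X => (Fintype.card X : ℝ)⁻¹) :=
    ⟨fun _ => by positivity, by simp [hc.ne']⟩
  push Not at h
  exact ⟨_, channel_eq_outDist_of_mutInf_nonpos hP (fun _ => by positivity) hW (h _ hP)⟩

lemma isChannel_margY {X Y Z : Type*} [Fintype Y] [Fintype Z] {W : X → Y → Z → ℝ}
    (hW : IsBC W) : IsChannel (margY W) :=
  ⟨fun x y => Finset.sum_nonneg fun z _ => hW.1 x y z, fun x => hW.2 x⟩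

lemma isChannel_margZ {X Y Z : Type*} [Fintype Y] [Fintype Z] {W : X → Y → Z → ℝ}
    (hW : IsBC W) : IsChannel (margZ W) :=
  ⟨fun x z => Finset.sum_nonneg fun y _ => hW.1 x y z,
    fun x => by unfold margZ; rw [Finset.sum_comm]; exact hW.2 x⟩

lemma sum_mul_margZ {X Y Z : Type*} [Fintype X] [Fintype Y] {W : X → Y → Z → ℝ} (P : X → ℝ)
    (z : Z) :
    ∑ x', ∑ y', P x' * W x' y' z = outDist P (margZ W) z := by
  simp only [outDist, margZ, Finset.mul_sum]

lemma le_margY {X Y Z : Type*} [Fintype Y] [Fintype Z] {W : X → Y → Z → ℝ} (hW : IsBC W)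
    (x : X) (y : Y) (z : Z) : W x y z ≤ margY W x y :=
  Finset.single_le_sum (fun z _ => hW.1 x y z) (Finset.mem_univ z)

variable {X Y Z : Type*} [Fintype X] [Fintype Y] [Fintype Z] {W : X → Y → Z → ℝ}

lemma le_outDist_margZ (hW : IsBC W) {P : X → ℝ} (hP : ∀ x, 0 ≤ P x) (x : X) (y : Y) (z : Z) :
    P x * W x y z ≤ outDist P (margZ W) z := by
  rw [← sum_mul_margZ]
  have h0 : ∀ x, ∀ y, 0 ≤ P x * W x y z := fun x y => mul_nonneg (hP x) (hW.1 x y z)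
  exact (Finset.single_le_sum (fun y _ => h0 x y) (Finset.mem_univ y)).trans
    (Finset.single_le_sum (f := fun x => ∑ y, P x * W x y z)
      (fun x _ => Finset.sum_nonneg fun y _ => h0 x y) (Finset.mem_univ x))

lemma mutInfXY_Z_eq (hW : IsBC W) {P : X → ℝ} (hP : ∀ x, 0 ≤ P x) :
    mutInfXY_Z P W = ∑ x, P x * ∑ y, ∑ z, W x y z * Real.log (W x y z / margY W x y)
      + entH (outDist P (margZ W)) := by
  have h1 : entH (outDist P (margZ W))
      = ∑ x, ∑ y, ∑ z, P x * W x y z * -Real.log (outDist P (margZ W) z) := by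
    rw [entH_eq_sum_negMulLog]
    calc _ = ∑ z, ∑ x, ∑ y, P x * W x y z * -Real.log (outDist P (margZ W) z) := by
          refine Finset.sum_congr rfl fun z _ => ?_
          simp_rw [← Finset.sum_mul]
          rw [sum_mul_margZ, Real.negMulLog]
          ring
      _ = _ := by
          rw [Finset.sum_comm]
          exact Finset.sum_congr rfl fun x _ => Finset.sum_comm
  rw [h1]
  simp_rw [Finset.mul_sum, ← Finset.sum_add_distrib]
  refine Finset.sum_congr rfl fun x _ => Finset.sum_congr rfl fun y _ =>
    Finset.sum_congr rfl fun z _ => ?_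
  split_ifs with h
  · rw [← mul_assoc, h]; ring
  · have hp : P x ≠ 0 := fun h0 => h (by simp [h0])
    have hw : W x y z ≠ 0 := fun h0 => h (by simp [h0])
    have hwpos := lt_of_le_of_ne (hW.1 x y z) (Ne.symm hw)
    have hy : 0 < margY W x y := hwpos.trans_le (le_margY hW x y z)
    have ho : 0 < outDist P (margZ W) z :=
      (lt_of_le_of_ne (mul_nonneg (hP x) (hW.1 x y z)) (Ne.symm h)).trans_le
        (le_outDist_margZ hW hP x y z)
    rw [sum_mul_margZ, mul_assoc (P x) (margY W x y), mul_div_mul_left _ _ hp, ← div_div,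
      Real.log_div (div_pos hwpos hy).ne' ho.ne']
    ring

lemma mutInfXY_Z_nonneg (hW : IsBC W) {P : X → ℝ} (hP : IsPMF P) : 0 ≤ mutInfXY_Z P W := by
  have ho := isPMF_outDist hP (isChannel_margZ hW)
  have key : ∑ x, ∑ y, ∑ z, (P x * W x y z - P x * margY W x y * outDist P (margZ W) z)
      ≤ mutInfXY_Z P W := by
    refine Finset.sum_le_sum fun x _ => Finset.sum_le_sum fun y _ => Finset.sum_le_sum fun z _ => ?_
    rw [sum_mul_margZ]
    have hb := mul_nonneg (mul_nonneg (hP.1 x) ((isChannel_margY hW).1 x y)) (ho.1 z)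
    split_ifs with h
    · linarith
    · have hpos := lt_of_le_of_ne (mul_nonneg (hP.1 x) (hW.1 x y z)) (Ne.symm h)
      refine mul_log_div_ge hpos (mul_pos (hpos.trans_le ?_)
        (hpos.trans_le (le_outDist_margZ hW hP.1 x y z)))
      exact mul_le_mul_of_nonneg_left (le_margY hW x y z) (hP.1 x)
  refine le_trans (le_of_eq ?_) key
  simp_rw [Finset.sum_sub_distrib, ← Finset.mul_sum, hW.2, ho.2]
  simp_rw [mul_one, ← Finset.mul_sum, (isChannel_margY hW).2]
  simp

lemma exists_crossInformation_le [Nonempty Z] (hW : IsBC W) {P : X → ℝ} (hP : IsPMF P) {ε : ℝ}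
    (hε : 0 < ε) :
    ∃ q : Z → ℝ, (∀ z, 0 < q z) ∧ ∑ z, q z = 1 ∧
      ∑ x, P x * ∑ y, ∑ z, W x y z * Real.log (W x y z / margY W x y / q z)
        ≤ mutInfXY_Z P W + ε := by
  obtain ⟨q, hq0, hq1, hq⟩ :=
    exists_pos_crossEntropy_le (isPMF_outDist hP (isChannel_margZ hW)) hε
  refine ⟨q, hq0, hq1, ?_⟩
  rw [mutInfXY_Z_eq hW hP.1, add_assoc]
  refine le_trans (le_of_eq ?_) (add_le_add le_rfl hq)
  have h1 : ∑ z, outDist P (margZ W) z * -Real.log (q z)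
      = ∑ x, ∑ y, ∑ z, P x * W x y z * -Real.log (q z) := by
    simp_rw [← sum_mul_margZ, Finset.sum_mul]
    rw [Finset.sum_comm]
    exact Finset.sum_congr rfl fun x _ => Finset.sum_comm
  rw [h1]
  simp_rw [Finset.mul_sum, ← Finset.sum_add_distrib]
  refine Finset.sum_congr rfl fun x _ => Finset.sum_congr rfl fun y _ =>
    Finset.sum_congr rfl fun z _ => ?_
  by_cases hw : W x y z = 0
  · simp [hw]
  · have hwpos := lt_of_le_of_ne (hW.1 x y z) (Ne.symm hw)
    have hy : 0 < margY W x y := hwpos.trans_le (le_margY hW x y z)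
    rw [Real.log_div (div_pos hwpos hy).ne' (hq0 z).ne']
    ring

lemma exists_crossOutput_le [Nonempty Y] (hW : IsBC W) {P : X → ℝ} (hP : IsPMF P) {ε : ℝ}
    (hε : 0 < ε) :
    ∃ q : Y → ℝ, (∀ y, 0 < q y) ∧ ∑ y, q y = 1 ∧
      ∑ x, P x * ∑ y, ∑ z, W x y z * -Real.log (q y) ≤ entH (outDist P (margY W)) + ε := by
  obtain ⟨q, hq0, hq1, hq⟩ :=
    exists_pos_crossEntropy_le (isPMF_outDist hP (isChannel_margY hW)) hε
  refine ⟨q, hq0, hq1, le_trans (le_of_eq ?_) hq⟩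
  simp_rw [outDist, Finset.sum_mul, Finset.mul_sum]
  rw [Finset.sum_comm]
  refine Finset.sum_congr rfl fun y _ => Finset.sum_congr rfl fun x _ => ?_
  simp only [margY, Finset.mul_sum, Finset.sum_mul, mul_assoc]

lemma continuous_outDist {X Y : Type*} [Fintype X] (W : X → Y → ℝ) (y : Y) :
    Continuous fun P : X → ℝ => outDist P W y := by
  unfold outDist
  fun_prop

lemma continuous_entH_outDist {X Y : Type*} [Fintype X] [Fintype Y] (W : X → Y → ℝ) :
    Continuous fun P : X → ℝ => entH (outDist P W) := by
  simp_rw [entH_eq_sum_negMulLog]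
  exact continuous_finsetSum _ fun y _ => Real.continuous_negMulLog.comp (continuous_outDist W y)

lemma continuousOn_mutInfXY_Z (hW : IsBC W) :
    ContinuousOn (fun P : X → ℝ => mutInfXY_Z P W) (stdSimplex ℝ X) := by
  have : Continuous fun P : X → ℝ =>
      ∑ x, P x * ∑ y, ∑ z, W x y z * Real.log (W x y z / margY W x y)
        + entH (outDist P (margZ W)) := by
    have := continuous_entH_outDist (margZ W)
    fun_prop
  exact this.continuousOn.congr fun P hP => mutInfXY_Z_eq hW hP.1

end Information

section Codes

variable {X Y Z : Type*} [Fintype X] [Fintype Y] [Fintype Z] {W : X → Y → Z → ℝ} {n kY kZ : ℕ}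
  {Q : Fin kY → Fin kZ → (i : ℕ) → (Fin i → X) → (Fin i → Y) → X → ℝ}
  {DY : Fin kY → Finset (Fin n → Y)} {DZ : Fin kZ → Finset (Fin n → Z)} {l1Y l2Y l1Z l2Z : ℝ}

lemma sum_prod_eq_one {T : Type*} [Fintype T] {q : T → ℝ} (hq : ∑ t, q t = 1) (n : ℕ) :
    ∑ s : Fin n → T, ∏ i, q (s i) = 1 := by
  rw [← Fintype.sum_pow, hq, one_pow]

lemma card_le_exp_of_sum_neg_log_le {T : Type*} [Fintype T] {q : T → ℝ} (hq0 : ∀ t, 0 < q t)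
    (hq : ∑ t, q t = 1) {n : ℕ} {c : ℝ} {E : Finset (Fin n → T)}
    (hE : ∀ s ∈ E, ∑ i, -Real.log (q (s i)) ≤ c) : (E.card : ℝ) ≤ Real.exp c := by
  have h : ∀ s ∈ E, (1 : ℝ) ≤ Real.exp c * ∏ i, q (s i) := by
    intro s hs
    have hs' := hE s hs
    have : ∏ i, q (s i) = Real.exp (∑ i, Real.log (q (s i))) := by
      rw [Real.exp_sum]
      exact Finset.prod_congr rfl fun i _ => (Real.exp_log (hq0 _)).symm
    rw [this, ← Real.exp_add, Real.one_le_exp_iff]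
    rw [Finset.sum_neg_distrib] at hs'
    linarith
  have h2 : ∑ s ∈ E, Real.exp c * ∏ i, q (s i) ≤ ∑ s : Fin n → T, Real.exp c * ∏ i, q (s i) :=
    Finset.sum_le_sum_of_subset_of_nonneg (Finset.subset_univ _) fun (s : Fin n → T) _ _ =>
      mul_nonneg (Real.exp_pos _).le (Finset.prod_nonneg fun i _ => (hq0 _).le)
  have h3 := Finset.sum_le_sum h
  rw [← Finset.mul_sum Finset.univ, sum_prod_eq_one hq, mul_one] at h2
  rw [Finset.sum_const, nsmul_eq_mul, mul_one] at h3
  exact h3.trans h2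

lemma average_sub_le_average {k : ℕ} (hk : 0 < k) {f g : Fin k → ℝ} {δ : ℝ}
    (h : ∀ m, f m - δ ≤ g m) : (k : ℝ)⁻¹ * ∑ m, f m - δ ≤ (k : ℝ)⁻¹ * ∑ m, g m := by
  have hk' : (0 : ℝ) < k := by exact_mod_cast hk
  have e : (k : ℝ)⁻¹ * ∑ m, f m - δ = (k : ℝ)⁻¹ * ∑ m, (f m - δ) := by
    rw [Finset.sum_sub_distrib]
    simp only [Finset.sum_const, Finset.card_univ, Fintype.card_fin, nsmul_eq_mul]
    field_simp
  rw [e]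
  gcongr with m
  exact h m

lemma average_le_one {k : ℕ} (hk : 0 < k) {g : Fin k → ℝ} (h : ∀ m, g m ≤ 1) :
    (k : ℝ)⁻¹ * ∑ m, g m ≤ 1 := by
  have hk' : (0 : ℝ) < k := by exact_mod_cast hk
  calc _ ≤ (k : ℝ)⁻¹ * ∑ _m : Fin k, 1 := by gcongr with m; exact h m
    _ = 1 := by simp [hk'.ne']

lemma sum_fbLaw_filter_le_one (hW : IsBC W)
    {Q : (i : ℕ) → (Fin i → X) → (Fin i → Y) → X → ℝ} (hQ : IsFBEncoder n Q)
    (G : (Fin n → X) → Prop) :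
    (∑ x : Fin n → X, ∑ y : Fin n → Y, ∑ z : Fin n → Z, if G x then fbLaw n W Q x y z else 0)
      ≤ 1 := by
  rw [← sum_fbLaw hW hQ]
  refine Finset.sum_le_sum fun x _ => Finset.sum_le_sum fun y _ => Finset.sum_le_sum fun z _ => ?_
  split_ifs
  exacts [le_rfl, fbLaw_nonneg hW hQ x y z]

/-- Number of messages to Terminal `Y` of a code whose inputs satisfy `G` with probability at
least `w`. -/
lemma IsFBIDCode.card_Y_le (hcode : IsFBIDCode n kY kZ W Q DY DZ l1Y l2Y l1Z l2Z)
    (hW : IsBC W) (hY : 0 < kY) (hZ : 0 < kZ) (hn : 0 < n) {q : Y → ℝ} (hq0 : ∀ y, 0 < q y)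
    (hq : ∑ y, q y = 1) {Φ : X → ℝ} (hΦ : ∀ x, Φ x = ∑ y, ∑ z, W x y z * -Real.log (q y))
    {ε : ℝ} (hε : 0 < ε) {G : (Fin n → X) → Prop} {c : ℝ} (hG : ∀ x, G x → ∑ i, Φ (x i) ≤ n * c)
    {w : ℝ} (hw0 : 0 ≤ w)
    (hw : w ≤ (kY : ℝ)⁻¹ * ∑ my, (kZ : ℝ)⁻¹ * ∑ mz, ∑ x : Fin n → X, ∑ y : Fin n → Y,
      ∑ z : Fin n → Z, if G x then fbLaw n W (Q my mz) x y z else 0)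
    (hl : l1Y + l2Y + (∑ x, ∑ y, ∑ z, W x y z * (-Real.log (q y) - Φ x) ^ 2) / ε ^ 2 / n < w / 2) :
    ∃ N : ℕ, (N : ℝ) ≤ Real.exp (n * (c + ε)) ∧ w / 2 * kY ≤ 2 ^ N := by
  obtain ⟨hQ, h1, h2, -, -⟩ := hcode
  have hZ' : (0 : ℝ) < kZ := by exact_mod_cast hZ
  have hcard := le_card_filter_half_le hY
    (fun my => average_le_one hZ fun mz => sum_fbLaw_filter_le_one hW (hQ my mz) G) hw0 hw
  set 𝓜 := Finset.univ.filter fun my => w / 2 ≤ (kZ : ℝ)⁻¹ * ∑ mz, ∑ x : Fin n → X,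
    ∑ y : Fin n → Y, ∑ z : Fin n → Z, if G x then fbLaw n W (Q my mz) x y z else 0 with h𝓜
  set E := Finset.univ.filter fun y : Fin n → Y => ∑ i, -Real.log (q (y i)) ≤ n * (c + ε) with hE
  set δ := (∑ x, ∑ y, ∑ z, W x y z * (-Real.log (q y) - Φ x) ^ 2) / ε ^ 2 / n with hδ
  have hswap : ∀ my (S : Finset (Fin n → Y)),
      ∑ y ∈ S, (kZ : ℝ)⁻¹ * ∑ mz, ∑ x : Fin n → X, ∑ z : Fin n → Z, fbLaw n W (Q my mz) x y z
      = (kZ : ℝ)⁻¹ * ∑ mz, ∑ x : Fin n → X, ∑ y ∈ S, ∑ z : Fin n → Z,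
        fbLaw n W (Q my mz) x y z := by
    intro my S
    rw [← Finset.mul_sum, Finset.sum_comm]
    congr 1
    exact Finset.sum_congr rfl fun mz _ => Finset.sum_comm
  refine ⟨E.card, card_le_exp_of_sum_neg_log_le hq0 hq fun y hy => (Finset.mem_filter.mp hy).2, hcard.trans ?_⟩
  have := card_le_two_pow_of_separated (𝓜 := 𝓜) (E := E)
    (μ := fun my y => (kZ : ℝ)⁻¹ * ∑ mz, ∑ x : Fin n → X, ∑ z : Fin n → Z,
      fbLaw n W (Q my mz) x y z) (D := DY) (l1 := l1Y) (l2 := l2Y) (a := w / 2 - δ)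
    (fun my y => mul_nonneg (by positivity) (Finset.sum_nonneg fun mz _ =>
      Finset.sum_nonneg fun x _ => Finset.sum_nonneg fun z _ => fbLaw_nonneg hW (hQ my mz) x y z))
    (fun my => by rw [hswap]; exact h1 my)
    (fun my my' hne => by rw [hswap]; exact h2 my my' hne)
    (fun my hmy => by
      rw [hswap]
      have hmy' : w / 2 ≤ (kZ : ℝ)⁻¹ * ∑ mz, ∑ x : Fin n → X, ∑ y : Fin n → Y, ∑ z : Fin n → Z,
        if G x then fbLaw n W (Q my mz) x y z else 0 := by simpa [h𝓜] using hmy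
      refine (sub_le_sub_right hmy' δ).trans (average_sub_le_average hZ fun mz => ?_)
      refine (sum_fbLaw_typical_ge hW (hQ my mz) (fun _ y _ => -Real.log (q y)) hΦ hε hn hG).trans ?_
      refine Finset.sum_le_sum fun x _ => ?_
      rw [hE, Finset.sum_filter]
      refine Finset.sum_le_sum fun y _ => ?_
      by_cases hy : ∑ i, -Real.log (q (y i)) ≤ n * (c + ε)
      · simp only [hy, and_true, if_true]
        refine Finset.sum_le_sum fun z _ => ?_
        split_ifs
        exacts [le_rfl, fbLaw_nonneg hW (hQ my mz) x y z]
      · simp only [hy, and_false, if_false, Finset.sum_const_zero]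
        exact le_rfl)
    (by linarith)
  exact_mod_cast this

lemma sum_fbLaw_mul_prod_div {X Y Z : Type*} [Fintype Y] [Fintype Z] {W : X → Y → Z → ℝ}
    (hW : IsBC W) (Q : (i : ℕ) → (Fin i → X) → (Fin i → Y) → X → ℝ)
    (x : Fin n → X) (y : Fin n → Y) (z : Fin n → Z) :
    (∑ z', fbLaw n W Q x y z') * ∏ i, W (x i) (y i) (z i) / margY W (x i) (y i)
      = fbLaw n W Q x y z := by
  have h : ∑ z', fbLaw n W Q x y z' = ∏ i : Fin n,
      (Q i.1 (fun j : Fin i.1 => x ⟨j.1, lt_trans j.isLt i.isLt⟩)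
        (fun j : Fin i.1 => y ⟨j.1, lt_trans j.isLt i.isLt⟩) (x i) * margY W (x i) (y i)) := by
    simp only [margY, Finset.mul_sum]
    rw [Finset.prod_univ_sum, Fintype.piFinset_univ]
    rfl
  rw [h, ← Finset.prod_mul_distrib]
  refine Finset.prod_congr rfl fun i _ => ?_
  rw [mul_assoc]
  congr 1
  refine mul_div_cancel_of_imp' fun h0 => ?_
  exact le_antisymm (h0 ▸ le_margY hW _ _ _) (hW.1 _ _ _)

lemma prod_div_le_exp_mul_prod {X Y Z : Type*} [Fintype Y] [Fintype Z] {W : X → Y → Z → ℝ} {n : ℕ}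
    (hW : IsBC W) {q : Z → ℝ} (hq0 : ∀ z, 0 < q z) {c : ℝ}
    {x : Fin n → X} {y : Fin n → Y} {z : Fin n → Z}
    (h : ∑ i, Real.log (W (x i) (y i) (z i) / margY W (x i) (y i) / q (z i)) ≤ c) :
    ∏ i, W (x i) (y i) (z i) / margY W (x i) (y i) ≤ Real.exp c * ∏ i, q (z i) := by
  have hV : ∀ x y z, 0 ≤ W x y z / margY W x y := fun x y z =>
    div_nonneg (hW.1 x y z) ((isChannel_margY hW).1 x y)
  by_cases h0 : ∃ i, W (x i) (y i) (z i) / margY W (x i) (y i) = 0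
  · obtain ⟨i, hi⟩ := h0
    rw [Finset.prod_eq_zero (Finset.mem_univ i) hi]
    exact mul_nonneg (Real.exp_pos _).le (Finset.prod_nonneg fun i _ => (hq0 _).le)
  · push Not at h0
    have e : ∏ i, W (x i) (y i) (z i) / margY W (x i) (y i)
        = Real.exp (∑ i, Real.log (W (x i) (y i) (z i) / margY W (x i) (y i) / q (z i)))
          * ∏ i, q (z i) := by
      rw [Real.exp_sum, ← Finset.prod_mul_distrib]
      refine Finset.prod_congr rfl fun i _ => ?_
      rw [Real.exp_log (div_pos (lt_of_le_of_ne (hV _ _ _) (h0 i).symm) (hq0 _)),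
        div_mul_cancel₀ _ (hq0 _).ne']
    rw [e]
    exact mul_le_mul_of_nonneg_right (Real.exp_le_exp.mpr h)
      (Finset.prod_nonneg fun i _ => (hq0 _).le)

/-- Number of messages to Terminal `Z` of a code whose inputs satisfy `G` with probability at
least `w`. -/
lemma IsFBIDCode.card_Z_le (hcode : IsFBIDCode n kY kZ W Q DY DZ l1Y l2Y l1Z l2Z)
    (hW : IsBC W) (hY : 0 < kY) (hZ : 0 < kZ) (hn : 0 < n) {q : Z → ℝ} (hq0 : ∀ z, 0 < q z)
    (hq : ∑ z, q z = 1) {Φ : X → ℝ}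
    (hΦ : ∀ x, Φ x = ∑ y, ∑ z, W x y z * Real.log (W x y z / margY W x y / q z))
    {ε : ℝ} (hε : 0 < ε) {G : (Fin n → X) → Prop} {c : ℝ} (hG : ∀ x, G x → ∑ i, Φ (x i) ≤ n * c)
    {w : ℝ} (hw0 : 0 ≤ w)
    (hw : w ≤ (kZ : ℝ)⁻¹ * ∑ mz, (kY : ℝ)⁻¹ * ∑ my, ∑ x : Fin n → X, ∑ y : Fin n → Y,
      ∑ z : Fin n → Z, if G x then fbLaw n W (Q my mz) x y z else 0)
    {M : ℕ} (hM : 0 < M)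
    (hl : l1Z + l2Z + (∑ x, ∑ y, ∑ z, W x y z *
      (Real.log (W x y z / margY W x y / q z) - Φ x) ^ 2) / ε ^ 2 / n
        + 2 * √(Real.exp (n * (c + ε)) / M) < w / 2) :
    w / 2 * kZ ≤ ((Fintype.card X * Fintype.card Y : ℕ) : ℝ) ^ (n * M) := by
  obtain ⟨hQ, -, -, h1, h2⟩ := hcode
  have hY' : (0 : ℝ) < kY := by exact_mod_cast hY
  have hcard := le_card_filter_half_le hZ
    (fun mz => average_le_one hY fun my => sum_fbLaw_filter_le_one hW (hQ my mz) G) hw0 hw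
  set 𝓜 := Finset.univ.filter fun mz => w / 2 ≤ (kY : ℝ)⁻¹ * ∑ my, ∑ x : Fin n → X,
    ∑ y : Fin n → Y, ∑ z : Fin n → Z, if G x then fbLaw n W (Q my mz) x y z else 0 with h𝓜
  set δ := (∑ x, ∑ y, ∑ z, W x y z *
      (Real.log (W x y z / margY W x y / q z) - Φ x) ^ 2) / ε ^ 2 / n with hδ
  set A : (Fin n → X) → (Fin n → Y) → (Fin n → Z) → Prop := fun x y z => G x ∧
    ∑ i, Real.log (W (x i) (y i) (z i) / margY W (x i) (y i) / q (z i)) ≤ n * (c + ε) with hA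
  set p : Fin kZ → (Fin n → X) × (Fin n → Y) → ℝ := fun mz a =>
    (kY : ℝ)⁻¹ * ∑ my, ∑ z, fbLaw n W (Q my mz) a.1 a.2 z with hp
  set V : (Fin n → X) × (Fin n → Y) → (Fin n → Z) → ℝ := fun a z =>
    if A a.1 a.2 z then ∏ i, W (a.1 i) (a.2 i) (z i) / margY W (a.1 i) (a.2 i) else 0 with hVdef
  have hV0 : ∀ x y z, 0 ≤ W x y z / margY W x y := fun x y z =>
    div_nonneg (hW.1 x y z) ((isChannel_margY hW).1 x y)
  have hprod0 : ∀ (a : (Fin n → X) × (Fin n → Y)) (z : Fin n → Z),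
      0 ≤ ∏ i, W (a.1 i) (a.2 i) (z i) / margY W (a.1 i) (a.2 i) := fun a z =>
    Finset.prod_nonneg fun i _ => hV0 _ _ _
  have hV : ∀ a z, 0 ≤ V a z := by
    intro a z
    simp only [hVdef]
    split_ifs
    exacts [hprod0 a z, le_rfl]
  have hV1 : ∀ a, ∑ z, V a z ≤ 1 := by
    intro a
    calc _ ≤ ∑ z : Fin n → Z, ∏ i, W (a.1 i) (a.2 i) (z i) / margY W (a.1 i) (a.2 i) := by
          refine Finset.sum_le_sum fun z _ => ?_
          simp only [hVdef]
          split_ifs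
          exacts [le_rfl, hprod0 a z]
      _ = ∏ i, ∑ z, W (a.1 i) (a.2 i) z / margY W (a.1 i) (a.2 i) := by
          rw [Finset.prod_univ_sum, Fintype.piFinset_univ]
      _ ≤ 1 := by
          refine Finset.prod_le_one (fun i _ => Finset.sum_nonneg fun z _ => hV0 _ _ _) fun i _ => ?_
          rw [← Finset.sum_div]
          exact div_self_le_one _
  have hpV : ∀ mz a z, p mz a * V a z
      = (kY : ℝ)⁻¹ * ∑ my, if A a.1 a.2 z then fbLaw n W (Q my mz) a.1 a.2 z else 0 := by
    intro mz a z
    simp only [hp, hVdef]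
    split_ifs with h
    · rw [mul_assoc, Finset.sum_mul]
      congr 1
      exact Finset.sum_congr rfl fun my _ => sum_fbLaw_mul_prod_div hW (Q my mz) a.1 a.2 z
    · simp
  have hsum : ∀ mz z, ∑ a, p mz a * V a z = (kY : ℝ)⁻¹ * ∑ my, ∑ x : Fin n → X, ∑ y : Fin n → Y,
      if A x y z then fbLaw n W (Q my mz) x y z else 0 := by
    intro mz z
    simp_rw [hpV, ← Finset.mul_sum]
    congr 1
    rw [Finset.sum_comm]
    exact Finset.sum_congr rfl fun my _ => Fintype.sum_prod_type _
  have hswap : ∀ (S : Finset (Fin n → Z)) (F : Fin kY → (Fin n → X) → (Fin n → Y) →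
      (Fin n → Z) → ℝ), ∑ z ∈ S, (kY : ℝ)⁻¹ * ∑ my, ∑ x : Fin n → X, ∑ y : Fin n → Y, F my x y z
      = (kY : ℝ)⁻¹ * ∑ my, ∑ x : Fin n → X, ∑ y : Fin n → Y, ∑ z ∈ S, F my x y z := by
    intro S F
    rw [← Finset.mul_sum, Finset.sum_comm]
    congr 1
    refine Finset.sum_congr rfl fun my _ => ?_
    rw [Finset.sum_comm]
    exact Finset.sum_congr rfl fun x _ => Finset.sum_comm
  have hle : ∀ mz (S : Finset (Fin n → Z)), ∑ z ∈ S, ∑ a, p mz a * V a z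
      ≤ (kY : ℝ)⁻¹ * ∑ my, ∑ x : Fin n → X, ∑ y : Fin n → Y, ∑ z ∈ S,
        fbLaw n W (Q my mz) x y z := by
    intro mz S
    simp_rw [hsum]
    rw [hswap S fun my x y z => if A x y z then fbLaw n W (Q my mz) x y z else 0]
    gcongr with my _ x _ y _ z _
    split_ifs
    exacts [le_rfl, fbLaw_nonneg hW (hQ my mz) x y z]
  have hpPMF : ∀ mz, IsPMF (p mz) := by
    intro mz
    refine ⟨fun a => mul_nonneg (by positivity) (Finset.sum_nonneg fun my _ =>
      Finset.sum_nonneg fun z _ => fbLaw_nonneg hW (hQ my mz) _ _ z), ?_⟩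
    simp only [hp]
    rw [← Finset.mul_sum, Finset.sum_comm]
    simp_rw [Fintype.sum_prod_type, sum_fbLaw hW (hQ _ mz)]
    simp [hY'.ne']
  refine hcard.trans ?_
  have := card_le_pow_of_separated (𝓜 := 𝓜) hpPMF hV hV1 (q := fun z => ∏ i, q (z i))
    (fun z => Finset.prod_nonneg fun i _ => (hq0 _).le) (sum_prod_eq_one hq n).le
    (Real.exp_pos (n * (c + ε))).le
    (fun a z => by
      simp only [hVdef]
      split_ifs with h
      · exact prod_div_le_exp_mul_prod hW hq0 h.2
      · exact mul_nonneg (Real.exp_pos _).le (Finset.prod_nonneg fun i _ => (hq0 _).le))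
    hM (D := DZ) (l1 := l1Z) (l2 := l2Z) (a := w / 2 - δ)
    (fun mz => (hle mz _).trans (h1 mz))
    (fun mz mz' hne => (hle mz _).trans (h2 mz mz' hne))
    (fun mz hmz => by
      have hmz' : w / 2 ≤ (kY : ℝ)⁻¹ * ∑ my, ∑ x : Fin n → X, ∑ y : Fin n → Y, ∑ z : Fin n → Z,
        if G x then fbLaw n W (Q my mz) x y z else 0 := by simpa [h𝓜] using hmz
      simp_rw [hsum]
      rw [hswap _ fun my x y z => if A x y z then fbLaw n W (Q my mz) x y z else 0]
      refine (sub_le_sub_right hmz' δ).trans (average_sub_le_average hY fun my => ?_)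
      exact sum_fbLaw_typical_ge hW (hQ my mz)
        (fun x y z => Real.log (W x y z / margY W x y / q z)) hΦ hε hn hG)
    (by linarith)
  have e : Fintype.card ((Fin n → X) × (Fin n → Y)) = (Fintype.card X * Fintype.card Y) ^ n := by
    simp [mul_pow]
  rw [e, ← pow_mul] at this
  exact_mod_cast this

end Codes

section Rates

variable {X Y Z : Type} [Fintype X] [Fintype Y] [Fintype Z] {W : X → Y → Z → ℝ}

/-- The empirical distribution of a sequence. -/
def empDist {X : Type*} {n : ℕ} (x : Fin n → X) (a : X) : ℝ :=
  (n : ℝ)⁻¹ * ∑ i, if x i = a then 1 else 0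

lemma sum_empDist_mul {X : Type*} [Fintype X] {n : ℕ} (x : Fin n → X) (Φ : X → ℝ) :
    ∑ a, empDist x a * Φ a = (n : ℝ)⁻¹ * ∑ i, Φ (x i) := by
  simp_rw [empDist, mul_assoc, ← Finset.mul_sum, Finset.sum_mul]
  rw [Finset.sum_comm]
  simp

lemma empDist_mem_stdSimplex {X : Type*} [Fintype X] {n : ℕ} (hn : 0 < n) (x : Fin n → X) :
    empDist x ∈ stdSimplex ℝ X := by
  have hn' : (0 : ℝ) < n := by exact_mod_cast hn
  refine ⟨fun a => ?_, ?_⟩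
  · unfold empDist
    refine mul_nonneg (by positivity) (Finset.sum_nonneg fun i _ => ?_)
    split_ifs <;> norm_num
  · have := sum_empDist_mul x (fun _ => 1)
    simp only [mul_one] at this
    rw [this]
    simp [hn'.ne']

lemma rate_le_of_card_le_two_pow {R c ε w : ℝ} {n k N : ℕ} (hn : 0 < n) (hk : 0 < k)
    (hR : Real.exp (n * R) ≤ Real.log k) (hw : 0 < w) (hw1 : w ≤ 1)
    (hN : (N : ℝ) ≤ Real.exp (n * c)) (hc : 0 ≤ c) (hkN : w / 2 * k ≤ 2 ^ N)
    (hnε : Real.log (2 / w) + 1 ≤ Real.exp (n * ε)) : R ≤ c + ε := by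
  have hn' : (0 : ℝ) < n := by exact_mod_cast hn
  have hk' : (0 : ℝ) < k := by exact_mod_cast hk
  have h1 : (k : ℝ) ≤ 2 / w * 2 ^ N := by
    have : (k : ℝ) = 2 / w * (w / 2 * k) := by field_simp
    rw [this]
    gcongr
  have h2 := Real.log_le_log hk' h1
  rw [Real.log_mul (by positivity) (by positivity), Real.log_pow] at h2
  have h3 : 0 ≤ Real.log (2 / w) := Real.log_nonneg (by rw [le_div_iff₀ hw]; linarith)
  have h4 : (1 : ℝ) ≤ Real.exp (n * c) := Real.one_le_exp (by positivity)
  have h5 : (N : ℝ) * Real.log 2 ≤ Real.exp (n * c) := by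
    have : Real.log 2 ≤ 1 := by linarith [Real.log_two_lt_d9]
    calc (N : ℝ) * Real.log 2 ≤ N * 1 := by gcongr
      _ ≤ _ := by linarith
  have h6 : Real.exp (n * R) ≤ Real.exp (n * ε) * Real.exp (n * c) := by
    nlinarith [mul_le_mul_of_nonneg_left h4 h3]
  rw [← Real.exp_add, Real.exp_le_exp, ← mul_add] at h6
  linarith [le_of_mul_le_mul_left h6 hn']

lemma rate_le_of_card_le_pow {R c ε w : ℝ} {n k s M : ℕ} (hn : 0 < n) (hk : 0 < k) (hs : 0 < s)
    (hR : Real.exp (n * R) ≤ Real.log k) (hw : 0 < w) (hw1 : w ≤ 1)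
    (hM : (M : ℝ) ≤ 2 * Real.exp (n * c)) (hc : 0 ≤ c) (hkM : w / 2 * k ≤ (s : ℝ) ^ (n * M))
    (hnε : Real.log (2 / w) + n * (2 * Real.log s) ≤ Real.exp (n * ε)) : R ≤ c + ε := by
  have hn' : (0 : ℝ) < n := by exact_mod_cast hn
  have hk' : (0 : ℝ) < k := by exact_mod_cast hk
  have hs' : (0 : ℝ) < s := by exact_mod_cast hs
  have h1 : (k : ℝ) ≤ 2 / w * s ^ (n * M) := by
    have : (k : ℝ) = 2 / w * (w / 2 * k) := by field_simp
    rw [this]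
    gcongr
  have h2 := Real.log_le_log hk' h1
  rw [Real.log_mul (by positivity) (by positivity), Real.log_pow] at h2
  push_cast at h2
  have h3 : 0 ≤ Real.log (2 / w) := Real.log_nonneg (by rw [le_div_iff₀ hw]; linarith)
  have h4 : (1 : ℝ) ≤ Real.exp (n * c) := Real.one_le_exp (by positivity)
  have hls : 0 ≤ Real.log s := Real.log_natCast_nonneg s
  have h5 : (n : ℝ) * M * Real.log s ≤ n * (2 * Real.log s) * Real.exp (n * c) := by
    calc (n : ℝ) * M * Real.log s ≤ n * (2 * Real.exp (n * c)) * Real.log s := by gcongr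
      _ = _ := by ring
  have h6 : Real.exp (n * R) ≤ Real.exp (n * ε) * Real.exp (n * c) := by
    nlinarith [mul_le_mul_of_nonneg_left h4 h3]
  rw [← Real.exp_add, Real.exp_le_exp, ← mul_add] at h6
  linarith [le_of_mul_le_mul_left h6 hn']

lemma eventually_add_mul_le_exp {a b ε : ℝ} (hε : 0 < ε) (ha : 0 ≤ a) :
    ∀ᶠ n : ℕ in Filter.atTop, a + n * b ≤ Real.exp (n * ε) := by
  filter_upwards [tendsto_natCast_atTop_atTop.eventually_ge_atTop (1 : ℝ),
    tendsto_natCast_atTop_atTop.eventually_ge_atTop (2 * (a + b) / ε ^ 2)] with n h1 h2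
  have h3 := Real.quadratic_le_exp_of_nonneg (x := n * ε) (by positivity)
  rw [div_le_iff₀ (by positivity)] at h2
  nlinarith [mul_le_mul_of_nonneg_left h2 (by linarith : (0 : ℝ) ≤ n)]

lemma eventually_div_le (C : ℝ) {η : ℝ} (hη : 0 < η) : ∀ᶠ n : ℕ in Filter.atTop, C / n ≤ η :=
  (tendsto_const_div_atTop_nhds_zero_nat C).eventually_le_const hη

/-- Data attached to an input distribution: reference output distributions whose cross entropies
are within `ε` of the optimum. -/
lemma exists_reference_outputs [Nonempty Y] [Nonempty Z] (hW : IsBC W) {ε : ℝ} (hε : 0 < ε)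
    (P : X → ℝ) :
    ∃ (qY : Y → ℝ) (qZ : Z → ℝ), IsPMF P →
      (∀ y, 0 < qY y) ∧ ∑ y, qY y = 1 ∧ (∀ z, 0 < qZ z) ∧ ∑ z, qZ z = 1 ∧
      ∑ x, P x * ∑ y, ∑ z, W x y z * -Real.log (qY y) ≤ entH (outDist P (margY W)) + ε ∧
      ∑ x, P x * ∑ y, ∑ z, W x y z * Real.log (W x y z / margY W x y / qZ z)
        ≤ mutInfXY_Z P W + ε := by
  by_cases hP : IsPMF P
  · obtain ⟨qY, h1, h2, h3⟩ := exists_crossOutput_le hW hP hε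
    obtain ⟨qZ, h4, h5, h6⟩ := exists_crossInformation_le hW hP hε
    exact ⟨qY, qZ, fun _ => ⟨h1, h2, h4, h5, h3, h6⟩⟩
  · exact ⟨fun _ => 0, fun _ => 0, fun h => absurd h hP⟩

lemma one_le_sum_sum_fbLaw (hW : IsBC W) {n : ℕ}
    {Q : (i : ℕ) → (Fin i → X) → (Fin i → Y) → X → ℝ} (hQ : IsFBEncoder n Q) {ι : Type*}
    {t : Finset ι} {G : ι → (Fin n → X) → Prop} (hG : ∀ x, ∃ j ∈ t, G j x) :
    1 ≤ ∑ j ∈ t, ∑ x : Fin n → X, ∑ y : Fin n → Y, ∑ z : Fin n → Z,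
      if G j x then fbLaw n W Q x y z else 0 := by
  rw [← sum_fbLaw hW hQ, Finset.sum_comm (s := t)]
  refine Finset.sum_le_sum fun x _ => ?_
  obtain ⟨j, hj, hx⟩ := hG x
  have h : ∀ k ∈ t, 0 ≤ ∑ y : Fin n → Y, ∑ z : Fin n → Z,
      if G k x then fbLaw n W Q x y z else 0 := fun k _ =>
    Finset.sum_nonneg fun y _ => Finset.sum_nonneg fun z _ => by
      have := fbLaw_nonneg hW hQ x y z
      split_ifs
      exacts [this, le_rfl]
  have := Finset.single_le_sum h hj
  simpa only [hx, if_true] using this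

lemma IsFBIDCode.snd_le [Nonempty X] [Nonempty Y] {n kY kZ : ℕ}
    {Q : Fin kY → Fin kZ → (i : ℕ) → (Fin i → X) → (Fin i → Y) → X → ℝ}
    {DY : Fin kY → Finset (Fin n → Y)} {DZ : Fin kZ → Finset (Fin n → Z)}
    {l1Y l2Y l1Z l2Z : ℝ} (hcode : IsFBIDCode n kY kZ W Q DY DZ l1Y l2Y l1Z l2Z)
    (hW : IsBC W) (hY : 0 < kY) (hZ : 0 < kZ) (hn : 0 < n) {q : Z → ℝ} (hq0 : ∀ z, 0 < q z)
    (hq : ∑ z, q z = 1) {Φ : X → ℝ}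
    (hΦ : ∀ x, Φ x = ∑ y, ∑ z, W x y z * Real.log (W x y z / margY W x y / q z))
    {ε : ℝ} (hε : 0 < ε) {G : (Fin n → X) → Prop} {c : ℝ} (hc : 0 ≤ c)
    (hG : ∀ x, G x → ∑ i, Φ (x i) ≤ n * c) {w : ℝ} (hw0 : 0 < w) (hw1 : w ≤ 1)
    (hw : w ≤ (kY : ℝ)⁻¹ * ∑ my, (kZ : ℝ)⁻¹ * ∑ mz, ∑ x : Fin n → X, ∑ y : Fin n → Y,
      ∑ z : Fin n → Z, if G x then fbLaw n W (Q my mz) x y z else 0)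
    (hl : l1Z + l2Z + (∑ x, ∑ y, ∑ z, W x y z *
      (Real.log (W x y z / margY W x y / q z) - Φ x) ^ 2) / ε ^ 2 / n + w / 8 < w / 2)
    (hnS : (16 / w) ^ 2 ≤ Real.exp (n * ε))
    (hnL : Real.log (2 / w) + n * (2 * Real.log (Fintype.card X * Fintype.card Y : ℕ))
      ≤ Real.exp (n * ε))
    {r : ℝ} (hr : Real.exp (n * r) ≤ Real.log kZ) : r ≤ c + 3 * ε := by
  have hex1 : 0 ≤ c + ε + ε := by positivity
  set M := ⌈Real.exp (n * (c + ε + ε))⌉₊ with hMdef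
  have hM : 0 < M := Nat.ceil_pos.mpr (Real.exp_pos _)
  have hM' : (0 : ℝ) < M := by exact_mod_cast hM
  have hM2 : (M : ℝ) ≤ 2 * Real.exp (n * (c + ε + ε)) := by
    have h1 := Nat.ceil_lt_add_one (Real.exp_pos (n * (c + ε + ε))).le
    have h2 : 1 ≤ Real.exp (n * (c + ε + ε)) := Real.one_le_exp (by positivity)
    linarith
  have hsq : √(Real.exp (n * (c + ε)) / M) ≤ w / 16 := by
    refine Real.sqrt_le_iff.mpr ⟨by positivity, ?_⟩
    rw [div_le_iff₀ hM']
    have h1 : Real.exp (n * (c + ε)) * Real.exp (n * ε) ≤ M := by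
      rw [← Real.exp_add, ← mul_add]
      exact Nat.le_ceil _
    calc Real.exp (n * (c + ε))
        = (w / 16) ^ 2 * (Real.exp (n * (c + ε)) * (16 / w) ^ 2) := by field_simp
      _ ≤ (w / 16) ^ 2 * (Real.exp (n * (c + ε)) * Real.exp (n * ε)) := by gcongr
      _ ≤ (w / 16) ^ 2 * M := by gcongr
  have hkM := hcode.card_Z_le hW hY hZ hn hq0 hq hΦ hε hG hw0.le (by
      refine hw.trans (le_of_eq ?_)
      simp_rw [← Finset.mul_sum]
      rw [Finset.sum_comm (γ := Fin kZ)]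
      ring) hM (by linarith)
  have := rate_le_of_card_le_pow hn hZ (Nat.mul_pos Fintype.card_pos Fintype.card_pos) hr hw0
    hw1 hM2 hex1 hkM hnL
  linarith

lemma IsFBIDCode.fst_le {n kY kZ : ℕ}
    {Q : Fin kY → Fin kZ → (i : ℕ) → (Fin i → X) → (Fin i → Y) → X → ℝ}
    {DY : Fin kY → Finset (Fin n → Y)} {DZ : Fin kZ → Finset (Fin n → Z)}
    {l1Y l2Y l1Z l2Z : ℝ} (hcode : IsFBIDCode n kY kZ W Q DY DZ l1Y l2Y l1Z l2Z)
    (hW : IsBC W) (hY : 0 < kY) (hZ : 0 < kZ) (hn : 0 < n) {q : Y → ℝ} (hq0 : ∀ y, 0 < q y)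
    (hq : ∑ y, q y = 1) {Φ : X → ℝ} (hΦ : ∀ x, Φ x = ∑ y, ∑ z, W x y z * -Real.log (q y))
    {ε : ℝ} (hε : 0 < ε) {G : (Fin n → X) → Prop} {c : ℝ} (hc : 0 ≤ c)
    (hG : ∀ x, G x → ∑ i, Φ (x i) ≤ n * c) {w : ℝ} (hw0 : 0 < w) (hw1 : w ≤ 1)
    (hw : w ≤ (kY : ℝ)⁻¹ * ∑ my, (kZ : ℝ)⁻¹ * ∑ mz, ∑ x : Fin n → X, ∑ y : Fin n → Y,
      ∑ z : Fin n → Z, if G x then fbLaw n W (Q my mz) x y z else 0)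
    (hl : l1Y + l2Y + (∑ x, ∑ y, ∑ z, W x y z * (-Real.log (q y) - Φ x) ^ 2) / ε ^ 2 / n < w / 2)
    (hnE : Real.log (2 / w) + 1 ≤ Real.exp (n * ε))
    {r : ℝ} (hr : Real.exp (n * r) ≤ Real.log kY) : r ≤ c + 2 * ε := by
  obtain ⟨N, hN, hkN⟩ := hcode.card_Y_le hW hY hZ hn hq0 hq hΦ hε hG hw0.le hw hl
  have := rate_le_of_card_le_two_pow hn hY hr hw0 hw1 hN (by positivity) hkN hnE
  linarith

lemma FBAchievable.exists_input_le [Nonempty X] [Nonempty Y] [Nonempty Z] (hW : IsBC W)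
    {R : ℝ × ℝ} (hR : FBAchievable W R) {ε : ℝ} (hε : 0 < ε) :
    ∃ P : X → ℝ, IsPMF P ∧ R.1 ≤ entH (outDist P (margY W)) + 5 * ε ∧
      R.2 ≤ mutInfXY_Z P W + 5 * ε := by
  obtain ⟨hR1, hR2, hR⟩ := hR
  choose qY qZ hq using fun P : X → ℝ => exists_reference_outputs hW hε P
  set ΦY : (X → ℝ) → X → ℝ := fun P x => ∑ y, ∑ z, W x y z * -Real.log (qY P y) with hΦY
  set ΦZ : (X → ℝ) → X → ℝ := fun P x =>
    ∑ y, ∑ z, W x y z * Real.log (W x y z / margY W x y / qZ P z) with hΦZ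
  set CY : (X → ℝ) → ℝ := fun P =>
    (∑ x, ∑ y, ∑ z, W x y z * (-Real.log (qY P y) - ΦY P x) ^ 2) / ε ^ 2 with hCY
  set CZ : (X → ℝ) → ℝ := fun P => (∑ x, ∑ y, ∑ z, W x y z *
    (Real.log (W x y z / margY W x y / qZ P z) - ΦZ P x) ^ 2) / ε ^ 2 with hCZ
  set cY : (X → ℝ) → ℝ := fun P => entH (outDist P (margY W)) + 2 * ε with hcY
  set cZ : (X → ℝ) → ℝ := fun P => mutInfXY_Z P W + 2 * ε with hcZ
  set U : (X → ℝ) → Set (X → ℝ) := fun P =>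
    {P' | ∑ x, P' x * ΦY P x < cY P} ∩ {P' | ∑ x, P' x * ΦZ P x < cZ P} with hU
  have hUo : ∀ P, IsOpen (U P) := fun P =>
    (isOpen_lt (by fun_prop) continuous_const).inter (isOpen_lt (by fun_prop) continuous_const)
  obtain ⟨t, htS, hcov⟩ := (isCompact_stdSimplex ℝ X).elim_nhds_subcover U fun P hP =>
    (hUo P).mem_nhds ⟨(hq P hP).2.2.2.2.1.trans_lt (by simp only [hcY]; linarith),
      (hq P hP).2.2.2.2.2.trans_lt (by simp only [hcZ]; linarith)⟩
  have htne : t.Nonempty := by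
    obtain ⟨x⟩ := ‹Nonempty X›
    have := hcov (single_mem_stdSimplex ℝ x)
    simp only [Set.mem_iUnion] at this
    obtain ⟨P, hP, -⟩ := this
    exact ⟨P, hP⟩
  have ht1 : (1 : ℝ) ≤ t.card := by exact_mod_cast htne.card_pos
  set w : ℝ := (t.card : ℝ)⁻¹ with hw
  have hw0 : 0 < w := by positivity
  have hw1 : w ≤ 1 := inv_le_one_of_one_le₀ ht1
  have hw16 : 0 < w / 16 := by positivity
  have hlogw : 0 ≤ Real.log (2 / w) := Real.log_nonneg (by rw [le_div_iff₀ hw0]; linarith)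
  obtain ⟨n₀, hn₀⟩ := hR (w / 16) (w / 16) (w / 16) (w / 16) hw16 hw16 hw16 hw16
  obtain ⟨n, hnn₀, hn1, hnY, hnZ, hnS, hnE, hnL⟩ := ((Filter.eventually_ge_atTop n₀).and
    ((Filter.eventually_ge_atTop 1).and
    (((Finset.eventually_all t).mpr fun P _ => eventually_div_le (CY P) hw16).and
    (((Finset.eventually_all t).mpr fun P _ => eventually_div_le (CZ P) hw16).and
    ((eventually_add_mul_le_exp (a := (16 / w) ^ 2) (b := 0) hε (by positivity)).and
    ((eventually_add_mul_le_exp (a := Real.log (2 / w) + 1) (b := 0) hε (by linarith)).and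
    (eventually_add_mul_le_exp (a := Real.log (2 / w))
      (b := 2 * Real.log (Fintype.card X * Fintype.card Y : ℕ)) hε hlogw))))))).exists
  have hn : 0 < n := hn1
  have hn' : (0 : ℝ) < n := by exact_mod_cast hn
  obtain ⟨kY, kZ, Q, DY, DZ, hcode, ⟨hkY1, hkY2⟩, ⟨hkZ1, hkZ2⟩⟩ := hn₀ n hnn₀
  have hkY : 0 < kY := by
    rcases hR1.eq_or_lt with h | h
    · rw [hkY2 h.symm]; exact one_pos
    · have := (exp_le_log_of_le_log_log h (hkY1 h)).2.1
      omega
  have hkZ : 0 < kZ := by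
    rcases hR2.eq_or_lt with h | h
    · rw [hkZ2 h.symm]; exact one_pos
    · have := (exp_le_log_of_le_log_log h (hkZ1 h)).2.1
      omega
  obtain ⟨G, hG⟩ : ∃ G : (X → ℝ) → (Fin n → X) → Prop, ∀ P x, G P x ↔ empDist x ∈ U P :=
    ⟨_, fun _ _ => Iff.rfl⟩
  obtain ⟨P, hPt, hP⟩ := exists_mem_le_average hkY hkZ htne
    (w := fun P my mz => ∑ x : Fin n → X, ∑ y : Fin n → Y, ∑ z : Fin n → Z,
      if G P x then fbLaw n W (Q my mz) x y z else 0) (fun my mz =>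
      one_le_sum_sum_fbLaw hW (hcode.1 my mz) fun x => by
        have hx := hcov (empDist_mem_stdSimplex hn x)
        simp only [Set.mem_iUnion] at hx
        obtain ⟨P, hP, hxP⟩ := hx
        exact ⟨P, hP, (hG P x).mpr hxP⟩)
  have hPS : IsPMF P := htS P hPt
  obtain ⟨hqY0, hqY1, hqZ0, hqZ1, -, -⟩ := hq P hPS
  have hH := entH_nonneg (isPMF_outDist hPS (isChannel_margY hW))
  have hI := mutInfXY_Z_nonneg hW hPS
  refine ⟨P, hPS, ?_, ?_⟩
  · rcases hR1.eq_or_lt with h | h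
    · linarith
    obtain ⟨-, -, hexp⟩ := exp_le_log_of_le_log_log h (hkY1 h)
    have := hcode.fst_le hW hkY hkZ hn hqY0 hqY1 (Φ := ΦY P) (fun x => rfl) hε
      (G := G P) (c := cY P) (by simp only [hcY]; linarith) (fun x hx => by
        have : ∑ a, empDist x a * ΦY P a ≤ cY P := le_of_lt ((hG P x).mp hx).1
        rw [sum_empDist_mul, inv_mul_le_iff₀ hn'] at this
        exact this) hw0 hw1 hP (by
        have := hnY P hPt
        simp only [hCY] at this
        linarith) (by simpa using hnE) hexp
    simp only [hcY] at this
    linarith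
  · rcases hR2.eq_or_lt with h | h
    · linarith
    obtain ⟨-, -, hexp⟩ := exp_le_log_of_le_log_log h (hkZ1 h)
    have := hcode.snd_le hW hkY hkZ hn hqZ0 hqZ1 (Φ := ΦZ P) (fun x => rfl) hε
      (G := G P) (c := cZ P) (by simp only [hcZ]; linarith) (fun x hx => by
        have : ∑ a, empDist x a * ΦZ P a ≤ cZ P := le_of_lt ((hG P x).mp hx).2
        rw [sum_empDist_mul, inv_mul_le_iff₀ hn'] at this
        exact this) hw0 hw1 hP (by
        have := hnZ P hPt
        simp only [hCZ] at this
        linarith) (by simpa using hnS) hnL hexp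
    simp only [hcZ] at this
    linarith

lemma FBAchievable.fst_eq_zero (hW : IsBC W) {R : ℝ × ℝ} (hR : FBAchievable W R) {q : Y → ℝ}
    (hq : ∀ x y, margY W x y = q y) : R.1 = 0 := by
  obtain ⟨hR1, hR2, hR⟩ := hR
  by_contra hne
  have hpos : 0 < R.1 := lt_of_le_of_ne hR1 (Ne.symm hne)
  obtain ⟨n, hn⟩ := hR (1 / 3) (1 / 3) (1 / 3) (1 / 3) (by norm_num) (by norm_num) (by norm_num)
    (by norm_num)
  obtain ⟨kY, kZ, Q, DY, DZ, ⟨hQ, h1, h2, -, -⟩, ⟨hkY1, -⟩, ⟨hkZ1, hkZ2⟩⟩ := hn n le_rfl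
  have hk := (exp_le_log_of_le_log_log hpos (hkY1 hpos)).2.1
  have hkZ : 0 < kZ := by
    rcases hR2.eq_or_lt with h | h
    · rw [hkZ2 h.symm]; exact one_pos
    · have := (exp_le_log_of_le_log_log h (hkZ1 h)).2.1
      omega
  have hkZ' : (0 : ℝ) < kZ := by exact_mod_cast hkZ
  have key : ∀ my (S : Finset (Fin n → Y)), (kZ : ℝ)⁻¹ * ∑ mz, ∑ x : Fin n → X, ∑ y ∈ S,
      ∑ z : Fin n → Z, fbLaw n W (Q my mz) x y z = ∑ y ∈ S, ∏ i, q (y i) := by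
    intro my S
    have : ∀ mz, ∑ x : Fin n → X, ∑ y ∈ S, ∑ z : Fin n → Z, fbLaw n W (Q my mz) x y z
        = ∑ y ∈ S, ∏ i, q (y i) := by
      intro mz
      rw [Finset.sum_comm]
      exact Finset.sum_congr rfl fun y _ => sum_fbLaw_of_margY_const (hQ my mz) hq y
    simp_rw [this]
    simp [hkZ'.ne']
  set m0 : Fin kY := ⟨0, by omega⟩
  set m1 : Fin kY := ⟨1, by omega⟩
  have e1 := h1 m1
  have e2 := h2 m0 m1 (by simp [m0, m1])
  have e3 := key m0 Finset.univ
  rw [key] at e1 e2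
  have e4 := Finset.sum_add_sum_compl (DY m1) (fun y => ∏ i, q (y i))
  simp_rw [sum_fbLaw hW (hQ m0 _)] at e3
  simp [hkZ'.ne'] at e3
  linarith

lemma FBAchievable.snd_eq_zero (hW : IsBC W) {R : ℝ × ℝ} (hR : FBAchievable W R) {q : Z → ℝ}
    (hq : ∀ x z, margZ W x z = q z) : R.2 = 0 := by
  obtain ⟨hR1, hR2, hR⟩ := hR
  by_contra hne
  have hpos : 0 < R.2 := lt_of_le_of_ne hR2 (Ne.symm hne)
  obtain ⟨n, hn⟩ := hR (1 / 3) (1 / 3) (1 / 3) (1 / 3) (by norm_num) (by norm_num) (by norm_num)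
    (by norm_num)
  obtain ⟨kY, kZ, Q, DY, DZ, ⟨hQ, -, -, h1, h2⟩, ⟨hkY1, hkY2⟩, ⟨hkZ1, -⟩⟩ := hn n le_rfl
  have hk := (exp_le_log_of_le_log_log hpos (hkZ1 hpos)).2.1
  have hkY : 0 < kY := by
    rcases hR1.eq_or_lt with h | h
    · rw [hkY2 h.symm]; exact one_pos
    · have := (exp_le_log_of_le_log_log h (hkY1 h)).2.1
      omega
  have hkY' : (0 : ℝ) < kY := by exact_mod_cast hkY
  have key : ∀ mz (S : Finset (Fin n → Z)), (kY : ℝ)⁻¹ * ∑ my, ∑ x : Fin n → X, ∑ y : Fin n → Y,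
      ∑ z ∈ S, fbLaw n W (Q my mz) x y z = ∑ z ∈ S, ∏ i, q (z i) := by
    intro mz S
    have : ∀ my, ∑ x : Fin n → X, ∑ y : Fin n → Y, ∑ z ∈ S, fbLaw n W (Q my mz) x y z
        = ∑ z ∈ S, ∏ i, q (z i) := by
      intro my
      simp_rw [← sum_fbLaw_of_margZ_const (hQ my mz) hq]
      rw [Finset.sum_comm (s := S)]
      exact Finset.sum_congr rfl fun x _ => Finset.sum_comm
    simp_rw [this]
    simp [hkY'.ne']
  set m0 : Fin kZ := ⟨0, by omega⟩
  set m1 : Fin kZ := ⟨1, by omega⟩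
  have e1 := h1 m1
  have e2 := h2 m0 m1 (by simp [m0, m1])
  have e3 := key m0 Finset.univ
  rw [key] at e1 e2
  have e4 := Finset.sum_add_sum_compl (DZ m1) (fun z => ∏ i, q (z i))
  simp_rw [sum_fbLaw hW (hQ _ m0)] at e3
  simp [hkY'.ne'] at e3
  linarith

end Rates

section Closure

variable {X Y Z : Type} [Fintype X] [Fintype Y] [Fintype Z] {W : X → Y → Z → ℝ}

lemma exists_input_le_of_mem_closure [Nonempty X] [Nonempty Y] [Nonempty Z] (hW : IsBC W)
    {p : ℝ × ℝ} (hp : p ∈ closure {R : ℝ × ℝ | FBAchievable W R}) :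
    ∃ P : X → ℝ, IsPMF P ∧ p.1 ≤ entH (outDist P (margY W)) ∧ p.2 ≤ mutInfXY_Z P W := by
  obtain ⟨R, hR, hRp⟩ := mem_closure_iff_seq_limit.mp hp
  have hε : ∀ n : ℕ, (0 : ℝ) < 1 / (n + 1) := fun n => by positivity
  choose P hP hP1 hP2 using fun n => (hR n).exists_input_le hW (hε n)
  obtain ⟨P₀, hP₀, φ, hφ, hlim⟩ := (isCompact_stdSimplex ℝ X).tendsto_subseq hP
  have hφt := hφ.tendsto_atTop
  have h0 : Filter.Tendsto (fun k => 5 * (1 / ((φ k : ℝ) + 1))) Filter.atTop (nhds 0) := by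
    simpa using (tendsto_one_div_add_atTop_nhds_zero_nat (𝕜 := ℝ)).comp hφt |>.const_mul 5
  have hH := ((continuous_entH_outDist (margY W)).tendsto P₀).comp hlim
  have hI := (continuousOn_mutInfXY_Z hW P₀ hP₀).tendsto.comp
    (tendsto_nhdsWithin_iff.mpr ⟨hlim, Filter.Eventually.of_forall fun k => hP (φ k)⟩)
  have hRφ := hRp.comp hφt
  refine ⟨P₀, hP₀, ?_, ?_⟩
  · have := hH.add h0
    rw [add_zero] at this
    exact le_of_tendsto_of_tendsto' ((continuous_fst.tendsto p).comp hRφ) this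
      fun k => hP1 (φ k)
  · have := hI.add h0
    rw [add_zero] at this
    exact le_of_tendsto_of_tendsto' ((continuous_snd.tendsto p).comp hRφ) this
      fun k => hP2 (φ k)

end Closure

/-- **Theorem 12.** Outer bound on the ID capacity region of
the BC with one-sided feedback from Terminal Y. -/
theorem bc_fb_id_outer_bound
    {X Y Z : Type} [Fintype X] [Fintype Y] [Fintype Z]
    [Nonempty X] [Nonempty Y] [Nonempty Z]
    (W : X → Y → Z → ℝ) (hW : IsBC W) :
    closure {p : ℝ × ℝ | FBAchievable W p}
      ⊆ {p : ℝ × ℝ | 0 ≤ p.1 ∧ 0 ≤ p.2 ∧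
          ∃ P : X → ℝ, IsPMF P ∧
            p.1 ≤ (if ∃ P' : X → ℝ, IsPMF P' ∧ 0 < mutInf P' (margY W) then
                      entH (outDist P (margY W)) else 0) ∧
            p.2 ≤ (if ∃ P' : X → ℝ, IsPMF P' ∧ 0 < mutInf P' (margZ W) then
                      mutInfXY_Z P W else 0)} := by
  intro p hp
  have hcl : ∀ {s : Set (ℝ × ℝ)}, IsClosed s → (∀ R, FBAchievable W R → R ∈ s) → p ∈ s :=
    fun hs h => closure_minimal h hs hp
  refine ⟨hcl (isClosed_le continuous_const continuous_fst) fun R hR => hR.1,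
    hcl (isClosed_le continuous_const continuous_snd) fun R hR => hR.2.1, ?_⟩
  obtain ⟨P, hP, hP1, hP2⟩ := exists_input_le_of_mem_closure hW hp
  refine ⟨P, hP, ?_, ?_⟩
  · split_ifs with h
    · exact hP1
    · obtain ⟨q, hq⟩ := exists_const_of_mutInf_nonpos (isChannel_margY hW) h
      exact (hcl (isClosed_eq continuous_fst continuous_const)
        fun R hR => hR.fst_eq_zero hW hq).le
  · split_ifs with h
    · exact hP2
    · obtain ⟨q, hq⟩ := exists_const_of_mutInf_nonpos (isChannel_margZ hW) h
      exact (hcl (isClosed_eq continuous_snd continuous_const)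
        fun R hR => hR.snd_eq_zero hW hq).le
end
end
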